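/- Let Λ = ℤ³ regarded as a ring with componentwise multiplication. Then for every prime p, as an identity of formal power series in ℚ[[Y]]: (∑_{i≥0} a_{p^i}(ℤ³)·Y^i)·(1−Y)²(1−p²Y⁴)(1−p³Y⁶) = 1 + 4Y + 2Y² + (4p−3)Y³ + (5p−1)Y⁴ + (p²−5p)Y⁵ + (3p²−4p)Y⁶ − 2p²Y⁷ − 4p²Y⁸ − p²Y⁹. -/

import Mathlib

/-!
A subring inside `p • ℤ³` is `p • M` for a sublattice `M` with `p • (M * M) ≤ M`.  Such an `M`
generates a subring `B` in which it has index `p ^ k` with `k ≤ 3`, and conversely the `M`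
generating a given `B` are found in `B / p • B`: for `k = 0` only `B` itself, for `k = 1` the planes
that are not closed under multiplication, for `k = 2` the lines that generate, and for `k = 3`
exactly `p` lattices attached to each generating line.  The numbers of such planes and lines for
the subring `p • M` depend only on `k`, so the generating series of the subrings weighted by `1`, by
the number of nonclosed planes and by the number of generating lines satisfy a triangular linear
system whose inhomogeneous terms are the same series over the primitive subrings, those not
contained in `p • ℤ³`.

The primitive subrings are listed by their Hermite normal forms, where one diagonal entry is `1`;
what remains to count are the roots of `t² ≡ p ^ i t` modulo `p ^ j`, which satisfy a two-step
recursion under `t ↦ p t`.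
-/

/-- The number of subrings (additive subgroups closed under multiplication) of additive
index `n` in a not necessarily associative, commutative or unital ring `Λ`. -/
noncomputable def subringCount (Λ : Type*) [NonUnitalNonAssocRing Λ] (n : ℕ) : ℕ :=
  Nat.card {S : NonUnitalSubring Λ // S.toAddSubgroup.index = n}

namespace SubringZeta

universe u

open Submodule

section AdditiveIndex

variable {A : Type*} [AddCommGroup A] {L M N : Submodule ℤ A}

/-- The index `[A : M]` of a lattice, with value `0` when it is infinite. -/
noncomputable def addIndex (M : Submodule ℤ A) : ℕ := M.toAddSubgroup.index

/-- The relative index `[N : M ⊓ N]` of two lattices, with value `0` when it is infinite. -/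
noncomputable def addRelIndex (M N : Submodule ℤ A) : ℕ :=
  M.toAddSubgroup.relIndex N.toAddSubgroup

lemma addRelIndex_mul_addIndex (h : M ≤ N) : addRelIndex M N * addIndex N = addIndex M :=
  AddSubgroup.relIndex_mul_index (toAddSubgroup_mono h)

lemma addRelIndex_mul_addRelIndex (hLM : L ≤ M) (hMN : M ≤ N) :
    addRelIndex L M * addRelIndex M N = addRelIndex L N :=
  AddSubgroup.relIndex_mul_relIndex _ _ _ (toAddSubgroup_mono hLM) (toAddSubgroup_mono hMN)

lemma addRelIndex_sup_right (M N : Submodule ℤ A) : addRelIndex N (M ⊔ N) = addRelIndex N M := by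
  rw [addRelIndex, sup_toAddSubgroup]
  exact AddSubgroup.relIndex_sup_right _ _

lemma addRelIndex_inf_left (M N : Submodule ℤ A) : addRelIndex (M ⊓ N) N = addRelIndex M N :=
  AddSubgroup.inf_relIndex_right M.toAddSubgroup N.toAddSubgroup

lemma addRelIndex_eq_one : addRelIndex M N = 1 ↔ N ≤ M :=
  AddSubgroup.relIndex_eq_one

lemma addRelIndex_top (M : Submodule ℤ A) : addRelIndex M ⊤ = addIndex M :=
  AddSubgroup.relIndex_top_right _

lemma smul_mem_of_addRelIndex {x : A} (hx : x ∈ N) : (addRelIndex M N : ℤ) • x ∈ M := by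
  rw [natCast_zsmul]
  exact AddSubgroup.nsmul_index_mem (M.toAddSubgroup.addSubgroupOf N.toAddSubgroup) ⟨x, hx⟩

lemma eq_or_eq_of_addRelIndex_prime {p : ℕ} [Fact p.Prime] (h : addRelIndex L N = p)
    (hLM : L ≤ M) (hMN : M ≤ N) : M = L ∨ M = N := by
  have hmul := (addRelIndex_mul_addRelIndex hLM hMN).trans h
  rcases (Nat.dvd_prime Fact.out).1 (Dvd.intro _ hmul) with h1 | hp
  · exact .inl (le_antisymm (addRelIndex_eq_one.1 h1) hLM)
  · rw [hp] at hmul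
    exact .inr (le_antisymm hMN (addRelIndex_eq_one.1 (Nat.eq_of_mul_eq_mul_left (NeZero.pos p)
      (hmul.trans (mul_one p).symm))))

lemma eq_of_addRelIndex_eq (hLM : L ≤ M) (hMN : M ≤ N) (h0 : addRelIndex M N ≠ 0)
    (h : addRelIndex L N = addRelIndex M N) : L = M := by
  have hmul := addRelIndex_mul_addRelIndex hLM hMN
  exact le_antisymm hLM (addRelIndex_eq_one.1
    (Nat.eq_of_mul_eq_mul_right (Nat.pos_of_ne_zero h0) (by rw [hmul, h, one_mul])))

lemma addRelIndex_sup_span_singleton_dvd {n : ℕ} {x : A} (h : (n : ℤ) • x ∈ M) :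
    addRelIndex M (M ⊔ span ℤ {x}) ∣ n := by
  have hspan : (span ℤ {x}).toAddSubgroup = AddSubgroup.zmultiples x := by
    ext y
    rw [mem_toAddSubgroup, mem_span_singleton, AddSubgroup.mem_zmultiples_iff]
  rw [sup_comm, addRelIndex_sup_right, addRelIndex, hspan, AddSubgroup.relIndex,
    AddSubgroup.index]
  have : IsAddCyclic (AddSubgroup.zmultiples x ⧸
      M.toAddSubgroup.addSubgroupOf (AddSubgroup.zmultiples x)) :=
    isAddCyclic_of_surjective (QuotientAddGroup.mk' _) (QuotientAddGroup.mk'_surjective _)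
  rw [← IsAddCyclic.exponent_eq_card]
  refine AddMonoid.exponent_dvd_of_forall_nsmul_eq_zero fun q => ?_
  obtain ⟨⟨y, hy⟩, rfl⟩ := QuotientAddGroup.mk_surjective q
  rw [← QuotientAddGroup.mk_nsmul, QuotientAddGroup.eq_zero_iff, AddSubgroup.mem_addSubgroupOf]
  obtain ⟨k, rfl⟩ := AddSubgroup.mem_zmultiples_iff.1 hy
  have hk := M.smul_mem k h
  rwa [smul_comm, natCast_zsmul] at hk

lemma addRelIndex_sup_span_singleton {p : ℕ} [Fact p.Prime] {x : A} (h : (p : ℤ) • x ∈ M) :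
    addRelIndex M (M ⊔ span ℤ {x}) = 1 ∨ addRelIndex M (M ⊔ span ℤ {x}) = p :=
  (Nat.dvd_prime Fact.out).1 (addRelIndex_sup_span_singleton_dvd h)

lemma finite_setOf_ge (h : addIndex M ≠ 0) : {N : Submodule ℤ A | M ≤ N}.Finite := by
  have : Finite (A ⧸ M) := Nat.finite_of_card_ne_zero h
  have : Finite (Set.Ici M) := .of_equiv _ (comapMkQRelIso M).toEquiv
  exact Set.toFinite (Set.Ici M)

end AdditiveIndex

section Complements

variable {K V : Type*} [Field K] [AddCommGroup V] [Module K V]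

/-- Projections onto `U` are parametrised by linear maps from a fixed complement `Q` to `U`. -/
noncomputable def projectionEquivOfIsCompl {U Q : Submodule K V} (h : IsCompl U Q) :
    {f : V →ₗ[K] U // ∀ x : U, f x = x} ≃ (Q →ₗ[K] U) where
  toFun f := f.1.comp Q.subtype
  invFun g := ⟨LinearMap.ofIsCompl h LinearMap.id g, by simp⟩
  left_inv f := Subtype.ext (LinearMap.ofIsCompl_eq h (by simp [f.2]) (by simp))
  right_inv g := by ext x; simp

lemma card_isCompl [Finite K] [Module.Finite K V] (U : Submodule K V) :
    Nat.card {W : Submodule K V // IsCompl U W} =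
      Nat.card K ^ (Module.finrank K U * Module.finrank K (V ⧸ U)) := by
  obtain ⟨Q, hQ⟩ := U.exists_isCompl
  have : Finite U := Module.finite_of_finite K
  rw [Nat.card_congr (U.isComplEquivProj.trans (projectionEquivOfIsCompl hQ)),
    Module.natCard_eq_pow_finrank (K := K), Module.finrank_linearMap, mul_comm,
    (U.quotientEquivOfIsCompl Q hQ).finrank_eq]

end Complements

section ComapLattice

variable {A V : Type*} [AddCommGroup A] [AddCommGroup V] {p : ℕ} [Module (ZMod p) V]
  {S : Submodule ℤ A} {f : S →ₗ[ℤ] V} {U U' : Submodule (ZMod p) V}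

/-- The preimage of a subspace `U` under a reduction map `f : S → V`, as a sublattice of `S`. -/
def comapLattice (f : S →ₗ[ℤ] V) (U : Submodule (ZMod p) V) : Submodule ℤ A :=
  (AddSubgroup.toIntSubmodule (U.toAddSubgroup.comap f.toAddMonoidHom)).map S.subtype

lemma mem_comapLattice {x : A} : x ∈ comapLattice f U ↔ ∃ h : x ∈ S, f ⟨x, h⟩ ∈ U := by
  rw [comapLattice, mem_map]
  exact ⟨fun ⟨y, hy, h⟩ => h ▸ ⟨y.2, hy⟩, fun ⟨h, h'⟩ => ⟨⟨x, h⟩, h', rfl⟩⟩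

lemma comapLattice_le (f : S →ₗ[ℤ] V) (U : Submodule (ZMod p) V) : comapLattice f U ≤ S :=
  fun _ hx => (mem_comapLattice.1 hx).1

lemma comapLattice_top : comapLattice f (⊤ : Submodule (ZMod p) V) = S :=
  le_antisymm (comapLattice_le f _) fun _ hx => mem_comapLattice.2 ⟨hx, mem_top⟩

lemma comapLattice_inf : comapLattice f (U ⊓ U') = comapLattice f U ⊓ comapLattice f U' := by
  ext x
  simp only [mem_comapLattice, mem_inf]
  exact ⟨fun ⟨h, h1, h2⟩ => ⟨⟨h, h1⟩, h, h2⟩, fun ⟨⟨h, h1⟩, _, h2⟩ => ⟨h, h1, h2⟩⟩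

lemma comapLattice_le_comapLattice (hf : Function.Surjective f) :
    comapLattice f U ≤ comapLattice f U' ↔ U ≤ U' := by
  refine ⟨fun h v hv => ?_, fun h x hx => ?_⟩
  · obtain ⟨⟨x, hx⟩, rfl⟩ := hf v
    exact (mem_comapLattice.1 (h (mem_comapLattice.2 ⟨hx, hv⟩))).2
  · obtain ⟨hS, hU⟩ := mem_comapLattice.1 hx
    exact mem_comapLattice.2 ⟨hS, h hU⟩

lemma comapLattice_injective (hf : Function.Surjective f) :
    Function.Injective (comapLattice f : Submodule (ZMod p) V → Submodule ℤ A) :=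
  fun _ _ h => le_antisymm ((comapLattice_le_comapLattice hf).1 h.le)
    ((comapLattice_le_comapLattice hf).1 h.ge)

lemma exists_comapLattice_eq {W : Submodule ℤ A}
    (hW : comapLattice f (⊥ : Submodule (ZMod p) V) ≤ W) (hWS : W ≤ S) :
    ∃ U : Submodule (ZMod p) V, comapLattice f U = W := by
  refine ⟨AddSubgroup.toZModSubmodule p ((W.submoduleOf S).map f).toAddSubgroup, ?_⟩
  ext x
  rw [mem_comapLattice]
  refine ⟨fun ⟨hx, ⟨y, hyS⟩, (hyW : y ∈ W), (hxy : f ⟨y, hyS⟩ = f ⟨x, hx⟩)⟩ => ?_,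
    fun hx => ⟨hWS hx, ⟨x, hWS hx⟩, hx, rfl⟩⟩
  have hsub : x - y ∈ W := by
    refine hW (mem_comapLattice.2 ⟨S.sub_mem hx hyS, ?_⟩)
    have : f ⟨x - y, S.sub_mem hx hyS⟩ = f ⟨x, hx⟩ - f ⟨y, hyS⟩ := map_sub f ⟨x, hx⟩ ⟨y, hyS⟩
    rw [this, hxy, sub_self]
    exact zero_mem _
  exact (sub_mem_iff_left W hyW).1 hsub

lemma addRelIndex_comapLattice (hf : Function.Surjective f) :
    addRelIndex (comapLattice f U) S = U.toAddSubgroup.index := by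
  rw [← AddSubgroup.index_comap_of_surjective (f := f.toAddMonoidHom) U.toAddSubgroup hf,
    addRelIndex, AddSubgroup.relIndex]
  congr 1
  ext ⟨x, hx⟩
  exact mem_comapLattice.trans ⟨fun h => h.2, fun h => ⟨hx, h⟩⟩

lemma comapLattice_sup (hf : Function.Surjective f) :
    comapLattice f (U ⊔ U') = comapLattice f U ⊔ comapLattice f U' := by
  refine le_antisymm ?_ (sup_le ((comapLattice_le_comapLattice hf).2 le_sup_left)
    ((comapLattice_le_comapLattice hf).2 le_sup_right))
  obtain ⟨Q, hQ⟩ : ∃ Q, comapLattice f Q = comapLattice f U ⊔ comapLattice f U' :=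
    exists_comapLattice_eq (p := p)
      (((comapLattice_le_comapLattice hf).2 bot_le).trans le_sup_left)
      (sup_le (comapLattice_le f U) (comapLattice_le f U'))
  rw [← hQ, comapLattice_le_comapLattice hf]
  exact sup_le ((comapLattice_le_comapLattice hf).1 (hQ ▸ le_sup_left))
    ((comapLattice_le_comapLattice hf).1 (hQ ▸ le_sup_right))

lemma exists_comapLattice_bot_eq {A : Type u} [AddCommGroup A] {B C : Submodule ℤ A} {p : ℕ}
    (hBC : B ≤ C) (hC : ∀ x ∈ C, (p : ℤ) • x ∈ B) :
    ∃ (V : Type u) (_ : AddCommGroup V) (_ : Module (ZMod p) V) (f : C →ₗ[ℤ] V),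
      Function.Surjective f ∧ comapLattice f (⊥ : Submodule (ZMod p) V) = B := by
  have hzero : ∀ q : C ⧸ B.submoduleOf C, p • q = 0 := fun q => by
    obtain ⟨x, rfl⟩ := mkQ_surjective _ q
    rw [← natCast_zsmul, ← map_smul]
    exact (Quotient.mk_eq_zero _).2 (hC x x.2)
  let _ : Module (ZMod p) (C ⧸ B.submoduleOf C) := AddCommGroup.zmodModule hzero
  refine ⟨C ⧸ B.submoduleOf C, inferInstance, inferInstance, (B.submoduleOf C).mkQ,
    mkQ_surjective _, ?_⟩
  ext x
  exact mem_comapLattice.trans ⟨fun ⟨_, h⟩ => (Quotient.mk_eq_zero (B.submoduleOf C)).1 h,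
    fun h => ⟨hBC h, (Quotient.mk_eq_zero (B.submoduleOf C)).2 h⟩⟩

lemma index_toAddSubgroup [Fact p.Prime] [Module.Finite (ZMod p) V]
    (U : Submodule (ZMod p) V) :
    U.toAddSubgroup.index = p ^ Module.finrank (ZMod p) (V ⧸ U) := by
  have h := Module.natCard_eq_pow_finrank (K := ZMod p) (V := V ⧸ U)
  rwa [Nat.card_zmod] at h

lemma finrank_eq_of_card [Fact p.Prime] [Module.Finite (ZMod p) V] {n : ℕ}
    (h : Nat.card V = p ^ n) : Module.finrank (ZMod p) V = n := by
  have hV := Module.natCard_eq_pow_finrank (K := ZMod p) (V := V)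
  rw [Nat.card_zmod, h] at hV
  exact (Nat.pow_right_injective (Fact.out : p.Prime).two_le hV).symm

end ComapLattice

section LatticeComplements

variable {A : Type*} [AddCommGroup A] {p : ℕ} {B C D : Submodule ℤ A} {i j : ℕ}

/-- The sublattices `W` of `C` complementary to `D` modulo `B`, for `B ≤ D ≤ C`. -/
def complementsBetween (B D C : Submodule ℤ A) : Set (Submodule ℤ A) :=
  {W | W ⊓ D = B ∧ W ⊔ D = C}

variable {V : Type*} [AddCommGroup V] [Module (ZMod p) V]

lemma card_isCompl_eq_ncard_complementsBetween {f : C →ₗ[ℤ] V} (hf : Function.Surjective f)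
    (U : Submodule (ZMod p) V) :
    Nat.card {W : Submodule (ZMod p) V // IsCompl U W} =
      (complementsBetween (comapLattice f (⊥ : Submodule (ZMod p) V))
        (comapLattice f U) C).ncard := by
  rw [← Nat.card_coe_set_eq]
  refine Nat.card_congr (Equiv.ofBijective (fun W => ⟨comapLattice f W.1, ?_, ?_⟩) ⟨?_, ?_⟩)
  · rw [← comapLattice_inf, inf_comm, W.2.inf_eq_bot]
  · rw [← comapLattice_sup hf, sup_comm, W.2.sup_eq_top, comapLattice_top]
  · exact fun W W' h => Subtype.ext (comapLattice_injective hf (Subtype.ext_iff.1 h))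
  · rintro ⟨W, hinf, hsup⟩
    obtain ⟨W, rfl⟩ := exists_comapLattice_eq (hinf ▸ inf_le_left) (hsup ▸ le_sup_left)
    refine ⟨⟨W, disjoint_iff.2 (comapLattice_injective hf ?_),
      codisjoint_iff.2 (comapLattice_injective hf ?_)⟩, rfl⟩
    · rw [comapLattice_inf, inf_comm, hinf]
    · rw [comapLattice_sup hf, comapLattice_top, sup_comm, hsup]

lemma ncard_complementsBetween_of_reduction [Fact p.Prime] {f : C →ₗ[ℤ] V}
    (hf : Function.Surjective f) (hB : comapLattice f (⊥ : Submodule (ZMod p) V) = B)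
    (hBD : B ≤ D) (hDC : D ≤ C) (hi : addRelIndex B D = p ^ i) (hj : addRelIndex D C = p ^ j) :
    (complementsBetween B D C).ncard = p ^ (i * j) := by
  have hp : p.Prime := Fact.out
  have hcard : Nat.card V = p ^ (i + j) := by
    rw [pow_add, ← hi, ← hj, addRelIndex_mul_addRelIndex hBD hDC, ← hB,
      addRelIndex_comapLattice hf]
    exact Nat.card_congr QuotientAddGroup.quotientBot.symm.toEquiv
  have : Finite V := Nat.finite_of_card_ne_zero (hcard ▸ pow_ne_zero _ hp.ne_zero)
  have : Module.Finite (ZMod p) V := .of_finite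
  obtain ⟨U, rfl⟩ := exists_comapLattice_eq (hB.trans_le hBD) hDC
  have hquot : Module.finrank (ZMod p) (V ⧸ U) = j := by
    rw [addRelIndex_comapLattice hf, index_toAddSubgroup] at hj
    exact Nat.pow_right_injective hp.two_le hj
  have hsub : Module.finrank (ZMod p) U = i := by
    have := finrank_quotient_add_finrank U
    rw [hquot, finrank_eq_of_card hcard] at this
    omega
  rw [← hB, ← card_isCompl_eq_ncard_complementsBetween hf, card_isCompl, Nat.card_zmod, hquot,
    hsub]

lemma ncard_complementsBetween [Fact p.Prime] (hBD : B ≤ D) (hDC : D ≤ C)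
    (hC : ∀ x ∈ C, (p : ℤ) • x ∈ B) (hi : addRelIndex B D = p ^ i)
    (hj : addRelIndex D C = p ^ j) :
    (complementsBetween B D C).ncard = p ^ (i * j) := by
  obtain ⟨_, _, _, f, hf, hB⟩ := exists_comapLattice_bot_eq (hBD.trans hDC) hC
  exact ncard_complementsBetween_of_reduction hf hB hBD hDC hi hj

lemma mem_complementsBetween_comm {W : Submodule ℤ A} :
    W ∈ complementsBetween B D C ↔ D ∈ complementsBetween B W C := by
  rw [complementsBetween, Set.mem_ofPred_eq, inf_comm, sup_comm]
  exact Iff.rfl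

lemma addRelIndex_of_mem_complementsBetween {W : Submodule ℤ A}
    (h : W ∈ complementsBetween B D C) : addRelIndex W C = addRelIndex B D := by
  rw [← h.1, ← h.2, addRelIndex_inf_left, sup_comm, addRelIndex_sup_right]

lemma mem_complementsBetween_of_not_le [Fact p.Prime] {W : Submodule ℤ A} (hBW : B ≤ W)
    (hWC : W ≤ C) (hBD : B ≤ D) (hDC : D ≤ C) (hB : addRelIndex B D = p)
    (hC : addRelIndex W C = p) (h : ¬ D ≤ W) : W ∈ complementsBetween B D C :=
  ⟨(eq_or_eq_of_addRelIndex_prime hB (le_inf hBW hBD) inf_le_right).resolve_right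
      fun h' => h (inf_eq_right.1 h'),
    (eq_or_eq_of_addRelIndex_prime hC le_sup_left (sup_le hWC hDC)).resolve_left
      fun h' => h (sup_eq_left.1 h')⟩

end LatticeComplements

section Scalars

variable {R : Type*} [CommRing R] {n p : ℕ} {M N : Submodule ℤ R}

/-- The lattice `ℤ · n`, so that `scalar n * M` is the lattice `nM`. -/
def scalar (n : ℕ) : Submodule ℤ R := span ℤ {(n : R)}

lemma mem_scalar_mul {x : R} : x ∈ scalar n * M ↔ ∃ m ∈ M, (n : ℤ) • m = x := by
  simp only [scalar, mem_span_singleton_mul, zsmul_eq_mul, Int.cast_natCast]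

lemma scalar_mul_le_iff : scalar n * M ≤ N ↔ ∀ x ∈ M, (n : ℤ) • x ∈ N :=
  ⟨fun h x hx => h (mem_scalar_mul.2 ⟨x, hx, rfl⟩), fun h y hy => by
    obtain ⟨x, hx, rfl⟩ := mem_scalar_mul.1 hy
    exact h x hx⟩

lemma scalar_mul_le_self (n : ℕ) (M : Submodule ℤ R) : scalar n * M ≤ M :=
  scalar_mul_le_iff.2 fun _ hx => M.smul_mem _ hx

lemma scalar_pow (n k : ℕ) : (scalar n : Submodule ℤ R) ^ k = scalar (n ^ k) := by
  rw [scalar, scalar, span_pow, Set.singleton_pow, Nat.cast_pow]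

lemma scalar_addRelIndex_mul_le (M N : Submodule ℤ R) : scalar (addRelIndex M N) * N ≤ M :=
  scalar_mul_le_iff.2 fun _ hx => smul_mem_of_addRelIndex hx

lemma scalar_mul_eq_map (n : ℕ) (M : Submodule ℤ R) :
    scalar n * M = M.map (LinearMap.lsmul ℤ R (n : ℤ)) := by
  ext x
  exact mem_scalar_mul

lemma exists_eq_scalar_mul (h : M ≤ scalar n * ⊤) : ∃ N, M = scalar n * N := by
  refine ⟨M.comap (LinearMap.lsmul ℤ R (n : ℤ)), ?_⟩
  rw [scalar_mul_eq_map, Submodule.map_top] at h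
  rw [scalar_mul_eq_map, map_comap_eq, inf_eq_right.2 h]

section TorsionFree

variable [Module.IsTorsionFree ℤ R] [NeZero n]

lemma lsmul_natCast_injective : Function.Injective (LinearMap.lsmul ℤ R (n : ℤ)) :=
  smul_right_injective R (Nat.cast_ne_zero.2 (NeZero.ne n))

lemma scalar_mul_le_scalar_mul : scalar n * M ≤ scalar n * N ↔ M ≤ N := by
  rw [scalar_mul_eq_map, scalar_mul_eq_map]
  exact map_le_map_iff_of_injective lsmul_natCast_injective _ _

lemma scalar_mul_injective : Function.Injective (scalar n * · : Submodule ℤ R → Submodule ℤ R) :=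
  fun _ _ h => le_antisymm (scalar_mul_le_scalar_mul.1 h.le) (scalar_mul_le_scalar_mul.1 h.ge)

lemma addRelIndex_scalar_mul_scalar_mul (M N : Submodule ℤ R) :
    addRelIndex (scalar n * M) (scalar n * N) = addRelIndex M N := by
  rw [scalar_mul_eq_map, scalar_mul_eq_map]
  exact AddSubgroup.relIndex_map_map_of_injective
    (f := (LinearMap.lsmul ℤ R (n : ℤ)).toAddMonoidHom) M.toAddSubgroup N.toAddSubgroup
    lsmul_natCast_injective

end TorsionFree

section FiniteFree

variable [Module.Free ℤ R] [Module.Finite ℤ R]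

lemma addIndex_scalar_mul_top (n : ℕ) :
    addIndex (scalar n * ⊤ : Submodule ℤ R) = n ^ Module.finrank ℤ R := by
  rw [← AddSubgroup.index_range_nsmul, addIndex]
  congr 1
  ext x
  simp only [mem_toAddSubgroup, mem_scalar_mul, mem_top, true_and, AddMonoidHom.mem_range,
    nsmulAddMonoidHom_apply, natCast_zsmul]

lemma addIndex_scalar_mul [NeZero n] (M : Submodule ℤ R) :
    addIndex (scalar n * M) = n ^ Module.finrank ℤ R * addIndex M := by
  rw [← addRelIndex_mul_addIndex (scalar_mul_le_scalar_mul.2 (le_top : M ≤ ⊤)),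
    addRelIndex_scalar_mul_scalar_mul, addIndex_scalar_mul_top, addRelIndex_top, mul_comm]

lemma addRelIndex_scalar_mul_self [NeZero n] (hM : addIndex M ≠ 0) :
    addRelIndex (scalar n * M) M = n ^ Module.finrank ℤ R :=
  Nat.eq_of_mul_eq_mul_right (Nat.pos_of_ne_zero hM) <| by
    rw [addRelIndex_mul_addIndex (scalar_mul_le_self n M), addIndex_scalar_mul]

lemma finite_setOf_addIndex_eq (hn : n ≠ 0) : {M : Submodule ℤ R | addIndex M = n}.Finite := by
  refine (finite_setOf_ge (M := scalar n * ⊤) ?_).subset fun M (hM : addIndex M = n) => ?_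
  · rw [addIndex_scalar_mul_top]
    exact pow_ne_zero _ hn
  · exact hM ▸ addRelIndex_top M ▸ scalar_addRelIndex_mul_le M ⊤

end FiniteFree

end Scalars

section PLattices

variable {R : Type*} [CommRing R] {p n : ℕ} {L M N : Submodule ℤ R}

/-- `M` contains `p ^ k R` for some `k`; for prime `p` and `R` free of finite rank this says that
the index of `M` is a power of `p`. -/
def IsPLattice (p : ℕ) (M : Submodule ℤ R) : Prop := ∃ k, scalar p ^ k * ⊤ ≤ M

lemma isPLattice_top (p : ℕ) : IsPLattice p (⊤ : Submodule ℤ R) := ⟨0, le_top⟩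

lemma IsPLattice.mono (hM : IsPLattice p M) (h : M ≤ N) : IsPLattice p N :=
  hM.imp fun _ hk => hk.trans h

lemma IsPLattice.scalar_mul (hM : IsPLattice p M) : IsPLattice p (scalar p * M) := by
  obtain ⟨k, hk⟩ := hM
  refine ⟨k + 1, ?_⟩
  rw [pow_succ', mul_assoc]
  exact mul_le_mul' le_rfl hk

lemma IsPLattice.of_addRelIndex (hN : IsPLattice p N) (h : addRelIndex M N = p ^ n) :
    IsPLattice p M := by
  obtain ⟨k, hk⟩ := hN
  refine ⟨n + k, ?_⟩
  rw [pow_add, mul_assoc, scalar_pow p n, ← h]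
  exact (mul_le_mul' le_rfl hk).trans (scalar_addRelIndex_mul_le M N)

lemma IsPLattice.of_addIndex (h : addIndex M = p ^ n) : IsPLattice p M :=
  (isPLattice_top p).of_addRelIndex ((addRelIndex_top M).trans h)

lemma IsPLattice.le_of_le_sup_scalar_mul (hM : IsPLattice p M) (h : N ≤ M ⊔ scalar p * N) :
    N ≤ M := by
  have hpow : ∀ k, N ≤ M ⊔ scalar p ^ k * N := fun k => by
    induction k with
    | zero => simp only [pow_zero, one_mul, le_sup_right]
    | succ k ih =>
      refine ih.trans (sup_le le_sup_left ?_)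
      calc scalar p ^ k * N ≤ scalar p ^ k * (M ⊔ scalar p * N) := mul_le_mul' le_rfl h
        _ = scalar p ^ k * M ⊔ scalar p ^ (k + 1) * N := by
          rw [Submodule.mul_sup, pow_succ, mul_assoc]
        _ ≤ M ⊔ scalar p ^ (k + 1) * N :=
          sup_le_sup_right (scalar_pow (R := R) p k ▸ scalar_mul_le_self _ M) _
  obtain ⟨k, hk⟩ := hM
  exact (hpow k).trans (sup_le le_rfl ((mul_le_mul' le_rfl le_top).trans hk))

variable [Fact p.Prime] [Module.Free ℤ R] [Module.Finite ℤ R]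

lemma IsPLattice.exists_addIndex_eq (hM : IsPLattice p M) : ∃ n, addIndex M = p ^ n := by
  obtain ⟨k, hk⟩ := hM
  have h := addRelIndex_mul_addIndex hk
  rw [scalar_pow, addIndex_scalar_mul_top, ← pow_mul] at h
  exact ((Nat.dvd_prime_pow Fact.out).1 (Dvd.intro_left _ h)).imp fun _ hn => hn.2

lemma IsPLattice.addIndex_ne_zero (hM : IsPLattice p M) : addIndex M ≠ 0 := by
  obtain ⟨n, hn⟩ := hM.exists_addIndex_eq
  exact hn ▸ pow_ne_zero _ (NeZero.ne p)

lemma IsPLattice.exists_addRelIndex_eq (hM : IsPLattice p M) (h : M ≤ N) :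
    ∃ n, addRelIndex M N = p ^ n := by
  obtain ⟨k, hk⟩ := hM.exists_addIndex_eq
  exact ((Nat.dvd_prime_pow Fact.out).1
    (Dvd.intro _ ((addRelIndex_mul_addIndex h).trans hk))).imp fun _ hn => hn.2

lemma IsPLattice.addRelIndex_ne_zero (hM : IsPLattice p M) (h : M ≤ N) :
    addRelIndex M N ≠ 0 := by
  obtain ⟨n, hn⟩ := hM.exists_addRelIndex_eq h
  exact hn ▸ pow_ne_zero _ (NeZero.ne p)

lemma IsPLattice.eq_of_addRelIndex_eq (hM : IsPLattice p M) (hMN : M ≤ N) (hNL : N ≤ L)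
    (h : addRelIndex M L = addRelIndex N L) : M = N :=
  SubringZeta.eq_of_addRelIndex_eq hMN hNL ((hM.mono hMN).addRelIndex_ne_zero hNL) h

lemma IsPLattice.addRelIndex_scalar_mul_self (hM : IsPLattice p M) :
    addRelIndex (scalar p * M) M = p ^ Module.finrank ℤ R :=
  SubringZeta.addRelIndex_scalar_mul_self hM.addIndex_ne_zero

lemma IsPLattice.finite_setOf_addRelIndex_eq (hN : IsPLattice p N) (k : ℕ) :
    {M : Submodule ℤ R | M ≤ N ∧ addRelIndex M N = p ^ k}.Finite := by
  obtain ⟨n, hn⟩ := hN.exists_addIndex_eq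
  refine (finite_setOf_addIndex_eq (n := p ^ k * p ^ n)
    (mul_ne_zero (pow_ne_zero _ (NeZero.ne p)) (pow_ne_zero _ (NeZero.ne p)))).subset ?_
  rintro M ⟨hMN, hk⟩
  exact (hk ▸ hn ▸ addRelIndex_mul_addIndex hMN).symm

end PLattices

section MulClosed

variable {R : Type*} [CommRing R] {p : ℕ} {M N V W B C : Submodule ℤ R}

/-- The lattice `M` is closed under multiplication, i.e. it is a subring. -/
def IsMulClosed (M : Submodule ℤ R) : Prop := M * M ≤ M

/-- The condition on `M` for `nM` to be a subring, see `isMulClosed_scalar_mul`. -/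
def IsScaledMulClosed (n : ℕ) (M : Submodule ℤ R) : Prop := scalar n * (M * M) ≤ M

/-- Every subring containing `M` contains `B`. -/
def Generates (M B : Submodule ℤ R) : Prop := ∀ C, IsMulClosed C → M ≤ C → B ≤ C

lemma isMulClosed_scalar_mul {n : ℕ} [Module.IsTorsionFree ℤ R] [NeZero n] :
    IsMulClosed (scalar n * M) ↔ IsScaledMulClosed n M := by
  rw [IsMulClosed, mul_assoc, mul_left_comm M, scalar_mul_le_scalar_mul, IsScaledMulClosed]

lemma IsMulClosed.mul_le (hB : IsMulClosed B) (hM : M ≤ B) (hN : N ≤ B) : M * N ≤ B :=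
  (mul_le_mul' hM hN).trans hB

lemma IsMulClosed.mul_le_mul_sup_scalar_mul (hB : IsMulClosed B) (hM : M ≤ B) (hN : N ≤ B)
    (hV : V ≤ M ⊔ scalar p * B) (hW : W ≤ N ⊔ scalar p * B) : V * W ≤ M * N ⊔ scalar p * B := by
  have hle : scalar p * B ≤ B := scalar_mul_le_self p B
  calc V * W ≤ (M ⊔ scalar p * B) * (N ⊔ scalar p * B) := mul_le_mul' hV hW
    _ = M * N ⊔ scalar p * (B * N) ⊔ scalar p * ((M ⊔ scalar p * B) * B) := by
      rw [Submodule.mul_sup, Submodule.sup_mul, mul_assoc, mul_left_comm (M ⊔ scalar p * B)]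
    _ ≤ M * N ⊔ scalar p * B := sup_le (sup_le le_sup_left
        ((mul_le_mul' le_rfl (hB.mul_le le_rfl hN)).trans le_sup_right))
        ((mul_le_mul' le_rfl (hB.mul_le (sup_le hM hle) le_rfl)).trans le_sup_right)

lemma Generates.mono (hg : Generates M B) (h : M ≤ N) : Generates N B :=
  fun C hC hN => hg C hC (h.trans hN)

lemma Generates.not_isMulClosed (hg : Generates M B) (h : addRelIndex M B ≠ 1) :
    ¬ IsMulClosed M :=
  fun hM => h (addRelIndex_eq_one.2 (hg M hM le_rfl))

end MulClosed

section Counts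

variable {R : Type*} [CommRing R] {p : ℕ}

/-- A sublattice `V` of `B` that corresponds to a subspace of `B / pB` of codimension two and
generates `B` as a ring. When `B` has rank three this subspace is a line. -/
structure IsGeneratingLine (p : ℕ) (B V : Submodule ℤ R) : Prop where
  scalar_mul_le : scalar p * B ≤ V
  le : V ≤ B
  addRelIndex_eq : addRelIndex V B = p ^ 2
  generates : Generates V B

/-- The number of sublattices of `B` of index `p` that are not subrings. -/
noncomputable def nonclosedCount (p : ℕ) (B : Submodule ℤ R) : ℕ :=
  {W : Submodule ℤ R | W ≤ B ∧ addRelIndex W B = p ∧ ¬ IsMulClosed W}.ncard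

/-- The number of generating lines of `B`. -/
noncomputable def generatingLineCount (p : ℕ) (B : Submodule ℤ R) : ℕ :=
  {V : Submodule ℤ R | IsGeneratingLine p B V}.ncard

end Counts

/-- A cubic ring: a commutative ring whose additive group is free of rank three. -/
class IsCubicRing (R : Type*) [CommRing R] : Prop
    extends Module.Free ℤ R, Module.Finite ℤ R where
  finrank_eq : Module.finrank ℤ R = 3

section GeneratingLines

variable {R : Type*} [CommRing R] {p : ℕ} {B V M : Submodule ℤ R}

/-- The span of `V` and of the products of two elements of `V`. -/
abbrev quadSpan (V : Submodule ℤ R) : Submodule ℤ R := V ⊔ V * V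

lemma IsGeneratingLine.quadSpan_le (h : IsGeneratingLine p B V) (hB : IsMulClosed B) :
    quadSpan V ≤ B :=
  sup_le h.le (hB.mul_le h.le h.le)

lemma IsGeneratingLine.sup_mul_eq [Fact p.Prime] (h : IsGeneratingLine p B V) (hB : IsMulClosed B)
    (hquad : addRelIndex (quadSpan V) B = p) : quadSpan V ⊔ V * quadSpan V = B := by
  have hp : p.Prime := Fact.out
  rcases eq_or_eq_of_addRelIndex_prime (M := quadSpan V ⊔ V * quadSpan V) hquad
    le_sup_left (sup_le (h.quadSpan_le hB) (hB.mul_le h.le (h.quadSpan_le hB))) with heq | heq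
  · have hV : V * quadSpan V ≤ quadSpan V := sup_eq_left.1 heq
    refine absurd ?_ ((h.generates.mono le_sup_left).not_isMulClosed (hquad ▸ hp.one_lt.ne'))
    rw [IsMulClosed, Submodule.sup_mul, mul_assoc]
    exact sup_le hV ((mul_le_mul' le_rfl hV).trans hV)
  · exact heq

variable [Fact p.Prime] [IsCubicRing R]

lemma IsPLattice.addRelIndex_scalar_mul_self_cubic (hB : IsPLattice p B) :
    addRelIndex (scalar p * B) B = p ^ 3 := by
  rw [hB.addRelIndex_scalar_mul_self, IsCubicRing.finrank_eq]

lemma IsGeneratingLine.addRelIndex_scalar_mul (h : IsGeneratingLine p B V)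
    (hpB : IsPLattice p B) : addRelIndex (scalar p * B) V = p := by
  have hmul := addRelIndex_mul_addRelIndex h.scalar_mul_le h.le
  rw [h.addRelIndex_eq, hpB.addRelIndex_scalar_mul_self_cubic, pow_succ' p 2] at hmul
  exact Nat.eq_of_mul_eq_mul_right (pow_pos (NeZero.pos p) 2) hmul

lemma IsGeneratingLine.exists_eq_span_sup (h : IsGeneratingLine p B V) (hpB : IsPLattice p B) :
    ∃ t ∈ V, V = span ℤ {t} ⊔ scalar p * B := by
  have hp : p.Prime := Fact.out
  have hindex := h.addRelIndex_scalar_mul hpB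
  obtain ⟨t, htV, htB⟩ := SetLike.not_le_iff_exists.1 fun hle : V ≤ scalar p * B =>
    hp.one_lt.ne (addRelIndex_eq_one.2 hle ▸ hindex)
  refine ⟨t, htV, ?_⟩
  rcases eq_or_eq_of_addRelIndex_prime (M := span ℤ {t} ⊔ scalar p * B) hindex le_sup_right
    (sup_le ((span_singleton_le_iff_mem t V).2 htV) h.scalar_mul_le) with heq | heq
  · exact absurd (heq ▸ mem_sup_left (mem_span_singleton_self t)) htB
  · exact heq.symm

lemma IsGeneratingLine.exists_quadSpan_eq (h : IsGeneratingLine p B V) (hB : IsMulClosed B)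
    (hpB : IsPLattice p B) : ∃ s ∈ B, quadSpan V = V ⊔ span ℤ {s} := by
  obtain ⟨t, htV, hV⟩ := h.exists_eq_span_sup hpB
  have htB : span ℤ {t} ≤ B := (span_singleton_le_iff_mem t B).2 (h.le htV)
  refine ⟨t * t, hB (mul_mem_mul (h.le htV) (h.le htV)), le_antisymm ?_ ?_⟩
  · refine sup_le le_sup_left ?_
    have hsq := hB.mul_le_mul_sup_scalar_mul htB htB hV.le hV.le
    rw [span_mul_span, Set.singleton_mul_singleton] at hsq
    exact hsq.trans (sup_le le_sup_right (h.scalar_mul_le.trans le_sup_left))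
  · exact sup_le_sup_left ((span_singleton_le_iff_mem _ _).2 (mul_mem_mul htV htV)) V

lemma IsGeneratingLine.addRelIndex_quadSpan (h : IsGeneratingLine p B V) (hB : IsMulClosed B)
    (hpB : IsPLattice p B) : addRelIndex V (quadSpan V) = p := by
  have hp : p.Prime := Fact.out
  obtain ⟨s, hsB, hs⟩ := h.exists_quadSpan_eq hB hpB
  rw [hs]
  refine (addRelIndex_sup_span_singleton
    (h.scalar_mul_le (mem_scalar_mul.2 ⟨s, hsB, rfl⟩))).resolve_left fun hone => ?_
  refine h.generates.not_isMulClosed ?_ ((le_sup_right.trans hs.le).trans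
    (addRelIndex_eq_one.1 hone))
  exact h.addRelIndex_eq ▸ (Nat.one_lt_pow two_ne_zero hp.one_lt).ne'

lemma IsGeneratingLine.addRelIndex_quadSpan_right (h : IsGeneratingLine p B V)
    (hB : IsMulClosed B) (hpB : IsPLattice p B) : addRelIndex (quadSpan V) B = p := by
  have hmul := addRelIndex_mul_addRelIndex (le_sup_left : V ≤ quadSpan V) (h.quadSpan_le hB)
  rw [h.addRelIndex_quadSpan hB hpB, h.addRelIndex_eq, sq] at hmul
  exact Nat.eq_of_mul_eq_mul_left (NeZero.pos p) hmul

lemma IsGeneratingLine.eq_sup_mul (h : IsGeneratingLine p B V) (hB : IsMulClosed B)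
    (hpB : IsPLattice p B) : quadSpan V ⊔ V * quadSpan V = B :=
  h.sup_mul_eq hB (h.addRelIndex_quadSpan_right hB hpB)

lemma IsGeneratingLine.le_sup_mul_mul (h : IsGeneratingLine p B V) (hB : IsMulClosed B)
    (hpB : IsPLattice p B) (hM : IsPLattice p M) (hV : M ⊔ scalar p * B = V) :
    B ≤ M ⊔ M * M ⊔ M * (M * M) := by
  have hMB : M ≤ B := (le_sup_left.trans hV.le).trans h.le
  refine IsPLattice.le_of_le_sup_scalar_mul
    (hM.mono (le_sup_left.trans le_sup_left)) ?_
  have hVV : V * V ≤ M * M ⊔ scalar p * B := hB.mul_le_mul_sup_scalar_mul hMB hMB hV.ge hV.ge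
  have hVVV : V * (V * V) ≤ M * (M * M) ⊔ scalar p * B :=
    hB.mul_le_mul_sup_scalar_mul hMB (hB.mul_le hMB hMB) hV.ge hVV
  set N := M ⊔ M * M ⊔ M * (M * M)
  have hV' : V ≤ N ⊔ scalar p * B :=
    hV.ge.trans (sup_le_sup_right (le_sup_left.trans le_sup_left) _)
  have hVV' : V * V ≤ N ⊔ scalar p * B :=
    hVV.trans (sup_le_sup_right (le_sup_right.trans le_sup_left) _)
  calc B = V ⊔ V * V ⊔ V * (V ⊔ V * V) := (h.eq_sup_mul hB hpB).symm
    _ ≤ N ⊔ scalar p * B := by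
      rw [Submodule.mul_sup]
      exact sup_le (sup_le hV' hVV') (sup_le hVV' (hVVV.trans (sup_le_sup_right le_sup_right _)))

lemma IsGeneratingLine.scalar_mul_quadSpan_le (h : IsGeneratingLine p B V) (hB : IsMulClosed B)
    (hpB : IsPLattice p B) (hM : IsPLattice p M) (hMc : IsScaledMulClosed p M)
    (hV : M ⊔ scalar p * B = V) : scalar p * quadSpan V ≤ M := by
  have hMB : M ≤ B := (le_sup_left.trans hV.le).trans h.le
  have hBM : scalar p * B ≤ quadSpan M := by
    refine (mul_le_mul' le_rfl (h.le_sup_mul_mul hB hpB hM hV)).trans ?_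
    rw [Submodule.mul_sup, Submodule.mul_sup, mul_left_comm _ M (M * M)]
    have hMMM : M * (scalar p * (M * M)) ≤ M * M := mul_le_mul' le_rfl hMc
    have hMM : scalar p * (M * M) ≤ M := hMc
    exact sup_le (sup_le ((scalar_mul_le_self p M).trans le_sup_left) (hMM.trans le_sup_left))
      (hMMM.trans le_sup_right)
  have hVV := hB.mul_le_mul_sup_scalar_mul hMB hMB hV.ge hV.ge
  have hquad : quadSpan V ≤ quadSpan M :=
    sup_le (hV.ge.trans (sup_le le_sup_left hBM)) (hVV.trans (sup_le le_sup_right hBM))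
  refine (mul_le_mul' le_rfl hquad).trans ?_
  rw [Submodule.mul_sup]
  exact sup_le (scalar_mul_le_self p M) hMc

end GeneratingLines

section ProjectivePlane

/-- The points of the projective plane over `K`, listed through the normalized representatives
`(1, m, n)`, `(0, 1, n)`, `(0, 0, 1)`; see `PlanePoint.toVec`. -/
abbrev PlanePoint (K : Type*) := (K × K) ⊕ (K ⊕ Unit)

variable {K : Type*} [Field K]

/-- The representative of a projective point whose first nonzero coordinate is `1`. -/
def PlanePoint.toVec : PlanePoint K → Fin 3 → K
  | .inl (m, n) => ![1, m, n]
  | .inr (.inl n) => ![0, 1, n]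
  | .inr (.inr _) => ![0, 0, 1]

/-- The line through the origin of `K³` attached to a projective point. -/
def vecLine (x : PlanePoint K) : Submodule K (Fin 3 → K) := span K {x.toVec}

/-- The plane through the origin of `K³` orthogonal to a projective point. -/
def vecPlane (x : PlanePoint K) : Submodule K (Fin 3 → K) :=
  (dotProductEquiv K (Fin 3) x.toVec).ker

lemma mem_vecPlane {x : PlanePoint K} {v : Fin 3 → K} :
    v ∈ vecPlane x ↔ x.toVec 0 * v 0 + x.toVec 1 * v 1 + x.toVec 2 * v 2 = 0 := by
  rw [vecPlane, LinearMap.mem_ker, dotProductEquiv_apply_apply, dotProduct, Fin.sum_univ_three]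

lemma exists_eq_smul_toVec {v : Fin 3 → K} (hv : v ≠ 0) :
    ∃ (x : PlanePoint K) (c : K), c ≠ 0 ∧ v = c • x.toVec := by
  by_cases h0 : v 0 = 0
  · by_cases h1 : v 1 = 0
    · have h2 : v 2 ≠ 0 := fun h2 => hv (by ext i; fin_cases i <;> assumption)
      refine ⟨.inr (.inr ()), v 2, h2, ?_⟩
      ext i; fin_cases i <;> simp [PlanePoint.toVec, h0, h1]
    · refine ⟨.inr (.inl (v 2 / v 1)), v 1, h1, ?_⟩
      ext i; fin_cases i <;> simp [PlanePoint.toVec, h0, mul_div_cancel₀ _ h1]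
  · refine ⟨.inl (v 1 / v 0, v 2 / v 0), v 0, h0, ?_⟩
    ext i; fin_cases i <;> simp [PlanePoint.toVec, mul_div_cancel₀ _ h0]

lemma PlanePoint.toVec_ne_zero (x : PlanePoint K) : x.toVec ≠ 0 := by
  rcases x with ⟨m, n⟩ | n | _
  · exact fun h => one_ne_zero (congrFun h 0)
  · exact fun h => one_ne_zero (congrFun h 1)
  · exact fun h => one_ne_zero (congrFun h 2)

lemma PlanePoint.eq_of_toVec_eq_smul {x y : PlanePoint K} {c : K}
    (h : x.toVec = c • y.toVec) : x = y := by
  have e0 := congrFun h 0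
  have e1 := congrFun h 1
  have e2 := congrFun h 2
  rcases x with ⟨m, n⟩ | n | _ <;> rcases y with ⟨m', n'⟩ | n' | _ <;>
    simp [PlanePoint.toVec] at e0 e1 e2 ⊢ <;> grind

lemma vecLine_injective : Function.Injective (vecLine : PlanePoint K → _) := by
  intro x y h
  have hx : x.toVec ∈ vecLine y := h ▸ mem_span_singleton_self _
  obtain ⟨c, hc⟩ := mem_span_singleton.1 hx
  exact PlanePoint.eq_of_toVec_eq_smul hc.symm

lemma vecPlane_injective : Function.Injective (vecPlane : PlanePoint K → _) := by
  intro x y h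
  have hspan : dotProductEquiv K (Fin 3) x.toVec ∈
      span K (Set.range fun _ : Unit => dotProductEquiv K (Fin 3) y.toVec) :=
    mem_span_of_iInf_ker_le_ker (iInf_const.le.trans h.ge)
  rw [Set.range_const, mem_span_singleton] at hspan
  obtain ⟨c, hc⟩ := hspan
  refine PlanePoint.eq_of_toVec_eq_smul (c := c) ((dotProductEquiv K (Fin 3)).injective ?_)
  rw [map_smul, hc]

lemma finrank_vecLine (x : PlanePoint K) : Module.finrank K (vecLine x) = 1 :=
  finrank_span_singleton x.toVec_ne_zero

lemma finrank_vecPlane (x : PlanePoint K) : Module.finrank K (vecPlane x) = 2 := by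
  have h := Module.Dual.finrank_ker_add_one_of_ne_zero (f := dotProductEquiv K (Fin 3) x.toVec)
    ((dotProductEquiv K (Fin 3)).map_ne_zero_iff.2 x.toVec_ne_zero)
  rw [Module.finrank_fin_fun] at h
  exact Nat.succ_injective h

lemma exists_vecLine_eq {U : Submodule K (Fin 3 → K)} (hU : Module.finrank K U = 1) :
    ∃ x, vecLine x = U := by
  obtain ⟨v, hv, -⟩ := finrank_eq_one_iff'.1 hU
  obtain ⟨x, c, hc, hx⟩ := exists_eq_smul_toVec fun h : (v : Fin 3 → K) = 0 => hv (Subtype.ext h)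
  refine ⟨x, Submodule.eq_of_le_of_finrank_eq ?_ (by rw [finrank_vecLine, hU])⟩
  rw [vecLine, span_singleton_le_iff_mem, ← inv_smul_smul₀ hc x.toVec, ← hx]
  exact U.smul_mem _ v.2

lemma exists_vecPlane_eq {U : Submodule K (Fin 3 → K)} (hU : Module.finrank K U = 2) :
    ∃ x, vecPlane x = U := by
  have hlt : U < ⊤ := lt_top_iff_ne_top.2 fun h => by
    rw [h, finrank_top, Module.finrank_fin_fun] at hU
    exact absurd hU (by norm_num)
  obtain ⟨φ, hφ, hUφ⟩ := exists_le_ker_of_lt_top U hlt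
  obtain ⟨l, rfl⟩ := (dotProductEquiv K (Fin 3)).surjective φ
  obtain ⟨x, c, hc, rfl⟩ := exists_eq_smul_toVec ((dotProductEquiv K (Fin 3)).map_ne_zero_iff.1 hφ)
  refine ⟨x, (Submodule.eq_of_le_of_finrank_eq ?_ (by rw [finrank_vecPlane, hU])).symm⟩
  rwa [map_smul, LinearMap.ker_smul _ _ hc] at hUφ

lemma card_planePoint (p : ℕ) [NeZero p] : Nat.card (PlanePoint (ZMod p)) = p ^ 2 + p + 1 := by
  simp only [PlanePoint, Nat.card_sum, Nat.card_prod, Nat.card_zmod, Nat.card_unique]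
  ring

end ProjectivePlane

section Reduction

variable {R : Type*} [CommRing R] {p : ℕ} {S : Submodule ℤ R}
  {f : S →ₗ[ℤ] (Fin 3 → ZMod p)}

/-- `f` is a reduction of the lattice `S` modulo `p`: it identifies `S / pS` with `𝔽_p³`. -/
structure IsReduction (p : ℕ) (S : Submodule ℤ R) (f : S →ₗ[ℤ] (Fin 3 → ZMod p)) : Prop where
  surjective : Function.Surjective f
  comapLattice_bot : comapLattice f (⊥ : Submodule (ZMod p) (Fin 3 → ZMod p)) = scalar p * S

variable [Fact p.Prime]

lemma IsReduction.addRelIndex_comapLattice_eq_pow (hf : IsReduction p S f)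
    {U : Submodule (ZMod p) (Fin 3 → ZMod p)} {d : ℕ} :
    addRelIndex (comapLattice f U) S = p ^ d ↔ Module.finrank (ZMod p) U + d = 3 := by
  have h := U.finrank_quotient_add_finrank
  rw [Module.finrank_fin_fun] at h
  rw [addRelIndex_comapLattice hf.surjective, index_toAddSubgroup,
    (Nat.pow_right_injective (Fact.out : p.Prime).two_le).eq_iff]
  omega

lemma IsReduction.ncard_eq_card_subtype (hf : IsReduction p S f) {ι : Type*}
    {g : ι → Submodule (ZMod p) (Fin 3 → ZMod p)} (hg : Function.Injective g) {d : ℕ}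
    (hgd : ∀ U : Submodule (ZMod p) (Fin 3 → ZMod p),
      Module.finrank (ZMod p) U + d = 3 ↔ ∃ x, g x = U) (Q : Submodule ℤ R → Prop) :
    {W | scalar p * S ≤ W ∧ W ≤ S ∧ addRelIndex W S = p ^ d ∧ Q W}.ncard =
      Nat.card {x // Q (comapLattice f (g x))} := by
  rw [← Nat.card_coe_set_eq]
  have hmem (x : {x // Q (comapLattice f (g x))}) :
      comapLattice f (g x) ∈ {W | scalar p * S ≤ W ∧ W ≤ S ∧ addRelIndex W S = p ^ d ∧ Q W} :=
    ⟨hf.comapLattice_bot ▸ (comapLattice_le_comapLattice hf.surjective).2 bot_le,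
      comapLattice_le f _, hf.addRelIndex_comapLattice_eq_pow.2 ((hgd _).2 ⟨x, rfl⟩), x.2⟩
  refine (Nat.card_eq_of_bijective (fun x => ⟨_, hmem x⟩) ⟨fun x y h => ?_, ?_⟩).symm
  · exact Subtype.ext (hg (comapLattice_injective hf.surjective (Subtype.ext_iff.1 h)))
  · rintro ⟨W, hSW, hWS, hd, hQ⟩
    obtain ⟨U, rfl⟩ := exists_comapLattice_eq (hf.comapLattice_bot.le.trans hSW) hWS
    obtain ⟨x, rfl⟩ := (hgd U).1 (hf.addRelIndex_comapLattice_eq_pow.1 hd)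
    exact ⟨⟨x, hQ⟩, rfl⟩

lemma IsReduction.ncard_planes (hf : IsReduction p S f) (Q : Submodule ℤ R → Prop) :
    {W | W ≤ S ∧ addRelIndex W S = p ∧ Q W}.ncard =
      Nat.card {x : PlanePoint (ZMod p) // Q (comapLattice f (vecPlane x))} := by
  rw [← hf.ncard_eq_card_subtype vecPlane_injective (d := 1) fun U =>
    ⟨fun h => exists_vecPlane_eq (Nat.succ_injective h),
      fun ⟨x, h⟩ => h ▸ congrArg (· + 1) (finrank_vecPlane x)⟩]
  congr 1
  ext W
  simp only [Set.mem_ofPred_eq, pow_one]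
  exact ⟨fun h => ⟨h.2.1 ▸ scalar_addRelIndex_mul_le W S, h⟩, And.right⟩

lemma IsReduction.ncard_lines (hf : IsReduction p S f) (Q : Submodule ℤ R → Prop) :
    {T | scalar p * S ≤ T ∧ T ≤ S ∧ addRelIndex T S = p ^ 2 ∧ Q T}.ncard =
      Nat.card {x : PlanePoint (ZMod p) // Q (comapLattice f (vecLine x))} :=
  hf.ncard_eq_card_subtype vecLine_injective (fun _ =>
    ⟨fun h => exists_vecLine_eq (Nat.add_right_cancel h),
      fun ⟨x, h⟩ => h ▸ congrArg (· + 2) (finrank_vecLine x)⟩) Q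

variable [IsCubicRing R]

lemma exists_isReduction (hS : IsPLattice p S) : ∃ f, IsReduction p S f := by
  obtain ⟨V, _, _, f, hf, hbot⟩ := exists_comapLattice_bot_eq (scalar_mul_le_self p S)
    fun x hx => mem_scalar_mul.2 ⟨x, hx, rfl⟩
  have hcard : Nat.card V = p ^ 3 := by
    rw [← hS.addRelIndex_scalar_mul_self_cubic, ← hbot, addRelIndex_comapLattice hf]
    exact AddSubgroup.index_bot.symm
  have : Finite V := Nat.finite_of_card_ne_zero (hcard ▸ pow_ne_zero 3 (NeZero.ne p))
  let e : V ≃ₗ[ZMod p] (Fin 3 → ZMod p) :=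
    LinearEquiv.ofFinrankEq _ _ (by rw [finrank_eq_of_card hcard, Module.finrank_fin_fun])
  refine ⟨e.toAddEquiv.toAddMonoidHom.toIntLinearMap.comp f, e.surjective.comp hf, ?_⟩
  rw [← hbot]
  ext x
  simp only [mem_comapLattice]
  exact exists_congr fun _ => e.map_eq_zero_iff

lemma IsPLattice.ncard_setOf_addRelIndex_eq (hS : IsPLattice p S) :
    {W | W ≤ S ∧ addRelIndex W S = p}.ncard = p ^ 2 + p + 1 := by
  obtain ⟨f, hf⟩ := exists_isReduction hS
  have h := hf.ncard_planes fun _ => True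
  simp only [and_true] at h
  rw [h, ← card_planePoint]
  exact Nat.card_congr (Equiv.subtypeUnivEquiv fun _ => trivial)

end Reduction

section ScaledSubrings

variable {R : Type*} [CommRing R] {n p : ℕ} {M N T B : Submodule ℤ R}

/-- Every `C` with `nC` a subring that contains `M` also contains `B`. -/
def ScaledGenerates (n : ℕ) (M B : Submodule ℤ R) : Prop :=
  ∀ C, IsScaledMulClosed n C → M ≤ C → B ≤ C

lemma IsMulClosed.isScaledMulClosed (hM : IsMulClosed M) (n : ℕ) : IsScaledMulClosed n M :=
  (scalar_mul_le_self n _).trans hM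

lemma IsMulClosed.isScaledMulClosed_of_le (hB : IsMulClosed B) (hM : M ≤ B)
    (h : scalar n * B ≤ M) : IsScaledMulClosed n M :=
  (mul_le_mul' le_rfl (hB.mul_le hM hM)).trans h

lemma IsMulClosed.inf (hM : IsMulClosed M) (hN : IsMulClosed N) : IsMulClosed (M ⊓ N) :=
  le_inf (hM.mul_le inf_le_left inf_le_left) (hN.mul_le inf_le_right inf_le_right)

lemma IsScaledMulClosed.inf (hM : IsScaledMulClosed n M) (hN : IsScaledMulClosed n N) :
    IsScaledMulClosed n (M ⊓ N) :=
  le_inf ((mul_le_mul' le_rfl (mul_le_mul' inf_le_left inf_le_left)).trans hM)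
    ((mul_le_mul' le_rfl (mul_le_mul' inf_le_right inf_le_right)).trans hN)

lemma isMulClosed_scalar_mul_top (n : ℕ) : IsMulClosed (scalar n * ⊤ : Submodule ℤ R) := by
  rw [IsMulClosed, mul_assoc]
  exact mul_le_mul' le_rfl le_top

lemma IsScaledMulClosed.of_mul_le (h : M * M ≤ N) (hT : T ≤ M) (hN : scalar n * N ≤ T) :
    IsScaledMulClosed n T :=
  (mul_le_mul' le_rfl ((mul_le_mul' hT hT).trans h)).trans hN

variable [Module.IsTorsionFree ℤ R] [NeZero p]

lemma generates_scalar_mul :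
    Generates (scalar p * M) (scalar p * B) ↔ ScaledGenerates p M B := by
  constructor
  · intro h C hC hMC
    exact scalar_mul_le_scalar_mul.1 (h _ (isMulClosed_scalar_mul.2 hC)
      (scalar_mul_le_scalar_mul.2 hMC))
  · intro h C hC hMC
    obtain ⟨C', hC'⟩ := exists_eq_scalar_mul (inf_le_right : C ⊓ scalar p * ⊤ ≤ scalar p * ⊤)
    have hclosed : IsScaledMulClosed p C' :=
      isMulClosed_scalar_mul.1 (hC' ▸ hC.inf (isMulClosed_scalar_mul_top p))
    have hM : M ≤ C' := scalar_mul_le_scalar_mul.1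
      (hC' ▸ le_inf hMC (mul_le_mul' le_rfl le_top))
    exact (scalar_mul_le_scalar_mul.2 (h C' hclosed hM)).trans (hC' ▸ inf_le_left)

lemma nonclosedCount_scalar_mul (M : Submodule ℤ R) :
    nonclosedCount p (scalar p * M) =
      {W | W ≤ M ∧ addRelIndex W M = p ∧ ¬ IsScaledMulClosed p W}.ncard := by
  refine (congrArg Set.ncard ?_).trans (Set.ncard_image_of_injective _
    (scalar_mul_injective (n := p)))
  ext W
  constructor
  · rintro ⟨hle, hindex, hclosed⟩
    obtain ⟨W, rfl⟩ := exists_eq_scalar_mul (hle.trans (mul_le_mul' le_rfl le_top))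
    rw [scalar_mul_le_scalar_mul] at hle
    rw [addRelIndex_scalar_mul_scalar_mul] at hindex
    exact ⟨W, ⟨hle, hindex, mt isMulClosed_scalar_mul.2 hclosed⟩, rfl⟩
  · rintro ⟨W, ⟨hle, hindex, hclosed⟩, rfl⟩
    exact ⟨scalar_mul_le_scalar_mul.2 hle, by rwa [addRelIndex_scalar_mul_scalar_mul],
      mt isMulClosed_scalar_mul.1 hclosed⟩

lemma generatingLineCount_scalar_mul (M : Submodule ℤ R) :
    generatingLineCount p (scalar p * M) = {T | scalar p * M ≤ T ∧ T ≤ M ∧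
      addRelIndex T M = p ^ 2 ∧ ScaledGenerates p T M}.ncard := by
  refine (congrArg Set.ncard ?_).trans (Set.ncard_image_of_injective _
    (scalar_mul_injective (n := p)))
  ext T
  constructor
  · rintro ⟨hpM, hle, hindex, hgen⟩
    obtain ⟨T, rfl⟩ := exists_eq_scalar_mul (hle.trans (mul_le_mul' le_rfl le_top))
    rw [scalar_mul_le_scalar_mul] at hle hpM
    rw [addRelIndex_scalar_mul_scalar_mul] at hindex
    exact ⟨T, ⟨hpM, hle, hindex, generates_scalar_mul.1 hgen⟩, rfl⟩
  · rintro ⟨T, ⟨hpM, hle, hindex, hgen⟩, rfl⟩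
    exact ⟨scalar_mul_le_scalar_mul.2 hpM, scalar_mul_le_scalar_mul.2 hle,
      by rwa [addRelIndex_scalar_mul_scalar_mul], generates_scalar_mul.2 hgen⟩

end ScaledSubrings

section GeneratingFibers

variable {R : Type*} [CommRing R] {p k : ℕ} {B M V : Submodule ℤ R}

/-- The lattices `M` of index `p ^ k` in `B` for which `pM` is a subring and which generate `B`
as a ring. -/
def generatingFiber (p k : ℕ) (B : Submodule ℤ R) : Set (Submodule ℤ R) :=
  {M | M ≤ B ∧ IsScaledMulClosed p M ∧ addRelIndex M B = p ^ k ∧ Generates M B}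

lemma IsPLattice.quadSpan_eq (hM : IsPLattice p M) (hMB : M ≤ B) (hB : IsMulClosed B)
    (hquad : quadSpan (M ⊔ scalar p * B) = B) : quadSpan M = B := by
  refine le_antisymm (sup_le hMB (hB.mul_le hMB hMB))
    ((hM.mono le_sup_left).le_of_le_sup_scalar_mul ?_)
  exact hquad.ge.trans (sup_le (sup_le_sup_right le_sup_left _)
    ((hB.mul_le_mul_sup_scalar_mul hMB hMB le_rfl le_rfl).trans
      (sup_le_sup_right le_sup_right _)))

lemma IsScaledMulClosed.scalar_mul_quadSpan_le (hM : IsScaledMulClosed p M) :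
    scalar p * quadSpan M ≤ M := by
  rw [Submodule.mul_sup]
  exact sup_le (scalar_mul_le_self p M) hM

lemma generatingFiber_zero (hB : IsMulClosed B) : generatingFiber p 0 B = {B} := by
  ext M
  constructor
  · rintro ⟨hle, -, hindex, -⟩
    exact le_antisymm hle (addRelIndex_eq_one.1 (by rwa [pow_zero] at hindex))
  · rintro rfl
    exact ⟨le_rfl, hB.isScaledMulClosed p, (addRelIndex_eq_one.2 le_rfl).trans (pow_zero p).symm,
      fun C _ h => h⟩

variable [Fact p.Prime]

lemma generatingFiber_one (hB : IsMulClosed B) : generatingFiber p 1 B =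
    {W | W ≤ B ∧ addRelIndex W B = p ∧ ¬ IsMulClosed W} := by
  have hp : p.Prime := Fact.out
  ext M
  simp only [generatingFiber, Set.mem_ofPred_eq, pow_one]
  constructor
  · rintro ⟨hle, -, hindex, hgen⟩
    exact ⟨hle, hindex, hgen.not_isMulClosed (hindex.trans_ne hp.one_lt.ne')⟩
  · rintro ⟨hle, hindex, hclosed⟩
    refine ⟨hle, hB.isScaledMulClosed_of_le hle (hindex ▸ scalar_addRelIndex_mul_le M B), hindex,
      fun C hC hM => ?_⟩
    rcases eq_or_eq_of_addRelIndex_prime hindex (le_inf hM hle) inf_le_right with h | h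
    · exact absurd (h ▸ hC.inf hB) hclosed
    · exact inf_eq_right.1 h

lemma ncard_generatingFiber_one (hB : IsMulClosed B) :
    (generatingFiber p 1 B).ncard = nonclosedCount p B := by
  rw [generatingFiber_one hB, nonclosedCount]

lemma quadSpan_eq_of_addRelIndex_sup (hB : IsMulClosed B) (hM : IsPLattice p M) (hMB : M ≤ B)
    (hgen : Generates M B) (hindex : addRelIndex (M ⊔ scalar p * B) B = p) :
    quadSpan M = B := by
  have hp : p.Prime := Fact.out
  have hle : M ⊔ scalar p * B ≤ B := sup_le hMB (scalar_mul_le_self p B)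
  refine hM.quadSpan_eq hMB hB ((eq_or_eq_of_addRelIndex_prime hindex le_sup_left
    (sup_le hle (hB.mul_le hle hle))).resolve_left fun h => ?_)
  exact (hgen.mono le_sup_left).not_isMulClosed (hindex.trans_ne hp.one_lt.ne') (sup_eq_left.1 h)

variable [IsCubicRing R]

lemma IsGeneratingLine.addRelIndex_of_inf_eq (h : IsGeneratingLine p B V)
    (hpB : IsPLattice p B) (hsup : M ⊔ scalar p * B = V)
    (hinf : M ⊓ scalar p * B = scalar p * quadSpan V) :
    addRelIndex (scalar p * quadSpan V) M = p := by
  rw [← hinf, inf_comm, addRelIndex_inf_left, ← addRelIndex_sup_right, hsup,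
    h.addRelIndex_scalar_mul hpB]

lemma IsGeneratingLine.addRelIndex_eq_pow_three (h : IsGeneratingLine p B V)
    (hB : IsMulClosed B) (hpB : IsPLattice p B) (hsup : M ⊔ scalar p * B = V)
    (hinf : M ⊓ scalar p * B = scalar p * quadSpan V) : addRelIndex M B = p ^ 3 := by
  have hM := addRelIndex_mul_addRelIndex (inf_le_left : M ⊓ scalar p * B ≤ M)
    ((le_sup_left.trans hsup.le).trans h.le)
  have hpV := addRelIndex_mul_addRelIndex (inf_le_right : M ⊓ scalar p * B ≤ scalar p * B)
    (scalar_mul_le_self p B)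
  rw [← hpV, hinf, h.addRelIndex_of_inf_eq hpB hsup hinf, addRelIndex_scalar_mul_scalar_mul,
    h.addRelIndex_quadSpan_right hB hpB, hpB.addRelIndex_scalar_mul_self_cubic] at hM
  exact Nat.eq_of_mul_eq_mul_left (NeZero.pos p) hM

lemma inf_scalar_mul_eq_or_isGeneratingLine (hB : IsMulClosed B) (hpB : IsPLattice p B)
    (hM : M ∈ generatingFiber p k B) (h : IsGeneratingLine p B (M ⊔ scalar p * B)) :
    (k = 2 ∧ IsGeneratingLine p B M) ∨
      (k = 3 ∧ M ⊓ scalar p * B = scalar p * quadSpan (M ⊔ scalar p * B)) := by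
  have hp : p.Prime := Fact.out
  obtain ⟨-, hclosed, hindex, -⟩ := hM
  set V := M ⊔ scalar p * B with hV
  have hprime : addRelIndex (scalar p * quadSpan V) (scalar p * B) = p := by
    rw [addRelIndex_scalar_mul_scalar_mul, h.addRelIndex_quadSpan_right hB hpB]
  have hle : scalar p * quadSpan V ≤ M :=
    h.scalar_mul_quadSpan_le hB hpB (hpB.of_addRelIndex hindex) hclosed hV.symm
  rcases eq_or_eq_of_addRelIndex_prime hprime
    (le_inf hle (mul_le_mul' le_rfl (h.quadSpan_le hB))) inf_le_right with hinf | hinf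
  · exact .inr ⟨Nat.pow_right_injective hp.two_le
      (hindex.symm.trans (h.addRelIndex_eq_pow_three hB hpB hV.symm hinf)), hinf⟩
  · have hMV : V = M := sup_eq_left.2 (inf_eq_right.1 hinf)
    rw [hMV] at h
    exact .inl ⟨Nat.pow_right_injective hp.two_le (hindex.symm.trans h.addRelIndex_eq), h⟩

/-- The four cases are distinguished by the index of `M ⊔ pB` in `B`. -/
lemma generatingFiber_cases (hB : IsMulClosed B) (hpB : IsPLattice p B)
    (hM : M ∈ generatingFiber p k B) :
    (k = 0 ∧ M = B) ∨ (k = 1 ∧ scalar p * B ≤ M ∧ quadSpan M = B) ∨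
      (k = 2 ∧ IsGeneratingLine p B M) ∨
      (k = 3 ∧ IsGeneratingLine p B (M ⊔ scalar p * B) ∧
        M ⊓ scalar p * B = scalar p * quadSpan (M ⊔ scalar p * B)) := by
  have hp : p.Prime := Fact.out
  have hinj : Function.Injective (p ^ ·) := Nat.pow_right_injective hp.two_le
  have ⟨hMB, hclosed, hindex, hgen⟩ := hM
  have hMp : IsPLattice p M := hpB.of_addRelIndex hindex
  have hVB : M ⊔ scalar p * B ≤ B := sup_le hMB (scalar_mul_le_self p B)
  have hgenV : Generates (M ⊔ scalar p * B) B := hgen.mono le_sup_left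
  have hdvd : addRelIndex (M ⊔ scalar p * B) B ∣ p ^ 3 := by
    rw [← hpB.addRelIndex_scalar_mul_self_cubic, ← addRelIndex_mul_addRelIndex le_sup_right hVB]
    exact dvd_mul_left _ _
  obtain ⟨j, hj, hjV⟩ := (Nat.dvd_prime_pow hp).1 hdvd
  interval_cases j
  · have hBM : B ≤ M := hMp.le_of_le_sup_scalar_mul (addRelIndex_eq_one.1 hjV)
    refine .inl ⟨hinj ?_, le_antisymm hMB hBM⟩
    exact hindex.symm.trans ((addRelIndex_eq_one.2 hBM).trans (pow_zero p).symm)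
  · have hquad := quadSpan_eq_of_addRelIndex_sup hB hMp hMB hgen (hjV.trans (pow_one p))
    have hle : scalar p * B ≤ M := hquad ▸ hclosed.scalar_mul_quadSpan_le
    rw [sup_eq_left.2 hle] at hjV
    exact .inr (.inl ⟨hinj (hindex.symm.trans hjV), hle, hquad⟩)
  · have hline : IsGeneratingLine p B (M ⊔ scalar p * B) := ⟨le_sup_right, hVB, hjV, hgenV⟩
    rcases inf_scalar_mul_eq_or_isGeneratingLine hB hpB hM hline with h | h
    · exact .inr (.inr (.inl h))
    · exact .inr (.inr (.inr ⟨h.1, hline, h.2⟩))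
  · have hV : scalar p * B = M ⊔ scalar p * B := hpB.scalar_mul.eq_of_addRelIndex_eq
      le_sup_right hVB (hpB.addRelIndex_scalar_mul_self_cubic.trans hjV.symm)
    refine absurd ?_ (hgenV.not_isMulClosed (hjV ▸ (Nat.one_lt_pow three_ne_zero hp.one_lt).ne'))
    exact hV ▸ isMulClosed_scalar_mul.2 (hB.isScaledMulClosed p)

lemma generatingFiber_two (hB : IsMulClosed B) (hpB : IsPLattice p B) :
    generatingFiber p 2 B = {V | IsGeneratingLine p B V} := by
  ext M
  refine ⟨fun hM => ?_, fun h => ⟨h.le, hB.isScaledMulClosed_of_le h.le h.scalar_mul_le,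
    h.addRelIndex_eq, h.generates⟩⟩
  rcases generatingFiber_cases hB hpB hM with h | h | h | h
  · omega
  · omega
  · exact h.2
  · omega

lemma ncard_generatingFiber_two (hB : IsMulClosed B) (hpB : IsPLattice p B) :
    (generatingFiber p 2 B).ncard = generatingLineCount p B := by
  rw [generatingFiber_two hB hpB, generatingLineCount]

lemma generatingFiber_three (hB : IsMulClosed B) (hpB : IsPLattice p B) :
    generatingFiber p 3 B = {M | IsGeneratingLine p B (M ⊔ scalar p * B) ∧
      M ⊓ scalar p * B = scalar p * quadSpan (M ⊔ scalar p * B)} := by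
  ext M
  constructor
  · intro hM
    rcases generatingFiber_cases hB hpB hM with h | h | h | h
    · omega
    · omega
    · omega
    · exact h.2
  · rintro ⟨h, hinf⟩
    have hle : scalar p * quadSpan (M ⊔ scalar p * B) ≤ M := hinf ▸ inf_le_left
    have hMp : IsPLattice p M :=
      ((hpB.scalar_mul.mono (le_sup_right.trans le_sup_left)).scalar_mul).mono hle
    refine ⟨le_sup_left.trans h.le, .of_mul_le le_sup_right le_sup_left hle,
      h.addRelIndex_eq_pow_three hB hpB rfl hinf, fun C hC hMC => ?_⟩
    exact (h.le_sup_mul_mul hB hpB hMp rfl).trans (sup_le (sup_le hMC (hC.mul_le hMC hMC))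
      (hC.mul_le hMC (hC.mul_le hMC hMC)))

lemma generatingFiber_eq_empty (hB : IsMulClosed B) (hpB : IsPLattice p B) (hk : 4 ≤ k) :
    generatingFiber p k B = ∅ := by
  refine Set.eq_empty_of_forall_notMem fun M hM => ?_
  rcases generatingFiber_cases hB hpB hM with h | h | h | h <;> omega

lemma finite_generatingFiber (hpB : IsPLattice p B) (k : ℕ) : (generatingFiber p k B).Finite :=
  (hpB.finite_setOf_addRelIndex_eq k).subset fun _ h => ⟨h.1, h.2.2.1⟩

lemma ncard_complementsBetween_quadSpan (hB : IsMulClosed B) (hpB : IsPLattice p B)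
    (h : IsGeneratingLine p B V) :
    (complementsBetween (scalar p * quadSpan V) (scalar p * B) V).ncard = p := by
  have hmul : scalar p * V ≤ scalar p * quadSpan V := mul_le_mul' le_rfl le_sup_left
  rw [ncard_complementsBetween (p := p) (i := 1) (j := 1)
    (mul_le_mul' le_rfl (h.quadSpan_le hB)) h.scalar_mul_le (scalar_mul_le_iff.1 hmul), one_mul,
    pow_one]
  · rw [addRelIndex_scalar_mul_scalar_mul, h.addRelIndex_quadSpan_right hB hpB, pow_one]
  · rw [h.addRelIndex_scalar_mul hpB, pow_one]

lemma ncard_generatingFiber_three (hB : IsMulClosed B) (hpB : IsPLattice p B) :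
    (generatingFiber p 3 B).ncard = p * generatingLineCount p B := by
  classical
  have hthree := finite_generatingFiber hpB 3
  have htwo := finite_generatingFiber hpB 2
  rw [← ncard_generatingFiber_two hB hpB, Set.ncard_eq_toFinset_card _ hthree,
    Set.ncard_eq_toFinset_card _ htwo,
    Finset.card_eq_sum_card_fiberwise (f := (· ⊔ scalar p * B)) (t := htwo.toFinset),
    Finset.sum_const_nat (m := p), mul_comm]
  · intro V hV
    rw [htwo.mem_toFinset, generatingFiber_two hB hpB] at hV
    refine Eq.trans ?_ (ncard_complementsBetween_quadSpan hB hpB hV)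
    rw [← Set.ncard_coe_finset]
    congr 1
    ext M
    rw [Finset.mem_coe, Finset.mem_filter, hthree.mem_toFinset, generatingFiber_three hB hpB]
    constructor
    · rintro ⟨⟨-, hinf⟩, rfl⟩
      exact ⟨hinf, rfl⟩
    · rintro ⟨hinf, rfl⟩
      exact ⟨⟨hV, hinf⟩, rfl⟩
  · intro M hM
    rw [hthree.coe_toFinset, generatingFiber_three hB hpB] at hM
    rw [htwo.coe_toFinset, generatingFiber_two hB hpB]
    exact hM.1

end GeneratingFibers

section FiberCounts

variable {R : Type*} [CommRing R] {p : ℕ} {B M : Submodule ℤ R} [Fact p.Prime] [IsCubicRing R]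

lemma nonclosedCount_scalar_mul_self (hB : IsMulClosed B) :
    nonclosedCount p (scalar p * B) = 0 := by
  rw [nonclosedCount_scalar_mul, ← Set.ncard_empty (Submodule ℤ R)]
  refine congrArg Set.ncard (Set.eq_empty_of_forall_notMem ?_)
  rintro W ⟨hle, hindex, hclosed⟩
  exact hclosed (hB.isScaledMulClosed_of_le hle (hindex ▸ scalar_addRelIndex_mul_le W B))

lemma generatingLineCount_scalar_mul_self (hB : IsMulClosed B) :
    generatingLineCount p (scalar p * B) = 0 := by
  have hp : p.Prime := Fact.out
  rw [generatingLineCount_scalar_mul, ← Set.ncard_empty (Submodule ℤ R)]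
  refine congrArg Set.ncard (Set.eq_empty_of_forall_notMem ?_)
  rintro T ⟨hpB, hle, hindex, hgen⟩
  have hBT : B ≤ T := hgen T (hB.isScaledMulClosed_of_le hle hpB) le_rfl
  rw [addRelIndex_eq_one.2 hBT] at hindex
  exact (Nat.one_lt_pow two_ne_zero hp.one_lt).ne hindex

lemma addRelIndex_scalar_mul_quadSpan (hpM : IsPLattice p M) (hM : IsScaledMulClosed p M)
    (hindex : addRelIndex M (quadSpan M) = p) :
    addRelIndex (scalar p * quadSpan M) M = p ^ 2 := by
  have hmul := addRelIndex_mul_addRelIndex (mul_le_mul' le_rfl le_sup_left)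
    hM.scalar_mul_quadSpan_le
  rw [addRelIndex_scalar_mul_scalar_mul, hindex, hpM.addRelIndex_scalar_mul_self_cubic,
    pow_succ' p 2] at hmul
  exact Nat.eq_of_mul_eq_mul_left (NeZero.pos p) hmul

lemma nonclosed_eq_complementsBetween_quadSpan (hB : IsMulClosed B) (hMB : M ≤ B)
    (hpB : scalar p * B ≤ M) (hindex : addRelIndex M (quadSpan M) = p) :
    {W | W ≤ M ∧ addRelIndex W M = p ∧ ¬ IsScaledMulClosed p W} =
      complementsBetween (scalar p * M) (scalar p * quadSpan M) M := by
  have hp : p.Prime := Fact.out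
  have hM : IsScaledMulClosed p M := hB.isScaledMulClosed_of_le hMB hpB
  have hprime : addRelIndex (scalar p * M) (scalar p * quadSpan M) = p := by
    rw [addRelIndex_scalar_mul_scalar_mul, hindex]
  ext W
  constructor
  · rintro ⟨hWM, hW, hclosed⟩
    exact mem_complementsBetween_of_not_le (hW ▸ scalar_addRelIndex_mul_le W M) hWM
      (mul_le_mul' le_rfl le_sup_left) hM.scalar_mul_quadSpan_le hprime hW
      fun h => hclosed (.of_mul_le le_sup_right hWM h)
  · intro hW
    have hWM : W ≤ M := le_sup_left.trans hW.2.le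
    have hWp : addRelIndex W M = p := (addRelIndex_of_mem_complementsBetween hW).trans hprime
    refine ⟨hWM, hWp, fun hclosed => hp.one_lt.ne' (hWp.symm.trans (addRelIndex_eq_one.2 ?_))⟩
    have hMW : M ≤ W ⊔ scalar p * B := hW.2.ge.trans
      (sup_le_sup_left (mul_le_mul' le_rfl (sup_le hMB (hB.mul_le hMB hMB))) W)
    have hpM : scalar p * M ≤ W := hWp ▸ scalar_addRelIndex_mul_le W M
    have hsq : scalar p * (M * M) ≤ W := by
      refine (mul_le_mul' le_rfl (hB.mul_le_mul_sup_scalar_mul (hWM.trans hMB) (hWM.trans hMB)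
        hMW hMW)).trans ?_
      rw [Submodule.mul_sup]
      exact sup_le hclosed ((mul_le_mul' le_rfl hpB).trans hpM)
    refine hW.2.ge.trans (sup_le le_rfl ?_)
    rw [Submodule.mul_sup]
    exact sup_le hpM hsq

lemma nonclosedCount_scalar_mul_of_scalar_mul_le (hB : IsMulClosed B) (hpM : IsPLattice p M)
    (hMB : M ≤ B) (hpB : scalar p * B ≤ M) (hindex : addRelIndex M (quadSpan M) = p) :
    nonclosedCount p (scalar p * M) = p ^ 2 := by
  have hM : IsScaledMulClosed p M := hB.isScaledMulClosed_of_le hMB hpB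
  rw [nonclosedCount_scalar_mul, nonclosed_eq_complementsBetween_quadSpan hB hMB hpB hindex,
    ncard_complementsBetween (p := p) (i := 1) (mul_le_mul' le_rfl le_sup_left)
      hM.scalar_mul_quadSpan_le (scalar_mul_le_iff.1 le_rfl) ?_
      (addRelIndex_scalar_mul_quadSpan hpM hM hindex), one_mul]
  rw [addRelIndex_scalar_mul_scalar_mul, hindex, pow_one]

lemma generatingLineCount_scalar_mul_of_addRelIndex (hM : IsScaledMulClosed p M)
    (hindex : addRelIndex M (quadSpan M) = p) :
    generatingLineCount p (scalar p * M) = 0 := by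
  have hp : p.Prime := Fact.out
  rw [generatingLineCount_scalar_mul, ← Set.ncard_empty (Submodule ℤ R)]
  refine congrArg Set.ncard (Set.eq_empty_of_forall_notMem ?_)
  rintro T ⟨hpM, hle, hT, hgen⟩
  have hsup : T ⊔ scalar p * quadSpan M ≤ M := sup_le hle hM.scalar_mul_quadSpan_le
  have hM' : M ≤ T ⊔ scalar p * quadSpan M :=
    hgen _ (.of_mul_le le_sup_right hsup le_sup_right) le_sup_left
  have hle' : scalar p * M ≤ scalar p * quadSpan M := mul_le_mul' le_rfl le_sup_left
  have hmul := addRelIndex_mul_addRelIndex (le_inf hpM hle')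
    (inf_le_right : T ⊓ scalar p * quadSpan M ≤ _)
  have hT' : addRelIndex T M = addRelIndex (T ⊓ scalar p * quadSpan M) (scalar p * quadSpan M) :=
    addRelIndex_of_mem_complementsBetween ⟨rfl, le_antisymm hsup hM'⟩
  rw [← hT', hT, addRelIndex_scalar_mul_scalar_mul, hindex] at hmul
  have hdvd : p ^ 2 ≤ p := Nat.le_of_dvd hp.pos (Dvd.intro_left _ hmul)
  exact hdvd.not_gt (by simpa using Nat.pow_lt_pow_right hp.one_lt one_lt_two)

lemma addRelIndex_quadSpan_of_mem_generatingFiber (hB : IsMulClosed B) (hpB : IsPLattice p B)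
    (hM : M ∈ generatingFiber p 1 B ∪ generatingFiber p 2 B) :
    scalar p * B ≤ M ∧ addRelIndex M (quadSpan M) = p := by
  rcases hM with hM | hM
  · rcases generatingFiber_cases hB hpB hM with h | ⟨-, hle, hquad⟩ | h | h
    · omega
    · exact ⟨hle, by rw [hquad, hM.2.2.1, pow_one]⟩
    · omega
    · omega
  · rw [generatingFiber_two hB hpB] at hM
    exact ⟨hM.scalar_mul_le, hM.addRelIndex_quadSpan hB hpB⟩

lemma nonclosedCount_of_mem_generatingFiber_one_or_two (hB : IsMulClosed B)
    (hpB : IsPLattice p B) (hM : M ∈ generatingFiber p 1 B ∪ generatingFiber p 2 B) :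
    nonclosedCount p (scalar p * M) = p ^ 2 := by
  obtain ⟨hle, hindex⟩ := addRelIndex_quadSpan_of_mem_generatingFiber hB hpB hM
  have hMB : M ≤ B := hM.elim (·.1) (·.1)
  exact nonclosedCount_scalar_mul_of_scalar_mul_le hB (hpB.scalar_mul.mono hle) hMB hle hindex

lemma generatingLineCount_of_mem_generatingFiber_one_or_two (hB : IsMulClosed B)
    (hpB : IsPLattice p B) (hM : M ∈ generatingFiber p 1 B ∪ generatingFiber p 2 B) :
    generatingLineCount p (scalar p * M) = 0 := by
  obtain ⟨-, hindex⟩ := addRelIndex_quadSpan_of_mem_generatingFiber hB hpB hM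
  exact generatingLineCount_scalar_mul_of_addRelIndex (hM.elim (·.2.1) (·.2.1)) hindex

end FiberCounts

section ThirdFiber

variable {R : Type*} [CommRing R] {p : ℕ} {B M V W : Submodule ℤ R}

lemma IsGeneratingLine.isScaledMulClosed_scalar_mul_quadSpan (h : IsGeneratingLine p B V)
    (hB : IsMulClosed B) : IsScaledMulClosed p (scalar p * quadSpan V) := by
  have hsq : scalar p * (quadSpan V * quadSpan V) ≤ quadSpan V :=
    (mul_le_mul' le_rfl (hB.mul_le (h.quadSpan_le hB) (h.quadSpan_le hB))).trans
      (h.scalar_mul_le.trans le_sup_left)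
  rw [IsScaledMulClosed, mul_assoc, mul_left_comm (quadSpan V)]
  exact mul_le_mul' le_rfl ((scalar_mul_le_self p _).trans hsq)

variable [Fact p.Prime] [IsCubicRing R]

lemma scalar_mul_quadSpan_le_of_not_le (hB : IsMulClosed B) (hpB : IsPLattice p B)
    (hV : IsGeneratingLine p B (M ⊔ scalar p * B))
    (hinf : M ⊓ scalar p * B = scalar p * quadSpan (M ⊔ scalar p * B)) (hWM : W ≤ M)
    (hW : IsPLattice p W) (hclosed : IsScaledMulClosed p W)
    (h : ¬ W ≤ scalar p * quadSpan (M ⊔ scalar p * B)) :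
    scalar p * quadSpan (M ⊔ scalar p * B) ≤ W := by
  refine hV.scalar_mul_quadSpan_le hB hpB hW hclosed ?_
  refine (eq_or_eq_of_addRelIndex_prime (hV.addRelIndex_scalar_mul hpB) le_sup_right
    (sup_le_sup_right hWM _)).resolve_left fun hsup => h ?_
  exact hinf ▸ le_inf hWM (sup_eq_right.1 hsup)

lemma nonclosedCount_of_mem_generatingFiber_three (hB : IsMulClosed B) (hpB : IsPLattice p B)
    (hM : M ∈ generatingFiber p 3 B) : nonclosedCount p (scalar p * M) = p ^ 2 + p := by
  have hpM : IsPLattice p M := hpB.of_addRelIndex hM.2.2.1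
  rw [generatingFiber_three hB hpB] at hM
  obtain ⟨hV, hinf⟩ := hM
  have hindex := hV.addRelIndex_of_inf_eq hpB rfl hinf
  set Q := scalar p * quadSpan (M ⊔ scalar p * B)
  have hQM : Q ≤ M := hinf ▸ inf_le_left
  have hQc : IsScaledMulClosed p Q := hV.isScaledMulClosed_scalar_mul_quadSpan hB
  have heq : {W | W ≤ M ∧ addRelIndex W M = p ∧ ¬ IsScaledMulClosed p W} =
      {W | W ≤ M ∧ addRelIndex W M = p} \ {Q} := by
    ext W
    constructor
    · rintro ⟨hWM, hW, hclosed⟩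
      exact ⟨⟨hWM, hW⟩, fun h => hclosed ((Set.mem_singleton_iff.1 h) ▸ hQc)⟩
    · rintro ⟨⟨hWM, hW⟩, hne⟩
      refine ⟨hWM, hW, fun hclosed => hne (Set.mem_singleton_iff.2 ?_)⟩
      have hpW : IsPLattice p W := hpM.of_addRelIndex (hW.trans (pow_one p).symm)
      by_cases hWQ : W ≤ Q
      · exact hpW.eq_of_addRelIndex_eq hWQ hQM (hW.trans hindex.symm)
      · have hQp : IsPLattice p Q := hpM.of_addRelIndex (hindex.trans (pow_one p).symm)
        exact (hQp.eq_of_addRelIndex_eq (scalar_mul_quadSpan_le_of_not_le hB hpB hV hinf hWM hpW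
          hclosed hWQ) hWM (hindex.trans hW.symm)).symm
  have hQ : Q ∈ {W | W ≤ M ∧ addRelIndex W M = p} := ⟨hQM, hindex⟩
  rw [nonclosedCount_scalar_mul, heq, Set.ncard_sdiff_singleton_of_mem hQ,
    hpM.ncard_setOf_addRelIndex_eq, Nat.add_sub_cancel]

lemma lines_eq_complementsBetween_quadSpan (hB : IsMulClosed B) (hpB : IsPLattice p B)
    (hpM : IsPLattice p M) (hM : IsScaledMulClosed p M)
    (hV : IsGeneratingLine p B (M ⊔ scalar p * B))
    (hinf : M ⊓ scalar p * B = scalar p * quadSpan (M ⊔ scalar p * B))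
    (hrel : addRelIndex (scalar p * M) (scalar p * quadSpan (M ⊔ scalar p * B)) = p ^ 2) :
    {T | scalar p * M ≤ T ∧ T ≤ M ∧ addRelIndex T M = p ^ 2 ∧ ScaledGenerates p T M} =
      complementsBetween (scalar p * M) (scalar p * quadSpan (M ⊔ scalar p * B)) M := by
  have hp : p.Prime := Fact.out
  have hindex := hV.addRelIndex_of_inf_eq hpB rfl hinf
  set Q := scalar p * quadSpan (M ⊔ scalar p * B)
  have hQM : Q ≤ M := hinf ▸ inf_le_left
  have hMQ : ¬ M ≤ Q := fun h =>
    hp.one_lt.ne' (hindex.symm.trans (addRelIndex_eq_one.2 h))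
  have hpMQ : scalar p * M ≤ Q := mul_le_mul' le_rfl (le_sup_left.trans le_sup_left)
  ext T
  constructor
  · rintro ⟨hpT, hTM, hT, hgen⟩
    have hpTindex : addRelIndex (scalar p * M) T = p := by
      have hmul := addRelIndex_mul_addRelIndex hpT hTM
      rw [hT, hpM.addRelIndex_scalar_mul_self_cubic, pow_succ' p 2] at hmul
      exact Nat.eq_of_mul_eq_mul_right (pow_pos hp.pos 2) hmul
    refine mem_complementsBetween_comm.2 (mem_complementsBetween_of_not_le hpMQ hQM hpT hTM
      hpTindex hindex fun hTQ => hMQ ?_)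
    exact hgen Q (hV.isScaledMulClosed_scalar_mul_quadSpan hB) hTQ
  · intro hT
    have hTM : T ≤ M := le_sup_left.trans hT.2.le
    have hTp : addRelIndex T M = p ^ 2 := (addRelIndex_of_mem_complementsBetween hT).trans hrel
    have hTQ : ¬ T ≤ Q := fun h => hMQ (hT.2.ge.trans (sup_le h le_rfl))
    refine ⟨hT.1.ge.trans inf_le_left, hTM, hTp, fun C hC hTC => ?_⟩
    have hQC : Q ≤ C ⊓ M := scalar_mul_quadSpan_le_of_not_le hB hpB hV hinf inf_le_right
      ((hpM.of_addRelIndex hTp).mono (le_inf hTC hTM)) (hC.inf hM)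
      fun h => hTQ ((le_inf hTC hTM).trans h)
    exact hT.2.ge.trans (sup_le hTC (hQC.trans inf_le_left))

lemma generatingLineCount_of_mem_generatingFiber_three (hB : IsMulClosed B)
    (hpB : IsPLattice p B) (hM : M ∈ generatingFiber p 3 B) :
    generatingLineCount p (scalar p * M) = p ^ 2 := by
  have hpM : IsPLattice p M := hpB.of_addRelIndex hM.2.2.1
  have hMc : IsScaledMulClosed p M := hM.2.1
  rw [generatingFiber_three hB hpB] at hM
  obtain ⟨hV, hinf⟩ := hM
  have hindex := hV.addRelIndex_of_inf_eq hpB rfl hinf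
  have hle : scalar p * M ≤ scalar p * quadSpan (M ⊔ scalar p * B) :=
    mul_le_mul' le_rfl (le_sup_left.trans le_sup_left)
  have hQM : scalar p * quadSpan (M ⊔ scalar p * B) ≤ M := hinf ▸ inf_le_left
  have hrel : addRelIndex (scalar p * M) (scalar p * quadSpan (M ⊔ scalar p * B)) = p ^ 2 := by
    have hmul := addRelIndex_mul_addRelIndex hle hQM
    rw [hindex, hpM.addRelIndex_scalar_mul_self_cubic, pow_succ p 2] at hmul
    exact Nat.eq_of_mul_eq_mul_right (NeZero.pos p) hmul
  rw [generatingLineCount_scalar_mul,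
    lines_eq_complementsBetween_quadSpan hB hpB hpM hMc hV hinf hrel,
    ncard_complementsBetween (p := p) (j := 1) hle hQM (scalar_mul_le_iff.1 le_rfl) hrel
      (hindex.trans (pow_one p).symm), mul_one]

end ThirdFiber

end SubringZeta

namespace SubringZeta

open Submodule PowerSeries

section LatticeSeries

variable {R : Type*} [CommRing R] {p k : ℕ} {s t : Set (Submodule ℤ R)}
  {v w : Submodule ℤ R → ℚ}

/-- The generating series of the members of `s` of index a power of `p`, weighted by `w`. -/
noncomputable def latticeSeries (p : ℕ) (s : Set (Submodule ℤ R)) (w : Submodule ℤ R → ℚ) : ℚ⟦X⟧ :=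
  mk fun n => ∑ᶠ M ∈ s ∩ {M | addIndex M = p ^ n}, w M

lemma coeff_latticeSeries (n : ℕ) :
    coeff n (latticeSeries p s w) = ∑ᶠ M ∈ s ∩ {M | addIndex M = p ^ n}, w M :=
  coeff_mk _ _

lemma latticeSeries_congr (h : ∀ M ∈ s, w M = v M) : latticeSeries p s w = latticeSeries p s v := by
  ext n
  simp only [coeff_latticeSeries]
  exact finsum_mem_congr rfl fun M hM => h M hM.1

lemma latticeSeries_const_mul (c : ℚ) :
    latticeSeries p s (fun M => c * w M) = C c * latticeSeries p s w := by
  ext n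
  simp only [coeff_C_mul, coeff_latticeSeries, mul_finsum_mem]

variable [Fact p.Prime] [Module.Free ℤ R] [Module.Finite ℤ R]

lemma finite_inter_setOf_addIndex_eq (s : Set (Submodule ℤ R)) (n : ℕ) :
    (s ∩ {M | addIndex M = p ^ n}).Finite :=
  (finite_setOf_addIndex_eq (pow_ne_zero n (NeZero.ne p))).inter_of_right s

lemma latticeSeries_union (h : Disjoint s t) :
    latticeSeries p (s ∪ t) w = latticeSeries p s w + latticeSeries p t w := by
  ext n
  simp only [map_add, coeff_latticeSeries, Set.union_inter_distrib_right]
  exact finsum_mem_union (h.mono Set.inter_subset_left Set.inter_subset_left)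
    (finite_inter_setOf_addIndex_eq s n) (finite_inter_setOf_addIndex_eq t n)

lemma latticeSeries_biUnion_finset {ι : Type*} (I : Finset ι) {s : ι → Set (Submodule ℤ R)}
    (h : (I : Set ι).PairwiseDisjoint s) :
    latticeSeries p (⋃ i ∈ (I : Set ι), s i) w = ∑ i ∈ I, latticeSeries p (s i) w := by
  ext n
  simp only [map_sum, coeff_latticeSeries, Set.iUnion₂_inter]
  rw [finsum_mem_biUnion (h.mono fun i => Set.inter_subset_left) I.finite_toSet
    fun i _ => finite_inter_setOf_addIndex_eq (s i) n, finsum_mem_coe_finset]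

lemma latticeSeries_biUnion {f : Submodule ℤ R → Set (Submodule ℤ R)}
    (hs : ∀ B ∈ s, IsPLattice p B) (hdisj : s.PairwiseDisjoint f)
    (hle : ∀ B ∈ s, ∀ M ∈ f B, M ≤ B) (hindex : ∀ B ∈ s, ∀ M ∈ f B, addRelIndex M B = p ^ k) :
    latticeSeries p (⋃ B ∈ s, f B) w =
      X ^ k * latticeSeries p s (fun B => ∑ᶠ M ∈ f B, w M) := by
  have haddIndex : ∀ B ∈ s, ∀ M ∈ f B, addIndex M = p ^ k * addIndex B := fun B hB M hM => by
    rw [← hindex B hB M hM, addRelIndex_mul_addIndex (hle B hB M hM)]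
  ext n
  rw [coeff_X_pow_mul', coeff_latticeSeries]
  split_ifs with hkn
  · have hset : (⋃ B ∈ s, f B) ∩ {M | addIndex M = p ^ n} =
        ⋃ B ∈ s ∩ {B | addIndex B = p ^ (n - k)}, f B := by
      ext M
      have hiff : ∀ B ∈ s, M ∈ f B → (addIndex M = p ^ n ↔ addIndex B = p ^ (n - k)) :=
        fun B hB hM => by
          rw [haddIndex B hB M hM, ← pow_mul_pow_sub p hkn,
            mul_right_inj' (pow_ne_zero k (NeZero.ne p))]
      simp only [Set.mem_inter_iff, Set.mem_iUnion, Set.mem_ofPred_eq, exists_prop]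
      constructor
      · rintro ⟨⟨B, hB, hM⟩, hn⟩
        exact ⟨B, ⟨hB, (hiff B hB hM).1 hn⟩, hM⟩
      · rintro ⟨B, ⟨hB, hn⟩, hM⟩
        exact ⟨⟨B, hB, hM⟩, (hiff B hB hM).2 hn⟩
    rw [hset, finsum_mem_biUnion (hdisj.subset Set.inter_subset_left)
      (finite_inter_setOf_addIndex_eq s _), coeff_latticeSeries]
    exact fun B hB => ((hs B hB.1).finite_setOf_addRelIndex_eq k).subset fun M hM =>
      ⟨hle B hB.1 M hM, hindex B hB.1 M hM⟩
  · refine (finsum_mem_congr (Set.eq_empty_of_forall_notMem ?_) fun _ _ => rfl).trans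
      finsum_mem_empty
    rintro M ⟨hM, hn : addIndex M = p ^ n⟩
    obtain ⟨B, hB, hM⟩ := Set.mem_iUnion₂.1 hM
    exact hkn ((Nat.pow_dvd_pow_iff_le_right (Fact.out : p.Prime).one_lt).1
      (Dvd.intro _ ((haddIndex B hB M hM).symm.trans hn)))

end LatticeSeries

section Decomposition

variable {R : Type*} [CommRing R] {p k : ℕ} {B M : Submodule ℤ R} {w : Submodule ℤ R → ℚ}

/-- The `p`-lattices that are subrings. -/
def subringLattices (R : Type*) [CommRing R] (p : ℕ) : Set (Submodule ℤ R) :=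
  {M | IsPLattice p M ∧ IsMulClosed M}

/-- The `p`-lattices `M` for which `pM` is a subring. -/
def scaledSubringLattices (R : Type*) [CommRing R] (p : ℕ) : Set (Submodule ℤ R) :=
  {M | IsPLattice p M ∧ IsScaledMulClosed p M}

/-- The `p`-lattices that are subrings and not contained in `pR`. -/
def primitiveSubringLattices (R : Type*) [CommRing R] (p : ℕ) : Set (Submodule ℤ R) :=
  {M ∈ subringLattices R p | ¬ M ≤ scalar p * ⊤}

lemma pairwiseDisjoint_generatingFiber :
    (subringLattices R p).PairwiseDisjoint (generatingFiber p k) := by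
  refine fun B hB C hC hBC => Set.disjoint_left.2 fun M hMB hMC => hBC ?_
  exact le_antisymm (hMB.2.2.2 C hC.2 hMC.1) (hMC.2.2.2 B hB.2 hMB.1)

lemma finsum_mem_eq_ncard_mul {α : Type*} {s : Set α} {f : α → ℚ} {c : ℚ}
    (hs : s.Finite) (h : ∀ x ∈ s, f x = c) : ∑ᶠ x ∈ s, f x = c * s.ncard := by
  rw [← finsum_one, Nat.cast_finsum_mem hs, mul_finsum_mem]
  exact finsum_mem_congr rfl fun x hx => by rw [h x hx, Nat.cast_one, mul_one]

variable [Fact p.Prime]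

lemma pairwiseDisjoint_iUnion_generatingFiber (s : Set ℕ) :
    s.PairwiseDisjoint fun k => ⋃ B ∈ subringLattices R p, generatingFiber p k B := by
  refine fun i _ j _ hij => Set.disjoint_left.2 fun M hi hj => hij ?_
  obtain ⟨B, hB, hMB⟩ := Set.mem_iUnion₂.1 hi
  obtain ⟨C, hC, hMC⟩ := Set.mem_iUnion₂.1 hj
  obtain rfl : B = C := le_antisymm (hMB.2.2.2 C hC.2 hMC.1) (hMC.2.2.2 B hB.2 hMB.1)
  exact Nat.pow_right_injective (Fact.out : p.Prime).two_le (hMB.2.2.1.symm.trans hMC.2.2.1)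

variable [IsCubicRing R]

lemma subringLattices_eq : subringLattices R p = primitiveSubringLattices R p ∪
    ⋃ M ∈ scaledSubringLattices R p, {scalar p * M} := by
  ext N
  simp only [Set.mem_union, Set.mem_iUnion₂, Set.mem_singleton_iff]
  constructor
  · intro hN
    by_cases hle : N ≤ scalar p * ⊤
    · obtain ⟨M, rfl⟩ := exists_eq_scalar_mul hle
      exact .inr ⟨M, ⟨hN.1.mono (scalar_mul_le_self p M), isMulClosed_scalar_mul.1 hN.2⟩, rfl⟩
    · exact .inl ⟨hN, hle⟩
  · rintro (hN | ⟨M, hM, rfl⟩)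
    · exact hN.1
    · exact ⟨hM.1.scalar_mul, isMulClosed_scalar_mul.2 hM.2⟩

lemma exists_mem_generatingFiber (hM : M ∈ scaledSubringLattices R p) :
    ∃ B ∈ subringLattices R p, ∃ k < 4, M ∈ generatingFiber p k B := by
  obtain ⟨B, hB⟩ : ∃ B, B = sInf {C | IsMulClosed C ∧ M ≤ C} := ⟨_, rfl⟩
  have hBC : ∀ C, IsMulClosed C → M ≤ C → B ≤ C := fun C hC hMC => hB ▸ sInf_le ⟨hC, hMC⟩
  have hMB : M ≤ B := hB ▸ le_sInf fun C hC => hC.2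
  have hclosed : IsMulClosed B :=
    le_of_le_of_eq (le_sInf fun C hC => hC.1.mul_le (hBC C hC.1 hC.2) (hBC C hC.1 hC.2)) hB.symm
  have hpB : IsPLattice p B := hM.1.mono hMB
  obtain ⟨k, hk⟩ := hM.1.exists_addRelIndex_eq hMB
  have hmem : M ∈ generatingFiber p k B := ⟨hMB, hM.2, hk, hBC⟩
  refine ⟨B, ⟨hpB, hclosed⟩, k, not_le.1 fun h4 => ?_, hmem⟩
  rwa [generatingFiber_eq_empty hclosed hpB h4] at hmem

lemma scaledSubringLattices_eq : scaledSubringLattices R p =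
    ⋃ k ∈ (Finset.range 4 : Set ℕ), ⋃ B ∈ subringLattices R p, generatingFiber p k B := by
  ext M
  simp only [Set.mem_iUnion, Finset.coe_range, Set.mem_Iio, exists_prop]
  constructor
  · intro hM
    obtain ⟨B, hB, k, hk, hMB⟩ := exists_mem_generatingFiber hM
    exact ⟨k, hk, B, hB, hMB⟩
  · rintro ⟨k, -, B, hB, hM⟩
    exact ⟨hB.1.of_addRelIndex hM.2.2.1, hM.2.1⟩

lemma latticeSeries_scaledSubringLattices : latticeSeries p (scaledSubringLattices R p) w =
    ∑ k ∈ Finset.range 4, X ^ k *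
      latticeSeries p (subringLattices R p) fun B => ∑ᶠ M ∈ generatingFiber p k B, w M := by
  rw [scaledSubringLattices_eq,
    latticeSeries_biUnion_finset _ (pairwiseDisjoint_iUnion_generatingFiber _)]
  exact Finset.sum_congr rfl fun k _ => latticeSeries_biUnion (fun B hB => hB.1)
    pairwiseDisjoint_generatingFiber (fun B _ M hM => hM.1) fun B _ M hM => hM.2.2.1

lemma latticeSeries_subringLattices : latticeSeries p (subringLattices R p) w =
    latticeSeries p (primitiveSubringLattices R p) w +
      X ^ 3 * latticeSeries p (scaledSubringLattices R p) fun M => w (scalar p * M) := by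
  rw [subringLattices_eq, latticeSeries_union, latticeSeries_biUnion (k := 3)]
  · simp only [finsum_mem_singleton]
  · exact fun M hM => hM.1
  · exact fun M _ N _ hMN => Set.disjoint_singleton.2 fun h =>
      hMN (scalar_mul_injective (n := p) h)
  · rintro M - _ rfl
    exact scalar_mul_le_self p M
  · rintro M hM _ rfl
    exact hM.1.addRelIndex_scalar_mul_self_cubic
  · refine Set.disjoint_left.2 fun N hN hmem => hN.2 ?_
    obtain ⟨M, -, rfl⟩ := Set.mem_iUnion₂.1 hmem
    exact mul_le_mul' le_rfl le_top

lemma latticeSeries_subringLattices_of_const {a b c : ℕ}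
    (ha : ∀ B ∈ subringLattices R p, w (scalar p * B) = a)
    (hb : ∀ B ∈ subringLattices R p, ∀ M ∈ generatingFiber p 1 B ∪ generatingFiber p 2 B,
      w (scalar p * M) = b)
    (hc : ∀ B ∈ subringLattices R p, ∀ M ∈ generatingFiber p 3 B, w (scalar p * M) = c) :
    latticeSeries p (subringLattices R p) w =
      latticeSeries p (primitiveSubringLattices R p) w + X ^ 3 *
        ((a : ℚ⟦X⟧) * latticeSeries p (subringLattices R p) (fun _ => 1) +
          (b : ℚ⟦X⟧) * X *
            latticeSeries p (subringLattices R p) (fun B => (nonclosedCount p B : ℚ)) +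
          ((b : ℚ⟦X⟧) * X ^ 2 + (c : ℚ⟦X⟧) * (p : ℚ⟦X⟧) * X ^ 3) *
            latticeSeries p (subringLattices R p) fun B => (generatingLineCount p B : ℚ)) := by
  have h0 : ∀ B ∈ subringLattices R p,
      ∑ᶠ M ∈ generatingFiber p 0 B, w (scalar p * M) = a * 1 := fun B hB => by
    rw [generatingFiber_zero hB.2, finsum_mem_singleton, ha B hB, mul_one]
  have h1 : ∀ B ∈ subringLattices R p, ∑ᶠ M ∈ generatingFiber p 1 B, w (scalar p * M) =
      b * nonclosedCount p B := fun B hB => by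
    rw [finsum_mem_eq_ncard_mul (finite_generatingFiber hB.1 1) fun M hM => hb B hB M (.inl hM),
      ncard_generatingFiber_one hB.2]
  have h2 : ∀ B ∈ subringLattices R p, ∑ᶠ M ∈ generatingFiber p 2 B, w (scalar p * M) =
      b * generatingLineCount p B := fun B hB => by
    rw [finsum_mem_eq_ncard_mul (finite_generatingFiber hB.1 2) fun M hM => hb B hB M (.inr hM),
      ncard_generatingFiber_two hB.2 hB.1]
  have h3 : ∀ B ∈ subringLattices R p, ∑ᶠ M ∈ generatingFiber p 3 B, w (scalar p * M) =
      c * p * generatingLineCount p B := fun B hB => by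
    rw [finsum_mem_eq_ncard_mul (finite_generatingFiber hB.1 3) (hc B hB),
      ncard_generatingFiber_three hB.2 hB.1, Nat.cast_mul, mul_assoc]
  rw [latticeSeries_subringLattices, latticeSeries_scaledSubringLattices, Finset.sum_range_succ,
    Finset.sum_range_succ, Finset.sum_range_succ, Finset.sum_range_one, latticeSeries_congr h0,
    latticeSeries_congr h1, latticeSeries_congr h2, latticeSeries_congr h3]
  simp only [latticeSeries_const_mul, map_mul, map_natCast]
  ring

lemma latticeSeries_one_recursion :
    latticeSeries p (subringLattices R p) (fun _ => 1) =
      latticeSeries p (primitiveSubringLattices R p) (fun _ => 1) + X ^ 3 *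
        (latticeSeries p (subringLattices R p) (fun _ => 1) +
          X * latticeSeries p (subringLattices R p) (fun B => (nonclosedCount p B : ℚ)) +
          (X ^ 2 + (p : ℚ⟦X⟧) * X ^ 3) *
            latticeSeries p (subringLattices R p) fun B => (generatingLineCount p B : ℚ)) := by
  simpa only [Nat.cast_one, one_mul] using latticeSeries_subringLattices_of_const (R := R) (p := p)
    (w := fun _ => 1) (a := 1) (b := 1) (c := 1) (fun _ _ => Nat.cast_one.symm)
    (fun _ _ _ _ => Nat.cast_one.symm) fun _ _ _ _ => Nat.cast_one.symm

lemma latticeSeries_nonclosedCount_recursion :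
    latticeSeries p (subringLattices R p) (fun B => (nonclosedCount p B : ℚ)) =
      latticeSeries p (primitiveSubringLattices R p) (fun B => (nonclosedCount p B : ℚ)) + X ^ 3 *
        ((p : ℚ⟦X⟧) ^ 2 * X *
            latticeSeries p (subringLattices R p) (fun B => (nonclosedCount p B : ℚ)) +
          ((p : ℚ⟦X⟧) ^ 2 * X ^ 2 + ((p : ℚ⟦X⟧) ^ 2 + (p : ℚ⟦X⟧)) * (p : ℚ⟦X⟧) * X ^ 3) *
            latticeSeries p (subringLattices R p) fun B => (generatingLineCount p B : ℚ)) := by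
  have h := latticeSeries_subringLattices_of_const (R := R) (p := p)
    (w := fun B => (nonclosedCount p B : ℚ)) (a := 0) (b := p ^ 2) (c := p ^ 2 + p)
    (fun B hB => congrArg _ (nonclosedCount_scalar_mul_self hB.2))
    (fun B hB M hM => congrArg _ (nonclosedCount_of_mem_generatingFiber_one_or_two hB.2 hB.1 hM))
    fun B hB M hM => congrArg _ (nonclosedCount_of_mem_generatingFiber_three hB.2 hB.1 hM)
  simpa only [Nat.cast_zero, zero_mul, zero_add, Nat.cast_add, Nat.cast_pow] using h

lemma latticeSeries_generatingLineCount_recursion :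
    latticeSeries p (subringLattices R p) (fun B => (generatingLineCount p B : ℚ)) =
      latticeSeries p (primitiveSubringLattices R p) (fun B => (generatingLineCount p B : ℚ)) +
        X ^ 3 * ((p : ℚ⟦X⟧) ^ 2 * (p : ℚ⟦X⟧) * X ^ 3 *
          latticeSeries p (subringLattices R p) fun B => (generatingLineCount p B : ℚ)) := by
  have h := latticeSeries_subringLattices_of_const (R := R) (p := p)
    (w := fun B => (generatingLineCount p B : ℚ)) (a := 0) (b := 0) (c := p ^ 2)
    (fun B hB => congrArg _ (generatingLineCount_scalar_mul_self hB.2))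
    (fun B hB M hM =>
      congrArg _ (generatingLineCount_of_mem_generatingFiber_one_or_two hB.2 hB.1 hM))
    fun B hB M hM => congrArg _ (generatingLineCount_of_mem_generatingFiber_three hB.2 hB.1 hM)
  simpa only [Nat.cast_zero, zero_mul, zero_add, Nat.cast_pow] using h

lemma latticeSeries_subringLattices_one_mul :
    latticeSeries p (subringLattices R p) (fun _ => 1) *
        ((1 - X ^ 3) * (1 - (p : ℚ⟦X⟧) ^ 2 * X ^ 4) * (1 - (p : ℚ⟦X⟧) ^ 3 * X ^ 6)) =
      (1 - (p : ℚ⟦X⟧) ^ 2 * X ^ 4) * (1 - (p : ℚ⟦X⟧) ^ 3 * X ^ 6) *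
          latticeSeries p (primitiveSubringLattices R p) (fun _ => 1) +
        X ^ 4 * (1 - (p : ℚ⟦X⟧) ^ 3 * X ^ 6) *
          latticeSeries p (primitiveSubringLattices R p) (fun B => (nonclosedCount p B : ℚ)) +
        (X ^ 5 + (p : ℚ⟦X⟧) * X ^ 6 + (p : ℚ⟦X⟧) ^ 2 * X ^ 10) *
          latticeSeries p (primitiveSubringLattices R p)
            fun B => (generatingLineCount p B : ℚ) := by
  linear_combination
    (1 - (p : ℚ⟦X⟧) ^ 2 * X ^ 4) * (1 - (p : ℚ⟦X⟧) ^ 3 * X ^ 6) *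
        latticeSeries_one_recursion (R := R) (p := p) +
      X ^ 4 * (1 - (p : ℚ⟦X⟧) ^ 3 * X ^ 6) *
        latticeSeries_nonclosedCount_recursion (R := R) (p := p) +
      (X ^ 5 + (p : ℚ⟦X⟧) * X ^ 6 + (p : ℚ⟦X⟧) ^ 2 * X ^ 10) *
        latticeSeries_generatingLineCount_recursion (R := R) (p := p)

end Decomposition

end SubringZeta

namespace SubringZeta

open Submodule

section ReducedMultiplication

variable {K : Type*} [Field K]

/-- The subspace `U` is closed under the product `μ`. -/
def IsClosedUnder (μ : (Fin 3 → K) → (Fin 3 → K) → Fin 3 → K) (U : Submodule K (Fin 3 → K)) :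
    Prop :=
  ∀ u ∈ U, ∀ v ∈ U, μ u v ∈ U

/-- The vector `x` lies in no proper subspace closed under the product `μ`. -/
def IsGeneratingVec (μ : (Fin 3 → K) → (Fin 3 → K) → Fin 3 → K) (x : Fin 3 → K) : Prop :=
  ∀ U, IsClosedUnder μ U → x ∈ U → U = ⊤

lemma vecPlane_ne_top (x : PlanePoint K) : vecPlane x ≠ ⊤ := fun h => by
  have hfinrank := finrank_vecPlane x
  rw [h, finrank_top, Module.finrank_fin_fun] at hfinrank
  omega

variable {μ : (Fin 3 → K) → (Fin 3 → K) → Fin 3 → K} {x : Fin 3 → K}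

lemma IsGeneratingVec.notMem_vecPlane (hx : IsGeneratingVec μ x) {y : PlanePoint K}
    (hy : IsClosedUnder μ (vecPlane y)) : x ∉ vecPlane y :=
  fun hxy => vecPlane_ne_top y (hx _ hy hxy)

lemma isGeneratingVec_of_det_ne_zero (h : (Matrix.of ![x, μ x x, μ x (μ x x)]).det ≠ 0) :
    IsGeneratingVec μ x := by
  intro U hU hx
  rw [eq_top_iff, ← (Matrix.linearIndependent_rows_of_det_ne_zero h).span_eq_top_of_card_eq_finrank'
    (by simp), span_le]
  rintro _ ⟨i, rfl⟩
  fin_cases i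
  exacts [hx, hU _ hx _ hx, hU _ hx _ (hU _ hx _ hx)]

variable {R : Type*} [CommRing R] {p : ℕ} {S : Submodule ℤ R}

/-- Some reduction modulo `p` turns the multiplication of the subring `S` into the product `μ` up to
a twist `(u, v) ↦ l(u) v + l(v) u`. Such a twist is invisible to linear subspaces, so `μ` determines
which lattices between `pS` and `S` are subrings. -/
def HasReducedMul (p : ℕ) (S : Submodule ℤ R)
    (μ : (Fin 3 → ZMod p) → (Fin 3 → ZMod p) → Fin 3 → ZMod p) : Prop :=
  ∃ (f : S →ₗ[ℤ] (Fin 3 → ZMod p)) (l : (Fin 3 → ZMod p) → ZMod p), IsReduction p S f ∧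
    ∀ s t : S, ∃ h : (s * t : R) ∈ S, f ⟨s * t, h⟩ = μ (f s) (f t) + l (f s) • f t + l (f t) • f s

variable [Fact p.Prime] {f : S →ₗ[ℤ] (Fin 3 → ZMod p)}
  {μ : (Fin 3 → ZMod p) → (Fin 3 → ZMod p) → Fin 3 → ZMod p} {l : (Fin 3 → ZMod p) → ZMod p}

lemma isMulClosed_comapLattice (hf : Function.Surjective f)
    (h : ∀ s t : S, ∃ h : (s * t : R) ∈ S,
      f ⟨s * t, h⟩ = μ (f s) (f t) + l (f s) • f t + l (f t) • f s)
    (U : Submodule (ZMod p) (Fin 3 → ZMod p)) :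
    IsMulClosed (comapLattice f U) ↔ IsClosedUnder μ U := by
  have hmem : ∀ u ∈ U, ∀ v ∈ U, (μ u v + l u • v + l v • u ∈ U ↔ μ u v ∈ U) := fun u hu v hv => by
    rw [add_assoc, U.add_mem_iff_left (U.add_mem (U.smul_mem _ hv) (U.smul_mem _ hu))]
  constructor
  · intro hc u hu v hv
    obtain ⟨s, rfl⟩ := hf u
    obtain ⟨t, rfl⟩ := hf v
    obtain ⟨hst, hfst⟩ := h s t
    obtain ⟨_, hst'⟩ := mem_comapLattice.1
      (hc (mul_mem_mul (mem_comapLattice.2 ⟨s.2, hu⟩) (mem_comapLattice.2 ⟨t.2, hv⟩)))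
    rwa [hfst, hmem _ hu _ hv] at hst'
  · intro hc
    refine Submodule.mul_le.2 fun s hs t ht => ?_
    obtain ⟨hs, hu⟩ := mem_comapLattice.1 hs
    obtain ⟨ht, hv⟩ := mem_comapLattice.1 ht
    obtain ⟨hst, hfst⟩ := h ⟨s, hs⟩ ⟨t, ht⟩
    exact mem_comapLattice.2 ⟨hst, by rw [hfst, hmem _ hu _ hv]; exact hc _ hu _ hv⟩

lemma generates_comapLattice_vecLine (hf : IsReduction p S f)
    (h : ∀ s t : S, ∃ h : (s * t : R) ∈ S,
      f ⟨s * t, h⟩ = μ (f s) (f t) + l (f s) • f t + l (f t) • f s)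
    (x : PlanePoint (ZMod p)) :
    Generates (comapLattice f (vecLine x)) S ↔ IsGeneratingVec μ x.toVec := by
  have hsurj := hf.surjective
  constructor
  · intro hg U hU hx
    refine comapLattice_injective hsurj (le_antisymm ?_ ?_)
    · exact (comapLattice_le_comapLattice hsurj).2 le_top
    · rw [comapLattice_top]
      exact hg _ ((isMulClosed_comapLattice hsurj h U).2 hU)
        ((comapLattice_le_comapLattice hsurj).2 ((span_singleton_le_iff_mem _ _).2 hx))
  · intro hg C hC hle
    have hS : IsMulClosed S := Submodule.mul_le.2 fun s hs t ht => (h ⟨s, hs⟩ ⟨t, ht⟩).1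
    obtain ⟨U, hU⟩ := exists_comapLattice_eq (f := f) (W := C ⊓ S)
      (((comapLattice_le_comapLattice hsurj).2 bot_le).trans (le_inf hle (comapLattice_le f _)))
      inf_le_right
    have hclosed : IsClosedUnder μ U :=
      (isMulClosed_comapLattice hsurj h U).1 (hU ▸ hC.inf hS)
    have hline : vecLine x ≤ U :=
      (comapLattice_le_comapLattice hsurj).1 (hU ▸ le_inf hle (comapLattice_le f _))
    rw [hg U hclosed (hline (mem_span_singleton_self _)), comapLattice_top] at hU
    exact inf_eq_right.1 hU.symm

lemma HasReducedMul.nonclosedCount_add_card (h : HasReducedMul p S μ) :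
    nonclosedCount p S + Nat.card {x : PlanePoint (ZMod p) // IsClosedUnder μ (vecPlane x)} =
      p ^ 2 + p + 1 := by
  obtain ⟨f, l, hf, h⟩ := h
  rw [nonclosedCount, hf.ncard_planes, add_comm, ← card_planePoint p]
  simp only [isMulClosed_comapLattice hf.surjective h]
  classical
  rw [← Nat.card_sum, Nat.card_congr (Equiv.sumCompl _)]

lemma HasReducedMul.generatingLineCount_eq (h : HasReducedMul p S μ) :
    generatingLineCount p S =
      Nat.card {x : PlanePoint (ZMod p) // IsGeneratingVec μ x.toVec} := by
  obtain ⟨f, l, hf, h⟩ := h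
  simp only [← generates_comapLattice_vecLine hf h, ← hf.ncard_lines fun T => Generates T S]
  rw [generatingLineCount]
  congr 1
  ext T
  exact ⟨fun hT => ⟨hT.1, hT.2, hT.3, hT.4⟩, fun ⟨h1, h2, h3, h4⟩ => ⟨h1, h2, h3, h4⟩⟩

end ReducedMultiplication

section NormalForms

variable {K : Type*} [Field K] {k a r b m n : K}

/-- The products on `K³` that occur, up to a twist, as reductions of primitive subrings of `ℤ³`.
The parameters `(k, a, r, b)` will be `(0, 1, 0, 1)` (the split product `K × K × K`),
`(0, 1, 0, 0)`, `(1, 0, 0, 0)`, `(0, 0, r, 0)` with `r ≠ 0`, or `(0, 0, 0, 0)`. -/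
def normalMul (k a r b : K) (u v : Fin 3 → K) : Fin 3 → K :=
  ![u 0 * v 0, k * (u 0 * v 1 + u 1 * v 0) + a * (u 1 * v 1), r * (u 1 * v 1) + b * (u 2 * v 2)]

lemma isClosedUnder_vecPlane_inl : IsClosedUnder (normalMul k a r b) (vecPlane (.inl (m, n))) ↔
    m ^ 2 - 2 * k * m ^ 2 + a * m + r * n = 0 ∧ m * n - k * m * n = 0 ∧ n ^ 2 + b * n = 0 := by
  simp only [IsClosedUnder, mem_vecPlane, PlanePoint.toVec, normalMul, Matrix.cons_val_zero,
    Matrix.cons_val_one, Matrix.cons_val, one_mul]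
  constructor
  · intro h
    have h11 := h ![-m, 1, 0] (by simp) ![-m, 1, 0] (by simp)
    have h12 := h ![-m, 1, 0] (by simp) ![-n, 0, 1] (by simp)
    have h22 := h ![-n, 0, 1] (by simp) ![-n, 0, 1] (by simp)
    simp only [Matrix.cons_val_zero, Matrix.cons_val_one, Matrix.cons_val] at h11 h12 h22
    exact ⟨by linear_combination h11, by linear_combination h12, by linear_combination h22⟩
  · rintro ⟨h11, h12, h22⟩ u hu v hv
    rw [show u 0 = -m * u 1 - n * u 2 by linear_combination hu,
      show v 0 = -m * v 1 - n * v 2 by linear_combination hv]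
    linear_combination u 1 * v 1 * h11 + (u 1 * v 2 + u 2 * v 1) * h12 + u 2 * v 2 * h22

lemma isClosedUnder_vecPlane_inr_inl :
    IsClosedUnder (normalMul k a r b) (vecPlane (.inr (.inl n))) ↔
      k * n = 0 ∧ a * n ^ 2 + r * n ^ 3 + b * n = 0 := by
  simp only [IsClosedUnder, mem_vecPlane, PlanePoint.toVec, normalMul, Matrix.cons_val_zero,
    Matrix.cons_val_one, Matrix.cons_val, zero_mul, zero_add, one_mul]
  constructor
  · intro h
    have h01 := h ![1, 0, 0] (by simp) ![0, -n, 1] (by simp)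
    have h11 := h ![0, -n, 1] (by simp) ![0, -n, 1] (by simp)
    simp only [Matrix.cons_val_zero, Matrix.cons_val_one, Matrix.cons_val] at h01 h11
    exact ⟨by linear_combination -h01, by linear_combination h11⟩
  · rintro ⟨h01, h11⟩ u hu v hv
    rw [show u 1 = -n * u 2 by linear_combination hu, show v 1 = -n * v 2 by linear_combination hv]
    linear_combination -(u 0 * v 2 + u 2 * v 0) * h01 + u 2 * v 2 * h11

lemma isClosedUnder_vecPlane_inr_inr {q : Unit} :
    IsClosedUnder (normalMul k a r b) (vecPlane (.inr (.inr q))) ↔ r = 0 := by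
  simp only [IsClosedUnder, mem_vecPlane, PlanePoint.toVec, normalMul, Matrix.cons_val_zero,
    Matrix.cons_val_one, Matrix.cons_val, zero_mul, zero_add, one_mul]
  constructor
  · intro h
    simpa using h ![0, 1, 0] (by simp) ![0, 1, 0] (by simp)
  · rintro rfl u hu v _
    simp [hu]

lemma card_isClosedUnder_vecPlane [DecidableEq K] (E : Finset (K × K)) (F : Finset K)
    (hE : ∀ m n, (m, n) ∈ E ↔
      m ^ 2 - 2 * k * m ^ 2 + a * m + r * n = 0 ∧ m * n - k * m * n = 0 ∧ n ^ 2 + b * n = 0)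
    (hF : ∀ n, n ∈ F ↔ k * n = 0 ∧ a * n ^ 2 + r * n ^ 3 + b * n = 0) :
    Nat.card {x : PlanePoint K // IsClosedUnder (normalMul k a r b) (vecPlane x)} =
      E.card + (F.card + if r = 0 then 1 else 0) := by
  rw [Nat.subtype_card (E.disjSum (F.disjSum (if r = 0 then Finset.univ else ∅)))]
  · rw [Finset.card_disjSum, Finset.card_disjSum]
    split_ifs <;> simp
  · rintro (⟨m, n⟩ | n | q)
    · rw [Finset.inl_mem_disjSum, hE, isClosedUnder_vecPlane_inl]
    · rw [Finset.inr_mem_disjSum, Finset.inl_mem_disjSum, hF, isClosedUnder_vecPlane_inr_inl]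
    · rw [Finset.inr_mem_disjSum, Finset.inr_mem_disjSum, isClosedUnder_vecPlane_inr_inr]
      split_ifs with hr <;> simp [hr]

lemma not_isGeneratingVec_inr (x : K ⊕ Unit) :
    ¬ IsGeneratingVec (normalMul k a r b) (PlanePoint.toVec (.inr x)) := fun h =>
  h.notMem_vecPlane (y := .inl (0, 0)) (isClosedUnder_vecPlane_inl.2 (by simp)) <| by
    rcases x with n | q <;> simp [mem_vecPlane, PlanePoint.toVec]

lemma isGeneratingVec_inl_of_ne_zero
    (h : (2 * k * m + a * m ^ 2 - m) * (r * m * (2 * k * m + a * m ^ 2) +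
        b * n * (r * m ^ 2 + b * n ^ 2) - n) -
      (r * m ^ 2 + b * n ^ 2 - n) * (k * (2 * k * m + a * m ^ 2 + m) +
        a * m * (2 * k * m + a * m ^ 2) - m) ≠ 0) :
    IsGeneratingVec (normalMul k a r b) (PlanePoint.toVec (.inl (m, n))) := by
  refine isGeneratingVec_of_det_ne_zero ?_
  convert h using 1
  simp only [PlanePoint.toVec, normalMul, Matrix.det_fin_three, Matrix.of_apply,
    Matrix.cons_val_zero, Matrix.cons_val_one, Matrix.cons_val]
  ring

lemma isGeneratingVec_0101 :
    IsGeneratingVec (normalMul (0 : K) 1 0 1) (PlanePoint.toVec (.inl (m, n))) ↔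
      (m ≠ 0 ∧ m ≠ 1) ∧ n ≠ 0 ∧ n ≠ 1 ∧ n ≠ m := by
  constructor
  · intro h
    have h1 := h.notMem_vecPlane (y := .inr (.inl 0)) (isClosedUnder_vecPlane_inr_inl.2 (by simp))
    have h2 := h.notMem_vecPlane (y := .inl (-1, 0)) (isClosedUnder_vecPlane_inl.2 (by simp))
    have h3 := h.notMem_vecPlane (y := .inr (.inr ())) (isClosedUnder_vecPlane_inr_inr.2 rfl)
    have h4 := h.notMem_vecPlane (y := .inl (0, -1)) (isClosedUnder_vecPlane_inl.2 (by simp))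
    have h5 := h.notMem_vecPlane (y := .inr (.inl (-1)))
      (isClosedUnder_vecPlane_inr_inl.2 (by simp))
    simp only [mem_vecPlane, PlanePoint.toVec, Matrix.cons_val_zero, Matrix.cons_val_one,
      Matrix.cons_val] at h1 h2 h3 h4 h5
    grind
  · rintro ⟨⟨hm, hm'⟩, hn, hn', hnm⟩
    refine isGeneratingVec_inl_of_ne_zero ?_
    have := sub_ne_zero.2 hm'
    have := sub_ne_zero.2 hn'
    have := sub_ne_zero.2 hnm
    have vandermonde : m * (m - 1) * n * (n - 1) * (n - m) ≠ 0 := by positivity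
    convert vandermonde using 1
    ring

lemma isGeneratingVec_0100 :
    IsGeneratingVec (normalMul (0 : K) 1 0 0) (PlanePoint.toVec (.inl (m, n))) ↔
      (m ≠ 0 ∧ m ≠ 1) ∧ n ≠ 0 := by
  constructor
  · intro h
    have h1 := h.notMem_vecPlane (y := .inr (.inl 0)) (isClosedUnder_vecPlane_inr_inl.2 (by simp))
    have h2 := h.notMem_vecPlane (y := .inl (-1, 0)) (isClosedUnder_vecPlane_inl.2 (by simp))
    have h3 := h.notMem_vecPlane (y := .inr (.inr ())) (isClosedUnder_vecPlane_inr_inr.2 rfl)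
    simp only [mem_vecPlane, PlanePoint.toVec, Matrix.cons_val_zero, Matrix.cons_val_one,
      Matrix.cons_val] at h1 h2 h3
    grind
  · rintro ⟨⟨hm, hm'⟩, hn⟩
    refine isGeneratingVec_inl_of_ne_zero ?_
    have := sub_ne_zero.2 hm'
    have : m ^ 2 * (m - 1) * n ≠ 0 := by positivity
    convert this using 1
    ring

lemma isGeneratingVec_1000 :
    IsGeneratingVec (normalMul (1 : K) 0 0 0) (PlanePoint.toVec (.inl (m, n))) ↔
      m ≠ 0 ∧ n ≠ 0 := by
  constructor
  · intro h
    have h1 := h.notMem_vecPlane (y := .inr (.inl 0)) (isClosedUnder_vecPlane_inr_inl.2 (by simp))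
    have h2 := h.notMem_vecPlane (y := .inr (.inr ())) (isClosedUnder_vecPlane_inr_inr.2 rfl)
    simpa [mem_vecPlane, PlanePoint.toVec] using And.intro h1 h2
  · rintro ⟨hm, hn⟩
    refine isGeneratingVec_inl_of_ne_zero ?_
    have : m * n ≠ 0 := by positivity
    convert this using 1
    ring

lemma isGeneratingVec_00r0 (hr : r ≠ 0) :
    IsGeneratingVec (normalMul 0 0 r 0) (PlanePoint.toVec (.inl (m, n))) ↔ m ≠ 0 := by
  constructor
  · intro h
    have h1 := h.notMem_vecPlane (y := .inr (.inl 0)) (isClosedUnder_vecPlane_inr_inl.2 (by simp))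
    simpa [mem_vecPlane, PlanePoint.toVec] using h1
  · intro hm
    refine isGeneratingVec_inl_of_ne_zero ?_
    have : r * m ^ 3 ≠ 0 := by positivity
    convert this using 1
    ring

lemma not_isGeneratingVec_0000 :
    ¬ IsGeneratingVec (normalMul (0 : K) 0 0 0) (PlanePoint.toVec (.inl (m, n))) := by
  intro h
  by_cases hn : n = 0
  · exact h.notMem_vecPlane (y := .inr (.inr ())) (isClosedUnder_vecPlane_inr_inr.2 rfl)
      (by simp [mem_vecPlane, PlanePoint.toVec, hn])
  · exact h.notMem_vecPlane (y := .inr (.inl (-m / n)))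
      (isClosedUnder_vecPlane_inr_inl.2 (by simp)) (by simp [mem_vecPlane, PlanePoint.toVec, hn])

lemma card_isGeneratingVec [Fintype K] (E : Finset K) (F : K → Finset K) {d : ℕ}
    (hF : ∀ m ∉ E, (F m).card = d)
    (h : ∀ m n, IsGeneratingVec (normalMul k a r b) (PlanePoint.toVec (.inl (m, n))) ↔
      m ∉ E ∧ n ∉ F m) :
    (Nat.card {x : PlanePoint K // IsGeneratingVec (normalMul k a r b) x.toVec} : ℚ) =
      (Fintype.card K - E.card) * (Fintype.card K - d) := by
  classical
  rw [Nat.subtype_card ((Eᶜ.sigma fun m => (F m)ᶜ).map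
    ((Equiv.sigmaEquivProd K K).toEmbedding.trans .inl))]
  · have hcompl (G : Finset K) : (Gᶜ.card : ℚ) = Fintype.card K - G.card := by
      rw [Finset.card_compl, Nat.cast_sub (Finset.card_le_univ G)]
    rw [Finset.card_map, Finset.card_sigma, Nat.cast_sum, Finset.sum_congr rfl fun m hm => by
      rw [hcompl, hF m (Finset.mem_compl.1 hm)], Finset.sum_const, nsmul_eq_mul, hcompl]
  · rintro (⟨m, n⟩ | x)
    · simp [h]
    · simp [not_isGeneratingVec_inr x]

end NormalForms

section Statistics

variable {R : Type*} [CommRing R] {p : ℕ} [Fact p.Prime] {S : Submodule ℤ R} {r : ZMod p}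

lemma HasReducedMul.nonclosedCount_eq {k a r b : ZMod p} (h : HasReducedMul p S (normalMul k a r b))
    (E : Finset (ZMod p × ZMod p)) (F : Finset (ZMod p))
    (hE : ∀ m n, (m, n) ∈ E ↔
      m ^ 2 - 2 * k * m ^ 2 + a * m + r * n = 0 ∧ m * n - k * m * n = 0 ∧ n ^ 2 + b * n = 0)
    (hF : ∀ n, n ∈ F ↔ k * n = 0 ∧ a * n ^ 2 + r * n ^ 3 + b * n = 0) :
    (nonclosedCount p S : ℚ) =
      p ^ 2 + p + 1 - (E.card + (F.card + if r = 0 then 1 else 0)) := by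
  rw [eq_sub_iff_add_eq]
  exact_mod_cast card_isClosedUnder_vecPlane E F hE hF ▸ h.nonclosedCount_add_card

lemma nonclosedCount_0101 (h : HasReducedMul p S (normalMul 0 1 0 1)) :
    (nonclosedCount p S : ℚ) = p ^ 2 + p - 5 := by
  rw [h.nonclosedCount_eq {(0, 0), (-1, 0), (0, -1)} {0, -1} (by simp; grind) (by simp; grind),
    Finset.card_eq_three.2 ⟨_, _, _, by simp, by simp, by simp, rfl⟩, Finset.card_pair (by simp)]
  norm_num
  ring

lemma nonclosedCount_0100 (h : HasReducedMul p S (normalMul 0 1 0 0)) :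
    (nonclosedCount p S : ℚ) = p ^ 2 + p - 3 := by
  rw [h.nonclosedCount_eq {(0, 0), (-1, 0)} {0} (by simp; grind) (by simp),
    Finset.card_pair (by simp)]
  norm_num
  ring

lemma nonclosedCount_1000 (h : HasReducedMul p S (normalMul 1 0 0 0)) :
    (nonclosedCount p S : ℚ) = p ^ 2 + p - 2 := by
  rw [h.nonclosedCount_eq {(0, 0)} {0} (by simp; grind) (by simp)]
  norm_num
  ring

lemma nonclosedCount_00r0 (hr : r ≠ 0) (h : HasReducedMul p S (normalMul 0 0 r 0)) :
    (nonclosedCount p S : ℚ) = p ^ 2 + p - 1 := by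
  rw [h.nonclosedCount_eq {(0, 0)} {0} (by simp; grind) (by simp [hr])]
  norm_num [hr]
  ring

lemma nonclosedCount_0000 (h : HasReducedMul p S (normalMul 0 0 0 0)) :
    (nonclosedCount p S : ℚ) = p ^ 2 - 1 := by
  rw [h.nonclosedCount_eq {(0, 0)} Finset.univ (by simp) (by simp)]
  norm_num [ZMod.card]
  ring

lemma HasReducedMul.generatingLineCount_eq_mul {k a r b : ZMod p}
    (h : HasReducedMul p S (normalMul k a r b)) (E : Finset (ZMod p))
    (F : ZMod p → Finset (ZMod p)) {d : ℕ} (hF : ∀ m ∉ E, (F m).card = d)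
    (hgen : ∀ m n, IsGeneratingVec (normalMul k a r b) (PlanePoint.toVec (.inl (m, n))) ↔
      m ∉ E ∧ n ∉ F m) :
    (generatingLineCount p S : ℚ) = (p - E.card) * (p - d) := by
  rw [h.generatingLineCount_eq, card_isGeneratingVec E F hF hgen, ZMod.card]

lemma generatingLineCount_0101 (h : HasReducedMul p S (normalMul 0 1 0 1)) :
    (generatingLineCount p S : ℚ) = (p - 2) * (p - 3) := by
  rw [h.generatingLineCount_eq_mul {0, 1} (fun m => {0, 1, m}) (d := 3) _
    fun m n => by simp [isGeneratingVec_0101], Finset.card_pair (by simp)]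
  · norm_num
  · intro m hm
    simp only [Finset.mem_insert, Finset.mem_singleton, not_or] at hm
    exact Finset.card_eq_three.2 ⟨0, 1, m, by simp, Ne.symm hm.1, Ne.symm hm.2, rfl⟩

lemma generatingLineCount_0100 (h : HasReducedMul p S (normalMul 0 1 0 0)) :
    (generatingLineCount p S : ℚ) = (p - 2) * (p - 1) := by
  rw [h.generatingLineCount_eq_mul {0, 1} (fun _ => {0}) (fun _ _ => Finset.card_singleton _)
    fun m n => by simp [isGeneratingVec_0100], Finset.card_pair (by simp)]
  norm_num

lemma generatingLineCount_1000 (h : HasReducedMul p S (normalMul 1 0 0 0)) :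
    (generatingLineCount p S : ℚ) = (p - 1) ^ 2 := by
  rw [h.generatingLineCount_eq_mul {0} (fun _ => {0}) (fun _ _ => Finset.card_singleton _)
    fun m n => by simp [isGeneratingVec_1000], Finset.card_singleton, Nat.cast_one, sq]

lemma generatingLineCount_00r0 (hr : r ≠ 0) (h : HasReducedMul p S (normalMul 0 0 r 0)) :
    (generatingLineCount p S : ℚ) = p * (p - 1) := by
  rw [h.generatingLineCount_eq_mul {0} (fun _ => ∅) (fun _ _ => Finset.card_empty)
    fun m n => by simp [isGeneratingVec_00r0 hr], Finset.card_singleton]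
  norm_num [mul_comm]

lemma generatingLineCount_0000 (h : HasReducedMul p S (normalMul 0 0 0 0)) :
    (generatingLineCount p S : ℚ) = 0 := by
  rw [h.generatingLineCount_eq_mul Finset.univ (fun _ => ∅) (fun _ _ => Finset.card_empty)
    fun m n => by simp [not_isGeneratingVec_0000], Finset.card_univ, ZMod.card, sub_self, zero_mul]

end Statistics

section RowLattice

variable {n : Type*} [Fintype n] [DecidableEq n] {M : Matrix n n ℤ}

lemma vecMulLinear_injective (hM : M.det ≠ 0) : Function.Injective M.vecMulLinear :=
  (injective_iff_map_eq_zero M.vecMulLinear).2 fun _ => Matrix.eq_zero_of_vecMul_eq_zero hM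

lemma addIndex_range_vecMulLinear (hM : M.det ≠ 0) :
    addIndex M.vecMulLinear.range = M.det.natAbs := by
  have hdet : LinearMap.det M.vecMulLinear = M.det := by
    rw [← M.mulVecLin_transpose, ← Matrix.toLin'_apply', LinearMap.det_toLin', M.det_transpose]
  rw [← hdet]
  exact (natAbs_det_equiv _ (LinearEquiv.ofInjective _ (vecMulLinear_injective hM))).symm

end RowLattice

section Reduction

variable {R : Type*} [CommRing R] {p : ℕ} {S : Submodule ℤ R}

/-- The reduction of a lattice modulo `p` in given coordinates. -/
def coordReduction (p : ℕ) (e : S ≃ₗ[ℤ] (Fin 3 → ℤ)) : S →ₗ[ℤ] (Fin 3 → ZMod p) :=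
  ((Int.castAddHom (ZMod p)).toIntLinearMap.compLeft (Fin 3)) ∘ₗ e.toLinearMap

lemma coordReduction_apply (e : S ≃ₗ[ℤ] (Fin 3 → ℤ)) (s : S) :
    coordReduction p e s = fun i => (e s i : ZMod p) := rfl

lemma isReduction_coordReduction (e : S ≃ₗ[ℤ] (Fin 3 → ℤ)) :
    IsReduction p S (coordReduction p e) where
  surjective v := by
    choose w hw using fun i => ZMod.intCast_surjective (v i)
    exact ⟨e.symm w, by simp [coordReduction_apply, hw]⟩
  comapLattice_bot := by
    ext x
    rw [mem_comapLattice, mem_scalar_mul]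
    constructor
    · rintro ⟨hx, h⟩
      have hdvd i : (p : ℤ) ∣ e ⟨x, hx⟩ i :=
        (ZMod.intCast_zmod_eq_zero_iff_dvd _ _).1 (congrFun ((mem_bot _).1 h) i)
      choose c hc using hdvd
      refine ⟨e.symm c, coe_mem _, ?_⟩
      rw [← coe_smul, ← map_smul, (e.symm_apply_eq (y := ⟨x, hx⟩)).2]
      ext i
      simp [hc i]
    · rintro ⟨m, hm, rfl⟩
      refine ⟨S.smul_mem _ hm, (mem_bot _).2 ?_⟩
      ext i
      rw [← SetLike.mk_smul_mk _ _ _ hm, map_smul]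
      simp

lemma IsReduction.comp_linearEquiv {f : S →ₗ[ℤ] (Fin 3 → ZMod p)} (hf : IsReduction p S f)
    (g : (Fin 3 → ZMod p) ≃ₗ[ZMod p] (Fin 3 → ZMod p)) :
    IsReduction p S (g.toLinearMap.restrictScalars ℤ ∘ₗ f) where
  surjective := g.surjective.comp hf.surjective
  comapLattice_bot := by
    rw [← hf.comapLattice_bot]
    ext x
    simp [mem_comapLattice]

end Reduction

instance : IsCubicRing (Fin 3 → ℤ) where
  finrank_eq := Module.finrank_fin_fun ℤ

section HermiteNormalForm

variable {A B C x y z : ℤ}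

/-- The integer matrix whose rows span a lattice in Hermite normal form. -/
def hnfMatrix (A B C x y z : ℤ) : Matrix (Fin 3) (Fin 3) ℤ := !![A, x, y; 0, B, z; 0, 0, C]

/-- The lattice in `ℤ³` spanned by `(A, x, y)`, `(0, B, z)` and `(0, 0, C)`. -/
def hnf (A B C x y z : ℤ) : Submodule ℤ (Fin 3 → ℤ) := (hnfMatrix A B C x y z).vecMulLinear.range

lemma vecMulLinear_hnfMatrix (v : Fin 3 → ℤ) : (hnfMatrix A B C x y z).vecMulLinear v =
    ![v 0 * A, v 0 * x + v 1 * B, v 0 * y + v 1 * z + v 2 * C] := by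
  ext i; fin_cases i <;> simp [hnfMatrix, Matrix.vecMul, dotProduct, Fin.sum_univ_three]

lemma det_hnfMatrix : (hnfMatrix A B C x y z).det = A * B * C := by
  simp [hnfMatrix, Matrix.det_fin_three]

lemma mem_hnf {v : Fin 3 → ℤ} : v ∈ hnf A B C x y z ↔
    ∃ α β γ, α * A = v 0 ∧ α * x + β * B = v 1 ∧ α * y + β * z + γ * C = v 2 := by
  rw [hnf, LinearMap.mem_range]
  simp only [vecMulLinear_hnfMatrix]
  constructor
  · rintro ⟨w, rfl⟩
    exact ⟨w 0, w 1, w 2, rfl, rfl, rfl⟩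
  · rintro ⟨α, β, γ, h0, h1, h2⟩
    refine ⟨![α, β, γ], ?_⟩
    ext i; fin_cases i
    exacts [h0, h1, h2]

lemma row₁_mem_hnf : ![A, x, y] ∈ hnf A B C x y z := mem_hnf.2 ⟨1, 0, 0, by simp⟩

lemma row₂_mem_hnf : ![0, B, z] ∈ hnf A B C x y z := mem_hnf.2 ⟨0, 1, 0, by simp⟩

lemma row₃_mem_hnf : ![0, 0, C] ∈ hnf A B C x y z := mem_hnf.2 ⟨0, 0, 1, by simp⟩

lemma hnfMatrix_det_ne_zero (hA : A ≠ 0) (hB : B ≠ 0) (hC : C ≠ 0) :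
    (hnfMatrix A B C x y z).det ≠ 0 := by
  rw [det_hnfMatrix]
  exact mul_ne_zero (mul_ne_zero hA hB) hC

lemma addIndex_hnf (hA : A ≠ 0) (hB : B ≠ 0) (hC : C ≠ 0) :
    addIndex (hnf A B C x y z) = (A * B * C).natAbs := by
  rw [hnf, addIndex_range_vecMulLinear (hnfMatrix_det_ne_zero hA hB hC), det_hnfMatrix]

/-- The integers `q`, `r`, `s`, `u` are the nontrivial structure constants of the componentwise
product in the basis `e₁ = (A, x, y)`, `e₂ = (0, B, z)`, `e₃ = (0, 0, C)`:
`e₁² = A e₁ + q e₂ + u e₃`, `e₁e₂ = x e₂ + s e₃` and `e₂² = B e₂ + r e₃`. -/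
structure IsHnfMulTable (A B C x y z q r s u : ℤ) : Prop where
  q_mul : q * B = x ^ 2 - A * x
  r_mul : r * C = z ^ 2 - B * z
  s_mul : s * C = (y - x) * z
  u_mul : u * C = y ^ 2 - A * y - q * z

/-- The product with structure constants `A`, `B`, `C`, `x`, `y`, `z`, `q`, `r`, `s`, `u` as in
`IsHnfMulTable`. -/
def hnfMul {K : Type*} [CommRing K] (A B C x y z q r s u : K) (v w : Fin 3 → K) : Fin 3 → K :=
  ![A * (v 0 * w 0),
    q * (v 0 * w 0) + x * (v 0 * w 1 + v 1 * w 0) + B * (v 1 * w 1),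
    u * (v 0 * w 0) + s * (v 0 * w 1 + v 1 * w 0) + y * (v 0 * w 2 + v 2 * w 0) +
      r * (v 1 * w 1) + z * (v 1 * w 2 + v 2 * w 1) + C * (v 2 * w 2)]

variable {q r s u : ℤ}

lemma IsHnfMulTable.mul_eq (h : IsHnfMulTable A B C x y z q r s u) (v w : Fin 3 → ℤ) :
    (hnfMatrix A B C x y z).vecMulLinear v * (hnfMatrix A B C x y z).vecMulLinear w =
      (hnfMatrix A B C x y z).vecMulLinear (hnfMul A B C x y z q r s u v w) := by
  simp only [vecMulLinear_hnfMatrix, hnfMul]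
  ext i
  fin_cases i <;> simp only [Fin.reduceFinMk, Fin.mk_one, Fin.zero_eta, Pi.mul_apply,
    Matrix.cons_val_zero, Matrix.cons_val_one, Matrix.cons_val]
  · ring
  · linear_combination -(v 0 * w 0) * h.q_mul
  · linear_combination
      -(v 1 * w 1) * h.r_mul - (v 0 * w 1 + v 1 * w 0) * h.s_mul - (v 0 * w 0) * h.u_mul

lemma isMulClosed_hnf (hA : A ≠ 0) (hB : B ≠ 0) : IsMulClosed (hnf A B C x y z) ↔
    ∃ q r s u, IsHnfMulTable A B C x y z q r s u := by
  constructor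
  · intro h
    obtain ⟨α₁₁, q, u, h₁₁⟩ := mem_hnf.1 (h (mul_mem_mul row₁_mem_hnf row₁_mem_hnf))
    obtain ⟨α₁₂, β₁₂, s, h₁₂⟩ := mem_hnf.1 (h (mul_mem_mul row₁_mem_hnf row₂_mem_hnf))
    obtain ⟨α₂₂, β₂₂, r, h₂₂⟩ := mem_hnf.1 (h (mul_mem_mul row₂_mem_hnf row₂_mem_hnf))
    simp only [Pi.mul_apply, Matrix.cons_val_zero, Matrix.cons_val_one, Matrix.cons_val, mul_zero,
      mul_eq_zero, hA, or_false, mul_eq_mul_right_iff] at h₁₁ h₁₂ h₂₂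
    obtain ⟨rfl, hq, hu⟩ := h₁₁
    obtain ⟨rfl, hβ₁₂, hs⟩ := h₁₂
    obtain ⟨rfl, hβ₂₂, hr⟩ := h₂₂
    obtain rfl : β₁₂ = x := mul_right_cancel₀ hB (by linear_combination hβ₁₂)
    obtain rfl : β₂₂ = B := mul_right_cancel₀ hB (by linear_combination hβ₂₂)
    exact ⟨q, r, s, u, by linear_combination hq, by linear_combination hr,
      by linear_combination hs, by linear_combination hu⟩
  · rintro ⟨q, r, s, u, h⟩
    rw [IsMulClosed, Submodule.mul_le]
    rintro _ ⟨v, rfl⟩ _ ⟨w, rfl⟩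
    exact ⟨_, (h.mul_eq v w).symm⟩

lemma intCast_hnfMul {K : Type*} [CommRing K] (v w : Fin 3 → ℤ) :
    (fun i => ((hnfMul A B C x y z q r s u v w i : ℤ) : K)) =
      hnfMul (A : K) B C x y z q r s u (fun i => (v i : K)) fun i => (w i : K) := by
  ext i; fin_cases i <;> simp [hnfMul]

lemma IsHnfMulTable.hasReducedMul {p : ℕ} [Fact p.Prime] (h : IsHnfMulTable A B C x y z q r s u)
    (hA : A ≠ 0) (hB : B ≠ 0) (hC : C ≠ 0)
    {μ : (Fin 3 → ZMod p) → (Fin 3 → ZMod p) → Fin 3 → ZMod p} (g : Matrix (Fin 3) (Fin 3) (ZMod p))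
    (hg : IsUnit g.det) (l : (Fin 3 → ZMod p) → ZMod p)
    (hμ : ∀ v w, g.mulVec (hnfMul (A : ZMod p) B C x y z q r s u v w) =
      μ (g.mulVec v) (g.mulVec w) + l (g.mulVec v) • g.mulVec w + l (g.mulVec w) • g.mulVec v) :
    HasReducedMul p (hnf A B C x y z) μ := by
  let e : (Fin 3 → ℤ) ≃ₗ[ℤ] hnf A B C x y z :=
    LinearEquiv.ofInjective _ (vecMulLinear_injective (hnfMatrix_det_ne_zero hA hB hC))
  let f := (g.toLinearEquiv' (g.invertibleOfIsUnitDet hg)).toLinearMap.restrictScalars ℤ ∘ₗ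
    coordReduction p e.symm
  have hf (v : Fin 3 → ℤ) : f (e v) = g.mulVec fun i => (v i : ZMod p) := by
    simp [f, coordReduction_apply]
  refine ⟨f, l, (isReduction_coordReduction e.symm).comp_linearEquiv _, fun s t => ?_⟩
  obtain ⟨v, rfl⟩ := e.surjective s
  obtain ⟨w, rfl⟩ := e.surjective t
  have hmul : (e v * e w : Fin 3 → ℤ) = e (hnfMul A B C x y z q r s u v w) := h.mul_eq v w
  have hmem : (e v * e w : Fin 3 → ℤ) ∈ hnf A B C x y z := hmul ▸ coe_mem _
  have hprod : (⟨e v * e w, hmem⟩ : hnf A B C x y z) = e (hnfMul A B C x y z q r s u v w) :=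
    Subtype.ext hmul
  exact ⟨hmem, by rw [hprod, hf, hf, hf, intCast_hnfMul, hμ]⟩

end HermiteNormalForm

section Reductions

variable {p : ℕ} [Fact p.Prime] {A B C x y z q r u : ℤ}

lemma hasReducedMul_hnf_one_one_one :
    HasReducedMul p (hnf 1 1 1 0 0 0) (normalMul 0 1 0 1) := by
  refine IsHnfMulTable.hasReducedMul (q := 0) (r := 0) (s := 0) (u := 0)
    ⟨by ring, by ring, by ring, by ring⟩ one_ne_zero one_ne_zero one_ne_zero
    1 (by simp) (fun _ => 0) fun v w => ?_
  ext i; fin_cases i <;> simp [hnfMul, normalMul]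

variable (hA : A ≠ 0) (hB : B ≠ 0) (hC : C ≠ 0)
  (hA' : (A : ZMod p) = 0) (hB' : (B : ZMod p) = 0) (hC' : (C : ZMod p) = 0)

include hA hA' in
lemma hasReducedMul_hnf_A_one_one :
    HasReducedMul p (hnf A 1 1 0 0 0) (normalMul 0 1 0 0) := by
  refine IsHnfMulTable.hasReducedMul (q := 0) (r := 0) (s := 0) (u := 0)
    ⟨by ring, by ring, by ring, by ring⟩ hA one_ne_zero one_ne_zero
    !![0, 1, 0; 0, 0, 1; 1, 0, 0] (by simp [Matrix.det_fin_three]) (fun _ => 0) fun v w => ?_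
  ext i; fin_cases i <;>
    simp [hnfMul, normalMul, Matrix.mulVec, dotProduct, Fin.sum_univ_three, hA']

include hB hB' in
lemma hasReducedMul_hnf_one_B_one :
    HasReducedMul p (hnf 1 B 1 0 0 0) (normalMul 0 1 0 0) := by
  refine IsHnfMulTable.hasReducedMul (q := 0) (r := 0) (s := 0) (u := 0)
    ⟨by ring, by ring, by ring, by ring⟩ one_ne_zero hB one_ne_zero
    !![1, 0, 0; 0, 0, 1; 0, 1, 0] (by simp [Matrix.det_fin_three]) (fun _ => 0) fun v w => ?_
  ext i; fin_cases i <;>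
    simp [hnfMul, normalMul, Matrix.mulVec, dotProduct, Fin.sum_univ_three, hB']

include hB hB' in
lemma hasReducedMul_hnf_one_B_one_x :
    HasReducedMul p (hnf 1 B 1 1 0 0) (normalMul 0 1 0 0) := by
  refine IsHnfMulTable.hasReducedMul (q := 0) (r := 0) (s := 0) (u := 0)
    ⟨by ring, by ring, by ring, by ring⟩ one_ne_zero hB one_ne_zero
    !![-1, 0, 0; -1, 0, 1; 0, 1, 0] (by simp [Matrix.det_fin_three]) (fun v => -v 0) fun v w => ?_
  ext i; fin_cases i <;>
    simp [hnfMul, normalMul, Matrix.mulVec, dotProduct, Fin.sum_univ_three, hB'] <;> ring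

include hC hC' in
lemma hasReducedMul_hnf_one_one_C :
    HasReducedMul p (hnf 1 1 C 0 0 0) (normalMul 0 1 0 0) := by
  refine IsHnfMulTable.hasReducedMul (q := 0) (r := 0) (s := 0) (u := 0)
    ⟨by ring, by ring, by ring, by ring⟩ one_ne_zero one_ne_zero hC
    1 (by simp) (fun _ => 0) fun v w => ?_
  ext i; fin_cases i <;> simp [hnfMul, normalMul, hC']

include hC hC' in
lemma hasReducedMul_hnf_one_one_C_y :
    HasReducedMul p (hnf 1 1 C 0 1 0) (normalMul 0 1 0 0) := by
  refine IsHnfMulTable.hasReducedMul (q := 0) (r := 0) (s := 0) (u := 0)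
    ⟨by ring, by ring, by ring, by ring⟩ one_ne_zero one_ne_zero hC
    !![-1, 0, 0; -1, 1, 0; 0, 0, 1] (by simp [Matrix.det_fin_three]) (fun v => -v 0) fun v w => ?_
  ext i; fin_cases i <;>
    simp [hnfMul, normalMul, Matrix.mulVec, dotProduct, Fin.sum_univ_three, hC'] <;> ring

include hC hC' in
lemma hasReducedMul_hnf_one_one_C_z :
    HasReducedMul p (hnf 1 1 C 0 0 1) (normalMul 0 1 0 0) := by
  refine IsHnfMulTable.hasReducedMul (q := 0) (r := 0) (s := 0) (u := 0)
    ⟨by ring, by ring, by ring, by ring⟩ one_ne_zero one_ne_zero hC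
    !![0, -1, 0; 1, -1, 0; 0, 0, 1] (by simp [Matrix.det_fin_three]) (fun v => -v 0) fun v w => ?_
  ext i; fin_cases i <;>
    simp [hnfMul, normalMul, Matrix.mulVec, dotProduct, Fin.sum_univ_three, hC'] <;> ring

include hA hB hA' hB' in
lemma hasReducedMul_hnf_A_B_one (hx : (x : ZMod p) = 0)
    (hq : q * B = x ^ 2 - A * x) :
    HasReducedMul p (hnf A B 1 x 0 0) (normalMul 0 0 (q : ZMod p) 0) := by
  refine IsHnfMulTable.hasReducedMul (q := q) (r := 0) (s := 0) (u := 0)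
    ⟨hq, by ring, by ring, by ring⟩ hA hB one_ne_zero
    !![0, 0, 1; 1, 0, 0; 0, 1, 0] (by simp [Matrix.det_fin_three]) (fun _ => 0) fun v w => ?_
  ext i; fin_cases i <;>
    simp [hnfMul, normalMul, Matrix.mulVec, dotProduct, Fin.sum_univ_three, hA', hB', hx]

include hA hC hA' hC' in
lemma hasReducedMul_hnf_A_one_C_y (hy : (y : ZMod p) = 0)
    (hu : u * C = y ^ 2 - A * y) :
    HasReducedMul p (hnf A 1 C 0 y 0) (normalMul 0 0 (u : ZMod p) 0) := by
  refine IsHnfMulTable.hasReducedMul (q := 0) (r := 0) (s := 0) (u := u)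
    ⟨by ring, by ring, by ring, by linear_combination hu⟩ hA one_ne_zero hC
    !![0, 1, 0; 1, 0, 0; 0, 0, 1] (by simp [Matrix.det_fin_three]) (fun _ => 0) fun v w => ?_
  ext i; fin_cases i <;>
    simp [hnfMul, normalMul, Matrix.mulVec, dotProduct, Fin.sum_univ_three, hA', hC', hy]

include hA hC hA' hC' in
lemma hasReducedMul_hnf_A_one_C_z :
    HasReducedMul p (hnf A 1 C 0 0 1) (normalMul 1 0 0 0) := by
  refine IsHnfMulTable.hasReducedMul (q := 0) (r := 0) (s := 0) (u := 0)
    ⟨by ring, by ring, by ring, by ring⟩ hA one_ne_zero hC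
    !![0, -1, 0; 1, 0, 0; 0, 0, 1] (by simp [Matrix.det_fin_three]) (fun v => -v 0) fun v w => ?_
  ext i; fin_cases i <;>
    simp [hnfMul, normalMul, Matrix.mulVec, dotProduct, Fin.sum_univ_three, hA', hC'] <;> ring

include hB hC hB' hC' in
lemma hasReducedMul_hnf_one_B_C_z (hz : (z : ZMod p) = 0)
    (hr : r * C = z ^ 2 - B * z) :
    HasReducedMul p (hnf 1 B C 0 0 z) (normalMul 0 0 (r : ZMod p) 0) := by
  refine IsHnfMulTable.hasReducedMul (q := 0) (r := r) (s := 0) (u := 0)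
    ⟨by ring, hr, by ring, by ring⟩ one_ne_zero hB hC
    1 (by simp) (fun _ => 0) fun v w => ?_
  ext i; fin_cases i <;> simp [hnfMul, normalMul, hB', hC', hz]

include hB hC hB' hC' in
lemma hasReducedMul_hnf_one_B_C_xyz (hz : (z : ZMod p) = 0)
    (hr : r * C = z ^ 2 - B * z) :
    HasReducedMul p (hnf 1 B C 1 1 z) (normalMul 0 0 (r : ZMod p) 0) := by
  refine IsHnfMulTable.hasReducedMul (q := 0) (r := r) (s := 0) (u := 0)
    ⟨by ring, hr, by ring, by ring⟩ one_ne_zero hB hC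
    !![-1, 0, 0; 0, 1, 0; 0, 0, 1] (by simp [Matrix.det_fin_three]) (fun v => -v 0) fun v w => ?_
  ext i; fin_cases i <;>
    simp [hnfMul, normalMul, Matrix.mulVec, dotProduct, Fin.sum_univ_three, hB', hC', hz] <;> ring

include hB hC hB' hC' in
lemma hasReducedMul_hnf_one_B_C_y :
    HasReducedMul p (hnf 1 B C 0 1 0) (normalMul 1 0 0 0) := by
  refine IsHnfMulTable.hasReducedMul (q := 0) (r := 0) (s := 0) (u := 0)
    ⟨by ring, by ring, by ring, by ring⟩ one_ne_zero hB hC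
    !![1, 0, 0; 0, 0, 1; 0, 1, 0] (by simp [Matrix.det_fin_three]) (fun _ => 0) fun v w => ?_
  ext i; fin_cases i <;>
    simp [hnfMul, normalMul, Matrix.mulVec, dotProduct, Fin.sum_univ_three, hB', hC']

include hB hC hB' hC' in
lemma hasReducedMul_hnf_one_B_C_x :
    HasReducedMul p (hnf 1 B C 1 0 0) (normalMul 1 0 0 0) := by
  refine IsHnfMulTable.hasReducedMul (q := 0) (r := 0) (s := 0) (u := 0)
    ⟨by ring, by ring, by ring, by ring⟩ one_ne_zero hB hC
    1 (by simp) (fun _ => 0) fun v w => ?_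
  ext i; fin_cases i <;> simp [hnfMul, normalMul, hB', hC']

end Reductions

section HermiteReduction

variable {A B C x y z A' B' C' x' y' z' : ℤ}

lemma hnf_le {S : Submodule ℤ (Fin 3 → ℤ)} (h₁ : ![A, x, y] ∈ S) (h₂ : ![0, B, z] ∈ S)
    (h₃ : ![0, 0, C] ∈ S) : hnf A B C x y z ≤ S := by
  intro v hv
  obtain ⟨α, β, γ, h⟩ := mem_hnf.1 hv
  have hcomb : v = α • ![A, x, y] + β • ![0, B, z] + γ • ![0, 0, C] := by
    ext i; fin_cases i <;> simp [h]
  rw [hcomb]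
  exact S.add_mem (S.add_mem (S.smul_mem _ h₁) (S.smul_mem _ h₂)) (S.smul_mem _ h₃)

lemma hnf_add_mul_x (k : ℤ) : hnf A B C (x + k * B) (y + k * z) z = hnf A B C x y z :=
  le_antisymm
    (hnf_le (mem_hnf.2 ⟨1, k, 0, by simp⟩) row₂_mem_hnf row₃_mem_hnf)
    (hnf_le (mem_hnf.2 ⟨1, -k, 0, by simp⟩) row₂_mem_hnf row₃_mem_hnf)

lemma hnf_add_mul_y (k : ℤ) : hnf A B C x (y + k * C) z = hnf A B C x y z :=
  le_antisymm
    (hnf_le (mem_hnf.2 ⟨1, 0, k, by simp⟩) row₂_mem_hnf row₃_mem_hnf)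
    (hnf_le (mem_hnf.2 ⟨1, 0, -k, by simp⟩) row₂_mem_hnf row₃_mem_hnf)

lemma hnf_add_mul_z (k : ℤ) : hnf A B C x y (z + k * C) = hnf A B C x y z :=
  le_antisymm
    (hnf_le row₁_mem_hnf (mem_hnf.2 ⟨0, 1, k, by simp⟩) row₃_mem_hnf)
    (hnf_le row₁_mem_hnf (mem_hnf.2 ⟨0, 1, -k, by simp⟩) row₃_mem_hnf)

lemma exists_reduced_hnf (hB : 0 < B) (hC : 0 < C) (x y z : ℤ) :
    ∃ x' ∈ Finset.Ico 0 B, ∃ y' ∈ Finset.Ico 0 C, ∃ z' ∈ Finset.Ico 0 C,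
      hnf A B C x y z = hnf A B C x' y' z' := by
  refine ⟨x % B, ?_, (y - x / B * (z % C)) % C, ?_, z % C, ?_, ?_⟩
  · simp [Int.emod_nonneg _ hB.ne', Int.emod_lt_of_pos _ hB]
  · simp [Int.emod_nonneg _ hC.ne', Int.emod_lt_of_pos _ hC]
  · simp [Int.emod_nonneg _ hC.ne', Int.emod_lt_of_pos _ hC]
  · calc hnf A B C x y z
      _ = hnf A B C x y (z % C) := by
        rw [← hnf_add_mul_z (z := z % C) (z / C), mul_comm, Int.emod_add_mul_ediv]
      _ = hnf A B C (x % B) (y - x / B * (z % C)) (z % C) := by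
        rw [← hnf_add_mul_x (x := x % B) (x / B), sub_add_cancel, mul_comm _ B,
          Int.emod_add_mul_ediv]
      _ = hnf A B C (x % B) ((y - x / B * (z % C)) % C) (z % C) := by
        rw [← hnf_add_mul_y (y := (y - x / B * (z % C)) % C) ((y - x / B * (z % C)) / C),
          mul_comm _ C, Int.emod_add_mul_ediv]

lemma dvd_of_hnf_le (hA' : A' ≠ 0) (hB' : B' ≠ 0) (h : hnf A B C x y z ≤ hnf A' B' C' x' y' z') :
    A' ∣ A ∧ B' ∣ B ∧ C' ∣ C := by
  obtain ⟨α₁, _, _, h₁, _⟩ := mem_hnf.1 (h row₁_mem_hnf)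
  obtain ⟨α₂, β₂, _, h₂, h₂', _⟩ := mem_hnf.1 (h row₂_mem_hnf)
  obtain ⟨α₃, β₃, γ₃, h₃, h₃', h₃''⟩ := mem_hnf.1 (h row₃_mem_hnf)
  simp only [Matrix.cons_val_zero, Matrix.cons_val_one, Matrix.cons_val, mul_eq_zero, hA',
    or_false] at h₁ h₂ h₂' h₃ h₃' h₃''
  subst h₂ h₃
  simp only [zero_mul, zero_add, mul_eq_zero, hB', or_false] at h₂' h₃' h₃''
  subst h₃'
  exact ⟨⟨α₁, by linear_combination -h₁⟩, ⟨β₂, by linear_combination -h₂'⟩,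
    ⟨γ₃, by linear_combination -h₃''⟩⟩

lemma eq_of_mem_Ico_of_dvd_sub {m : ℤ} (hx : x ∈ Finset.Ico 0 m) (hy : y ∈ Finset.Ico 0 m)
    (h : m ∣ x - y) : x = y := by
  rw [Finset.mem_Ico] at hx hy
  rw [← Int.emod_eq_of_lt hx.1 hx.2, ← Int.emod_eq_of_lt hy.1 hy.2]
  exact Int.emod_eq_emod_iff_emod_sub_eq_zero.2 (Int.emod_eq_zero_of_dvd h)

lemma reduced_hnf_injective (hA : A ≠ 0) (hB : B ≠ 0) (h : hnf A B C x y z = hnf A B C x' y' z')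
    (hx : x ∈ Finset.Ico 0 B) (hy : y ∈ Finset.Ico 0 C) (hz : z ∈ Finset.Ico 0 C)
    (hx' : x' ∈ Finset.Ico 0 B) (hy' : y' ∈ Finset.Ico 0 C) (hz' : z' ∈ Finset.Ico 0 C) :
    x = x' ∧ y = y' ∧ z = z' := by
  obtain ⟨α₁, β₁, γ₁, h₁, h₁', h₁''⟩ := mem_hnf.1 (h ▸ row₁_mem_hnf)
  obtain ⟨α₂, β₂, γ₂, h₂, h₂', h₂''⟩ := mem_hnf.1 (h ▸ row₂_mem_hnf)
  simp only [Matrix.cons_val_zero, Matrix.cons_val_one, Matrix.cons_val, mul_eq_zero, hA, or_false,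
    mul_eq_right₀ hA] at h₁ h₁' h₁'' h₂ h₂' h₂''
  subst h₁ h₂
  simp only [zero_mul, zero_add, mul_eq_right₀ hB] at h₂' h₂''
  subst h₂'
  obtain rfl : x = x' := eq_of_mem_Ico_of_dvd_sub hx hx' ⟨β₁, by linear_combination -h₁'⟩
  obtain rfl : β₁ = 0 := by simpa [hB] using h₁'
  exact ⟨rfl, eq_of_mem_Ico_of_dvd_sub hy hy' ⟨γ₁, by linear_combination -h₁''⟩,
    eq_of_mem_Ico_of_dvd_sub hz hz' ⟨γ₂, by linear_combination -h₂''⟩⟩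

end HermiteReduction

section PrimePower

variable {p : ℕ} [Fact p.Prime] {A B C x y z q r s u : ℤ}

lemma prime_intCast : Prime (p : ℤ) := Nat.prime_iff_prime_int.1 Fact.out

lemma pow_intCast_ne_zero (n : ℕ) : (p : ℤ) ^ n ≠ 0 := pow_ne_zero n prime_intCast.ne_zero

lemma exists_pivot {M : Type*} [AddCommGroup M] {T : Submodule ℤ M} {φ : M →ₗ[ℤ] ℤ} {v : M} {k : ℕ}
    (hv : v ∈ T) (hφ : φ v = p ^ k) :
    ∃ a : ℕ, (∃ v ∈ T, φ v = p ^ a) ∧ ∀ v ∈ T, (p : ℤ) ^ a ∣ φ v := by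
  obtain ⟨d, hd⟩ := (IsPrincipalIdealRing.principal (T.map φ : Ideal ℤ)).principal
  have hmem (n : ℤ) : (∃ v ∈ T, φ v = n) ↔ d ∣ n := by
    rw [← mem_map, hd]
    exact Ideal.mem_span_singleton
  obtain ⟨a, _, ha⟩ := (dvd_prime_pow prime_intCast _).1 ((hmem _).1 ⟨v, hv, hφ⟩)
  exact ⟨a, (hmem _).2 ha.dvd, fun v hv => ha.symm.dvd.trans ((hmem _).1 ⟨v, hv, rfl⟩)⟩

lemma IsPLattice.exists_eq_hnf {S : Submodule ℤ (Fin 3 → ℤ)} (hS : IsPLattice p S) :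
    ∃ (a b c : ℕ) (x y z : ℤ), S = hnf (p ^ a) (p ^ b) (p ^ c) x y z := by
  obtain ⟨k, hk⟩ := hS
  have hpk (v : Fin 3 → ℤ) : (p : ℤ) ^ k • v ∈ S := by
    refine hk ?_
    rw [scalar_pow, mem_scalar_mul]
    exact ⟨v, mem_top, by simp⟩
  let π := LinearMap.proj (R := ℤ) (φ := fun _ : Fin 3 => ℤ)
  obtain ⟨a, ⟨e₁, he₁, ha₁⟩, ha⟩ := exists_pivot (p := p) (φ := π 0) (k := k) (hpk ![1, 0, 0])
    (by simp [π])
  obtain ⟨b, ⟨e₂, ⟨he₂, hb₂⟩, hb₂'⟩, hb⟩ := exists_pivot (p := p) (T := S ⊓ (π 0).ker) (φ := π 1)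
    (k := k) ⟨hpk ![0, 1, 0], by simp [π]⟩ (by simp [π])
  obtain ⟨c, ⟨e₃, ⟨⟨he₃, hc₃⟩, hc₃'⟩, hc₃''⟩, hc⟩ := exists_pivot (p := p)
    (T := S ⊓ (π 0).ker ⊓ (π 1).ker) (φ := π 2) (k := k)
    ⟨⟨hpk ![0, 0, 1], by simp [π]⟩, by simp [π]⟩ (by simp [π])
  simp only [SetLike.mem_coe, LinearMap.mem_ker, LinearMap.proj_apply, mem_inf, and_imp, π] at *
  have hrow₁ : ![(p : ℤ) ^ a, e₁ 1, e₁ 2] = e₁ := by ext i; fin_cases i <;> simp [ha₁]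
  have hrow₂ : ![0, (p : ℤ) ^ b, e₂ 2] = e₂ := by ext i; fin_cases i <;> simp [hb₂, hb₂']
  have hrow₃ : ![0, 0, (p : ℤ) ^ c] = e₃ := by ext i; fin_cases i <;> simp [hc₃, hc₃', hc₃'']
  refine ⟨a, b, c, e₁ 1, e₁ 2, e₂ 2, le_antisymm (fun v hv => ?_)
    (hnf_le (hrow₁ ▸ he₁) (hrow₂ ▸ he₂) (hrow₃ ▸ he₃))⟩
  obtain ⟨α, hα⟩ := ha v hv
  obtain ⟨β, hβ⟩ := hb (v - α • e₁) (S.sub_mem hv (S.smul_mem _ he₁)) (by simp [hα, ha₁, mul_comm])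
  obtain ⟨γ, hγ⟩ := hc (v - α • e₁ - β • e₂)
    (S.sub_mem (S.sub_mem hv (S.smul_mem _ he₁)) (S.smul_mem _ he₂))
    (by simp [hα, ha₁, hb₂, mul_comm])
    (by simpa [hb₂', mul_comm, sub_eq_zero] using hβ)
  simp only [Pi.sub_apply, Pi.smul_apply, smul_eq_mul] at hβ hγ
  exact mem_hnf.2 ⟨α, β, γ, by linear_combination -hα, by linear_combination -hβ,
    by linear_combination -hγ⟩

lemma mem_scalar_mul_top {p : ℕ} {v : Fin 3 → ℤ} :
    v ∈ scalar p * (⊤ : Submodule ℤ (Fin 3 → ℤ)) ↔ ∀ i, (p : ℤ) ∣ v i := by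
  rw [mem_scalar_mul]
  constructor
  · rintro ⟨m, _, rfl⟩ i
    exact ⟨m i, by simp⟩
  · intro h
    choose m hm using h
    exact ⟨m, mem_top, by ext i; simp [hm]⟩

lemma IsHnfMulTable.hnf_le_scalar_mul_top (h : IsHnfMulTable A B C x y z q r s u) :
    hnf A B C x y z ≤ scalar p * ⊤ ↔ (p : ℤ) ∣ A ∧ (p : ℤ) ∣ B ∧ (p : ℤ) ∣ C := by
  constructor
  · intro hle
    exact ⟨mem_scalar_mul_top.1 (hle row₁_mem_hnf) 0, mem_scalar_mul_top.1 (hle row₂_mem_hnf) 1,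
      mem_scalar_mul_top.1 (hle row₃_mem_hnf) 2⟩
  · rintro ⟨hA, hB, hC⟩
    have hx : (p : ℤ) ∣ x := prime_intCast.dvd_of_dvd_pow (n := 2) <| by
      rw [show x ^ 2 = q * B + A * x by linear_combination -h.q_mul]
      exact dvd_add (hB.mul_left _) (hA.mul_right _)
    have hz : (p : ℤ) ∣ z := prime_intCast.dvd_of_dvd_pow (n := 2) <| by
      rw [show z ^ 2 = r * C + B * z by linear_combination -h.r_mul]
      exact dvd_add (hC.mul_left _) (hB.mul_right _)
    have hy : (p : ℤ) ∣ y := prime_intCast.dvd_of_dvd_pow (n := 2) <| by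
      rw [show y ^ 2 = u * C + A * y + q * z by linear_combination -h.u_mul]
      exact dvd_add (dvd_add (hC.mul_left _) (hA.mul_right _)) (hz.mul_left _)
    refine hnf_le ?_ ?_ ?_ <;> rw [mem_scalar_mul_top] <;> intro i <;> fin_cases i <;> simp [*]

end PrimePower

end SubringZeta

namespace SubringZeta

open PowerSeries

section AntidiagonalSeries

variable {K : Type*} [CommSemiring K]

/-- The generating series of a doubly indexed sequence by total degree. -/
noncomputable def antidiagonalSeries (F : ℕ → ℕ → K) : K⟦X⟧ :=
  mk fun n => ∑ x ∈ Finset.HasAntidiagonal.antidiagonal n, F x.1 x.2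

lemma antidiagonalSeries_mul_mul (f g : ℕ → K) :
    antidiagonalSeries (fun i j => f i * g j) = mk f * mk g := by
  ext n
  simp only [antidiagonalSeries, coeff_mk, coeff_mul]

lemma antidiagonalSeries_add (F G : ℕ → ℕ → K) :
    antidiagonalSeries (fun i j => F i j + G i j) =
      antidiagonalSeries F + antidiagonalSeries G := by
  ext n
  simp only [antidiagonalSeries, coeff_mk, map_add, Finset.sum_add_distrib]

lemma antidiagonalSeries_const_mul (c : K) (F : ℕ → ℕ → K) :
    antidiagonalSeries (fun i j => c * F i j) = C c * antidiagonalSeries F := by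
  ext n
  simp only [antidiagonalSeries, coeff_mk, coeff_C_mul, Finset.mul_sum]

lemma mk_const (c : K) : (mk fun _ => c) = C c * mk fun _ => 1 := by
  ext n
  rw [coeff_C_mul, coeff_mk, coeff_mk, mul_one]

lemma antidiagonalSeries_const (c : K) :
    antidiagonalSeries (fun _ _ => c) = C c * (mk fun _ => 1) ^ 2 := by
  have h := antidiagonalSeries_mul_mul (fun _ => c) fun _ => 1
  simp only [mul_one] at h
  rw [h, mk_const, sq, mul_assoc]

lemma antidiagonalSeries_eq_left (F : ℕ → ℕ → K) :
    antidiagonalSeries F = mk (F 0) + X * antidiagonalSeries fun i j => F (i + 1) j := by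
  ext (_ | n)
  · simp [antidiagonalSeries]
  · simp only [antidiagonalSeries, coeff_mk, map_add, coeff_succ_X_mul,
      Finset.Nat.sum_antidiagonal_succ]

lemma antidiagonalSeries_eq_right (F : ℕ → ℕ → K) :
    antidiagonalSeries F = mk (F · 0) + X * antidiagonalSeries fun i j => F i (j + 1) := by
  ext (_ | n)
  · simp [antidiagonalSeries]
  · simp only [antidiagonalSeries, coeff_mk, map_add, coeff_succ_X_mul,
      Finset.Nat.sum_antidiagonal_succ']

lemma mk_eq_C_add_X_mul (f : ℕ → K) : mk f = C (f 0) + X * mk fun n => f (n + 1) := by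
  ext (_ | n)
  · simp
  · simp [coeff_succ_X_mul]

lemma antidiagonalSeries_eq_corner (F : ℕ → ℕ → K) :
    antidiagonalSeries F = C (F 0 0) + X * (mk (fun j => F 0 (j + 1)) + mk fun i => F (i + 1) 0) +
      X ^ 2 * antidiagonalSeries fun i j => F (i + 1) (j + 1) := by
  rw [antidiagonalSeries_eq_left, mk_eq_C_add_X_mul, antidiagonalSeries_eq_right fun i j => _]
  ring

/-- The generating series of a triply indexed sequence by total degree. -/
noncomputable def tripleAntidiagonalSeries (F : ℕ → ℕ → ℕ → K) : K⟦X⟧ :=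
  antidiagonalSeries fun i n => coeff n (antidiagonalSeries (F i))

lemma tripleAntidiagonalSeries_eq_left (F : ℕ → ℕ → ℕ → K) :
    tripleAntidiagonalSeries F =
      antidiagonalSeries (F 0) + X * tripleAntidiagonalSeries fun i => F (i + 1) := by
  rw [tripleAntidiagonalSeries, antidiagonalSeries_eq_left, tripleAntidiagonalSeries]
  congr 1
  ext n
  rw [coeff_mk]

lemma tripleAntidiagonalSeries_eq_mid (F : ℕ → ℕ → ℕ → K) :
    tripleAntidiagonalSeries F = antidiagonalSeries (fun i k => F i 0 k) +
      X * tripleAntidiagonalSeries fun i j => F i (j + 1) := by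
  simp only [tripleAntidiagonalSeries]
  rw [antidiagonalSeries_eq_right, antidiagonalSeries_eq_right fun i k => F i 0 k, add_assoc,
    ← mul_add, ← antidiagonalSeries_add]
  congr
  · simp [antidiagonalSeries]
  · ext i n
    rw [antidiagonalSeries_eq_left, map_add, coeff_succ_X_mul, coeff_mk]

lemma tripleAntidiagonalSeries_eq_right (F : ℕ → ℕ → ℕ → K) :
    tripleAntidiagonalSeries F = antidiagonalSeries (fun i j => F i j 0) +
      X * tripleAntidiagonalSeries fun i j k => F i j (k + 1) := by
  simp only [tripleAntidiagonalSeries]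
  rw [antidiagonalSeries_eq_right, antidiagonalSeries_eq_right fun i j => F i j 0, add_assoc,
    ← mul_add, ← antidiagonalSeries_add]
  congr
  · simp [antidiagonalSeries]
  · ext i n
    rw [antidiagonalSeries_eq_right, map_add, coeff_succ_X_mul, coeff_mk]

lemma tripleAntidiagonalSeries_zero :
    tripleAntidiagonalSeries (fun _ _ _ => (0 : K)) = 0 := by
  ext n
  simp [tripleAntidiagonalSeries, antidiagonalSeries]

end AntidiagonalSeries

section CongruenceRoots

variable {p i j k : ℕ} {t : ℤ}

/-- The integers `0 ≤ t < p ^ k` satisfying `t² ≡ p ^ i t` modulo `p ^ j`. -/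
noncomputable def congruenceRoots (p i j k : ℕ) : Finset ℤ :=
  {t ∈ Finset.Ico 0 ((p : ℤ) ^ k) | (p : ℤ) ^ j ∣ t ^ 2 - p ^ i * t}

/-- The number of solutions of `t² ≡ p ^ i t` modulo `p ^ j`. -/
noncomputable def rootCount (p i j : ℕ) : ℕ := (congruenceRoots p i j j).card

lemma mem_congruenceRoots : t ∈ congruenceRoots p i j k ↔
    (0 ≤ t ∧ t < (p : ℤ) ^ k) ∧ (p : ℤ) ^ j ∣ t ^ 2 - p ^ i * t := by
  rw [congruenceRoots, Finset.mem_filter, Finset.mem_Ico]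

lemma rootCount_zero_right : rootCount p i 0 = 1 := by
  rw [rootCount, Finset.card_eq_one]
  refine ⟨0, ?_⟩
  ext t
  rw [mem_congruenceRoots, Finset.mem_singleton]
  simp only [pow_zero, isUnit_one, IsUnit.dvd, and_true]
  lia

variable [Fact p.Prime]

lemma dvd_of_dvd_sq_sub (h : (p : ℤ) ^ (j + 1) ∣ t ^ 2 - p ^ (i + 1) * t) : (p : ℤ) ∣ t := by
  refine prime_intCast.dvd_of_dvd_pow (n := 2) ?_
  rw [← sub_add_cancel (t ^ 2) ((p : ℤ) ^ (i + 1) * t)]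
  exact dvd_add ((dvd_pow_self _ j.succ_ne_zero).trans h)
    ((dvd_pow_self _ i.succ_ne_zero).mul_right _)

lemma congruenceRoots_succ :
    congruenceRoots p (i + 1) (j + 2) (k + 1) =
      (congruenceRoots p i j k).image ((p : ℤ) * ·) := by
  have hp : (0 : ℤ) < p := mod_cast (Fact.out : p.Prime).pos
  have hmem (s : ℤ) : p * s ∈ congruenceRoots p (i + 1) (j + 2) (k + 1) ↔
      s ∈ congruenceRoots p i j k := by
    rw [mem_congruenceRoots, mem_congruenceRoots, pow_succ' _ k, mul_nonneg_iff_of_pos_left hp,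
      mul_lt_mul_iff_right₀ hp, pow_add _ j,
      show (p * s) ^ 2 - (p : ℤ) ^ (i + 1) * (p * s) = (s ^ 2 - p ^ i * s) * p ^ 2 by ring,
      mul_dvd_mul_iff_right (pow_ne_zero 2 hp.ne')]
  ext t
  rw [Finset.mem_image]
  constructor
  · intro ht
    obtain ⟨s, rfl⟩ := dvd_of_dvd_sq_sub (mem_congruenceRoots.1 ht).2
    exact ⟨s, (hmem s).1 ht, rfl⟩
  · rintro ⟨s, hs, rfl⟩
    exact (hmem s).2 hs

lemma card_congruenceRoots_succ :
    (congruenceRoots p (i + 1) (j + 2) (k + 1)).card = (congruenceRoots p i j k).card := by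
  rw [congruenceRoots_succ]
  exact Finset.card_image_of_injective _ (mul_right_injective₀ prime_intCast.ne_zero)

lemma card_congruenceRoots_self_succ :
    (congruenceRoots p i j (j + 1)).card = p * rootCount p i j := by
  have hp : (0 : ℤ) < p ^ j := pow_pos (mod_cast (Fact.out : p.Prime).pos) j
  have hmod (t s : ℤ) : (p : ℤ) ^ j ∣ (t + p ^ j * s) ^ 2 - p ^ i * (t + p ^ j * s) ↔
      (p : ℤ) ^ j ∣ t ^ 2 - p ^ i * t := by
    rw [show (t + (p : ℤ) ^ j * s) ^ 2 - p ^ i * (t + p ^ j * s) =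
      t ^ 2 - p ^ i * t + p ^ j * (s * (2 * t + p ^ j * s - p ^ i)) by ring]
    exact dvd_add_left (dvd_mul_right _ _)
  have hcard : p * rootCount p i j =
      (Finset.Ico (0 : ℤ) p ×ˢ congruenceRoots p i j j).card := by
    rw [Finset.card_product, Int.card_Ico, sub_zero, Int.toNat_natCast, rootCount]
  rw [hcard]
  refine Finset.card_nbij' (fun t => (t / p ^ j, t % p ^ j)) (fun x => x.2 + p ^ j * x.1)
    ?_ ?_ ?_ ?_
  · intro t ht
    obtain ⟨⟨h0, hlt⟩, hdvd⟩ := mem_congruenceRoots.1 ht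
    rw [← Int.emod_add_mul_ediv t (p ^ j), hmod] at hdvd
    exact Finset.mem_product.2 ⟨Finset.mem_Ico.2 ⟨Int.ediv_nonneg h0 hp.le,
      Int.ediv_lt_of_lt_mul hp (by rwa [← pow_succ'])⟩,
      mem_congruenceRoots.2 ⟨⟨Int.emod_nonneg _ hp.ne', Int.emod_lt_of_pos _ hp⟩, hdvd⟩⟩
  · rintro ⟨s, t⟩ hst
    obtain ⟨hs, ht⟩ := Finset.mem_product.1 hst
    obtain ⟨hs0, hs⟩ := Finset.mem_Ico.1 hs
    obtain ⟨⟨h0, hlt⟩, hdvd⟩ := mem_congruenceRoots.1 ht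
    refine mem_congruenceRoots.2 ⟨⟨by positivity, ?_⟩, (hmod t s).2 hdvd⟩
    calc t + (p : ℤ) ^ j * s < p ^ j * (s + 1) := by linarith
      _ ≤ p ^ j * p := by gcongr; exact hs
      _ = p ^ (j + 1) := (pow_succ _ _).symm
  · exact fun t _ => Int.emod_add_mul_ediv t _
  · rintro ⟨s, t⟩ hst
    obtain ⟨h0, hlt⟩ := (mem_congruenceRoots.1 (Finset.mem_product.1 hst).2).1
    simp [Int.add_mul_ediv_left, hp.ne', Int.ediv_eq_zero_of_lt h0 hlt, Int.emod_eq_of_lt h0 hlt]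

lemma rootCount_succ_add_two : rootCount p (i + 1) (j + 2) = p * rootCount p i j := by
  rw [rootCount, card_congruenceRoots_succ, card_congruenceRoots_self_succ]

lemma rootCount_succ_one : rootCount p (i + 1) 1 = 1 := by
  rw [rootCount, Finset.card_eq_one]
  refine ⟨0, ?_⟩
  ext t
  rw [mem_congruenceRoots, Finset.mem_singleton]
  constructor
  · rintro ⟨⟨h0, hlt⟩, hdvd⟩
    exact Int.eq_zero_of_dvd_of_nonneg_of_lt h0 (by simpa using hlt)
      (dvd_of_dvd_sq_sub (j := 0) hdvd)
  · rintro rfl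
    simp [(Fact.out : p.Prime).pos]

lemma congruenceRoots_zero_left (j : ℕ) :
    congruenceRoots p 0 (j + 1) (j + 1) = {0, 1} := by
  have hp : (1 : ℤ) < p ^ (j + 1) :=
    one_lt_pow₀ (mod_cast (Fact.out : p.Prime).one_lt) j.succ_ne_zero
  ext t
  rw [mem_congruenceRoots, Finset.mem_insert, Finset.mem_singleton]
  constructor
  · rintro ⟨⟨h0, hlt⟩, hdvd⟩
    have hfactor : (p : ℤ) ^ (j + 1) ∣ t * (t - 1) := by
      convert hdvd using 1; ring
    by_cases ht : (p : ℤ) ∣ t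
    · refine .inl (Int.eq_zero_of_dvd_of_nonneg_of_lt h0 hlt
        (prime_intCast.pow_dvd_of_dvd_mul_right _ (fun h => ?_) hfactor))
      exact prime_intCast.not_dvd_one (by simpa using dvd_sub ht h)
    · have h1 : t ≠ 0 := fun h => ht (h ▸ dvd_zero _)
      exact .inr (sub_eq_zero.1 (Int.eq_zero_of_dvd_of_nonneg_of_lt (by lia) (by lia)
        (prime_intCast.pow_dvd_of_dvd_mul_left _ ht hfactor)))
  · rintro (rfl | rfl)
    · simp [zero_lt_one.trans hp]
    · simp [hp]

lemma rootCount_zero_succ : rootCount p 0 (j + 1) = 2 := by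
  rw [rootCount, congruenceRoots_zero_left, Finset.card_pair zero_ne_one]

/-- The generating series of `rootCount` by total degree. -/
noncomputable def rootSeries (p : ℕ) : ℚ⟦X⟧ := antidiagonalSeries fun i j => (rootCount p i j : ℚ)

/-- The generating series of `rootCount` by total degree, without the boundary terms. -/
noncomputable def innerRootSeries (p : ℕ) : ℚ⟦X⟧ :=
  antidiagonalSeries fun i j => (rootCount p (i + 1) (j + 1) : ℚ)

lemma rootSeries_eq_innerRootSeries :
    rootSeries p = 1 + 3 * X * mk (fun _ => 1) + X ^ 2 * innerRootSeries p := by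
  rw [rootSeries, antidiagonalSeries_eq_corner, ← innerRootSeries]
  simp only [rootCount_zero_succ, rootCount_zero_right, Nat.cast_ofNat, Nat.cast_one, map_one,
    mk_const (2 : ℚ), map_ofNat]
  ring

lemma innerRootSeries_eq_rootSeries :
    innerRootSeries p = mk (fun _ => 1) + (p : ℚ⟦X⟧) * X * rootSeries p := by
  rw [innerRootSeries, antidiagonalSeries_eq_right, rootSeries]
  simp only [zero_add, rootCount_succ_one, rootCount_succ_add_two, Nat.cast_mul, Nat.cast_one,
    antidiagonalSeries_const_mul, map_natCast]
  ring

lemma rootSeries_mul : rootSeries p * ((1 - X) * (1 - (p : ℚ⟦X⟧) * X ^ 3)) = (1 + X) ^ 2 := by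
  linear_combination (1 - X) * rootSeries_eq_innerRootSeries (p := p) +
    (1 - X) * X ^ 2 * innerRootSeries_eq_rootSeries (p := p) +
    (3 * X + X ^ 2) * mk_one_mul_one_sub_eq_one ℚ

end CongruenceRoots

end SubringZeta

namespace SubringZeta

open Submodule

section DiagonalSum

variable {p a b c i j : ℕ} {x y z : ℤ}

open Classical in
/-- The entries `(x, y, z)` above the diagonal of the reduced Hermite normal forms with diagonal
`(p ^ a, p ^ b, p ^ c)` that span a primitive subring lattice. -/
noncomputable def primitiveHnfEntries (p a b c : ℕ) : Finset (ℤ × ℤ × ℤ) :=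
  {t ∈ Finset.Ico 0 ((p : ℤ) ^ b) ×ˢ Finset.Ico 0 ((p : ℤ) ^ c) ×ˢ Finset.Ico 0 ((p : ℤ) ^ c) |
    hnf (p ^ a) (p ^ b) (p ^ c) t.1 t.2.1 t.2.2 ∈ primitiveSubringLattices (Fin 3 → ℤ) p}

/-- The sum of the weight `w` over the primitive subring lattices of `ℤ³` whose Hermite normal form
has diagonal `(p ^ a, p ^ b, p ^ c)`. -/
noncomputable def diagonalSum (p : ℕ) (w : Submodule ℤ (Fin 3 → ℤ) → ℚ) (a b c : ℕ) : ℚ :=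
  ∑ t ∈ primitiveHnfEntries p a b c, w (hnf (p ^ a) (p ^ b) (p ^ c) t.1 t.2.1 t.2.2)

variable [Fact p.Prime]

lemma addIndex_hnf_pow : addIndex (hnf ((p : ℤ) ^ a) (p ^ b) (p ^ c) x y z) = p ^ (a + b + c) := by
  rw [addIndex_hnf (pow_intCast_ne_zero a) (pow_intCast_ne_zero b) (pow_intCast_ne_zero c),
    ← pow_add, ← pow_add, Int.natAbs_pow, Int.natAbs_natCast]

lemma dvd_pow_iff_ne_zero : (p : ℤ) ∣ p ^ a ↔ a ≠ 0 := by
  refine ⟨?_, dvd_pow_self _⟩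
  rintro h rfl
  exact prime_intCast.not_dvd_one (by simpa using h)

lemma hnf_mem_primitiveSubringLattices :
    hnf (p ^ a) (p ^ b) (p ^ c) x y z ∈ primitiveSubringLattices (Fin 3 → ℤ) p ↔
      (a = 0 ∨ b = 0 ∨ c = 0) ∧ ∃ q r s u, IsHnfMulTable (p ^ a) (p ^ b) (p ^ c) x y z q r s u := by
  have hprimitive {q r s u : ℤ} (h : IsHnfMulTable (p ^ a) (p ^ b) (p ^ c) x y z q r s u) :
      ¬ hnf (p ^ a) (p ^ b) (p ^ c) x y z ≤ scalar p * ⊤ ↔ a = 0 ∨ b = 0 ∨ c = 0 := by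
    rw [h.hnf_le_scalar_mul_top, dvd_pow_iff_ne_zero, dvd_pow_iff_ne_zero, dvd_pow_iff_ne_zero]
    tauto
  simp only [primitiveSubringLattices, subringLattices, Set.mem_ofPred_eq,
    isMulClosed_hnf (pow_intCast_ne_zero a) (pow_intCast_ne_zero b),
    IsPLattice.of_addIndex addIndex_hnf_pow, true_and]
  constructor
  · rintro ⟨⟨q, r, s, u, h⟩, hle⟩
    exact ⟨(hprimitive h).1 hle, q, r, s, u, h⟩
  · rintro ⟨habc, q, r, s, u, h⟩
    exact ⟨⟨q, r, s, u, h⟩, (hprimitive h).2 habc⟩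

lemma mem_primitiveHnfEntries : (x, y, z) ∈ primitiveHnfEntries p a b c ↔
    ((0 ≤ x ∧ x < (p : ℤ) ^ b) ∧ (0 ≤ y ∧ y < (p : ℤ) ^ c) ∧ (0 ≤ z ∧ z < (p : ℤ) ^ c)) ∧
      (a = 0 ∨ b = 0 ∨ c = 0) ∧ ∃ q r s u, IsHnfMulTable (p ^ a) (p ^ b) (p ^ c) x y z q r s u := by
  classical
  rw [primitiveHnfEntries, Finset.mem_filter, hnf_mem_primitiveSubringLattices,
    Finset.mem_product, Finset.mem_product, Finset.mem_Ico, Finset.mem_Ico, Finset.mem_Ico]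

lemma pow_eq_of_pow_dvd_pow {m n : ℕ} (h : (p : ℤ) ^ m ∣ p ^ n) (h' : (p : ℤ) ^ n ∣ p ^ m) :
    m = n :=
  le_antisymm ((pow_dvd_pow_iff prime_intCast.ne_zero prime_intCast.not_isUnit).1 h)
    ((pow_dvd_pow_iff prime_intCast.ne_zero prime_intCast.not_isUnit).1 h')

lemma primitiveHnfEntries_injective {a' b' c' : ℕ} {t t' : ℤ × ℤ × ℤ}
    (ht : t ∈ primitiveHnfEntries p a b c) (ht' : t' ∈ primitiveHnfEntries p a' b' c')
    (h : hnf (p ^ a) (p ^ b) (p ^ c) t.1 t.2.1 t.2.2 =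
      hnf (p ^ a') (p ^ b') (p ^ c') t'.1 t'.2.1 t'.2.2) :
    a = a' ∧ b = b' ∧ c = c' ∧ t = t' := by
  obtain ⟨ha, hb, hc⟩ := dvd_of_hnf_le (pow_intCast_ne_zero a') (pow_intCast_ne_zero b') h.le
  obtain ⟨ha', hb', hc'⟩ := dvd_of_hnf_le (pow_intCast_ne_zero a) (pow_intCast_ne_zero b) h.ge
  obtain rfl := pow_eq_of_pow_dvd_pow ha ha'
  obtain rfl := pow_eq_of_pow_dvd_pow hb hb'
  obtain rfl := pow_eq_of_pow_dvd_pow hc hc'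
  obtain ⟨x, y, z⟩ := t
  obtain ⟨x', y', z'⟩ := t'
  rw [mem_primitiveHnfEntries, ← Finset.mem_Ico, ← Finset.mem_Ico, ← Finset.mem_Ico] at ht ht'
  obtain ⟨⟨hx, hy, hz⟩, _⟩ := ht
  obtain ⟨⟨hx', hy', hz'⟩, _⟩ := ht'
  obtain ⟨rfl, rfl, rfl⟩ := reduced_hnf_injective (pow_intCast_ne_zero _) (pow_intCast_ne_zero _) h
    hx hy hz hx' hy' hz'
  exact ⟨rfl, rfl, rfl, rfl⟩

lemma exists_mem_primitiveHnfEntries {M : Submodule ℤ (Fin 3 → ℤ)}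
    (hM : M ∈ primitiveSubringLattices (Fin 3 → ℤ) p) :
    ∃ a b c, ∃ t ∈ primitiveHnfEntries p a b c,
      hnf (p ^ a) (p ^ b) (p ^ c) t.1 t.2.1 t.2.2 = M := by
  have hp (n : ℕ) : (0 : ℤ) < (p : ℤ) ^ n := pow_pos (mod_cast (Fact.out : p.Prime).pos) n
  obtain ⟨a, b, c, x, y, z, rfl⟩ := hM.1.1.exists_eq_hnf
  obtain ⟨x', hx, y', hy, z', hz, h⟩ := exists_reduced_hnf (A := p ^ a) (hp b) (hp c) x y z
  rw [h, hnf_mem_primitiveSubringLattices] at hM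
  rw [Finset.mem_Ico] at hx hy hz
  exact ⟨a, b, c, (x', y', z'), mem_primitiveHnfEntries.2 ⟨⟨hx, hy, hz⟩, hM⟩, h.symm⟩

lemma bijOn_primitiveHnfEntries (n : ℕ) :
    Set.BijOn (fun x : Σ _ : (Σ _ : ℕ × ℕ, ℕ × ℕ), ℤ × ℤ × ℤ =>
        hnf (p ^ x.1.1.1) (p ^ x.1.2.1) (p ^ x.1.2.2) x.2.1 x.2.2.1 x.2.2.2)
      (((Finset.HasAntidiagonal.antidiagonal n).sigma fun i =>
        Finset.HasAntidiagonal.antidiagonal i.2).sigma fun x =>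
          primitiveHnfEntries p x.1.1 x.2.1 x.2.2)
      (primitiveSubringLattices (Fin 3 → ℤ) p ∩ {M | addIndex M = p ^ n}) := by
  refine ⟨?_, ?_, ?_⟩
  · rintro ⟨⟨⟨a, m⟩, b, c⟩, x, y, z⟩ h
    simp only [Finset.coe_sigma, Set.mem_sigma_iff, Finset.mem_coe,
      Finset.HasAntidiagonal.mem_antidiagonal] at h
    obtain ⟨⟨rfl, rfl⟩, ht⟩ := h
    exact ⟨hnf_mem_primitiveSubringLattices.2 (mem_primitiveHnfEntries.1 ht).2,
      by rw [Set.mem_ofPred_eq, addIndex_hnf_pow, add_assoc]⟩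
  · rintro ⟨⟨⟨a, m⟩, b, c⟩, t⟩ h ⟨⟨⟨a', m'⟩, b', c'⟩, t'⟩ h' heq
    simp only [Finset.coe_sigma, Set.mem_sigma_iff, Finset.mem_coe,
      Finset.HasAntidiagonal.mem_antidiagonal] at h h'
    obtain ⟨⟨_, rfl⟩, ht⟩ := h
    obtain ⟨⟨_, rfl⟩, ht'⟩ := h'
    obtain ⟨rfl, rfl, rfl, rfl⟩ := primitiveHnfEntries_injective ht ht' heq
    rfl
  · rintro M ⟨hM, hn⟩
    obtain ⟨a, b, c, t, ht, rfl⟩ := exists_mem_primitiveHnfEntries hM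
    rw [Set.mem_ofPred_eq, addIndex_hnf_pow] at hn
    refine ⟨⟨⟨(a, b + c), b, c⟩, t⟩, ?_, rfl⟩
    simpa [ht, ← add_assoc] using Nat.pow_right_injective (Fact.out : p.Prime).two_le hn

lemma latticeSeries_primitiveSubringLattices_eq (w : Submodule ℤ (Fin 3 → ℤ) → ℚ) :
    latticeSeries p (primitiveSubringLattices (Fin 3 → ℤ) p) w =
      tripleAntidiagonalSeries (diagonalSum p w) := by
  ext n
  simp only [coeff_latticeSeries, tripleAntidiagonalSeries, antidiagonalSeries,
    PowerSeries.coeff_mk, diagonalSum]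
  rw [Finset.sum_sigma', Finset.sum_sigma', ← finsum_mem_coe_finset]
  exact (finsum_mem_eq_of_bijOn _ (bijOn_primitiveHnfEntries n) fun _ _ => rfl).symm

end DiagonalSum

section PrimitiveHnfEntries

variable {p a b c : ℕ} {x y z : ℤ}

lemma eq_zero_of_mem_Ico_pow_zero (h : 0 ≤ x ∧ x < (p : ℤ) ^ 0) : x = 0 := by
  rw [pow_zero] at h
  lia

variable [Fact p.Prime]

lemma zero_mem_Ico_pow (n : ℕ) : 0 ≤ (0 : ℤ) ∧ (0 : ℤ) < (p : ℤ) ^ n :=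
  ⟨le_rfl, pow_pos (mod_cast (Fact.out : p.Prime).pos) n⟩

lemma one_mem_Ico_pow (n : ℕ) : 0 ≤ (1 : ℤ) ∧ (1 : ℤ) < (p : ℤ) ^ (n + 1) :=
  ⟨zero_le_one, one_lt_pow₀ (mod_cast (Fact.out : p.Prime).one_lt) n.succ_ne_zero⟩

lemma eq_zero_or_one_of_dvd (h : 0 ≤ x ∧ x < (p : ℤ) ^ (a + 1))
    (hdvd : (p : ℤ) ^ (a + 1) ∣ x ^ 2 - x) : x = 0 ∨ x = 1 := by
  have hx : x ∈ congruenceRoots p 0 (a + 1) (a + 1) :=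
    mem_congruenceRoots.2 ⟨h, by simpa using hdvd⟩
  simpa [congruenceRoots_zero_left] using hx

lemma primitiveHnfEntries_zero_zero : primitiveHnfEntries p a 0 0 = {(0, 0, 0)} := by
  ext ⟨x, y, z⟩
  rw [mem_primitiveHnfEntries, Finset.mem_singleton]
  constructor
  · rintro ⟨⟨hx, hy, hz⟩, _⟩
    rw [eq_zero_of_mem_Ico_pow_zero hx, eq_zero_of_mem_Ico_pow_zero hy,
      eq_zero_of_mem_Ico_pow_zero hz]
  · rintro ⟨⟩
    exact ⟨⟨zero_mem_Ico_pow 0, zero_mem_Ico_pow 0, zero_mem_Ico_pow 0⟩, by simp,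
      0, 0, 0, 0, ⟨by ring, by ring, by ring, by ring⟩⟩

lemma primitiveHnfEntries_right_zero : primitiveHnfEntries p a b 0 =
    (congruenceRoots p a b b).image fun x => (x, 0, 0) := by
  ext ⟨x, y, z⟩
  rw [mem_primitiveHnfEntries, Finset.mem_image]
  constructor
  · rintro ⟨⟨hx, hy, hz⟩, _, q, _, _, _, h⟩
    rw [eq_zero_of_mem_Ico_pow_zero hy, eq_zero_of_mem_Ico_pow_zero hz]
    exact ⟨x, mem_congruenceRoots.2 ⟨hx, Dvd.intro_left q h.q_mul⟩, rfl⟩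
  · rintro ⟨x, hx, ⟨⟩⟩
    obtain ⟨hx, q, hq⟩ := mem_congruenceRoots.1 hx
    exact ⟨⟨hx, zero_mem_Ico_pow 0, zero_mem_Ico_pow 0⟩, by simp,
      q, 0, 0, 0, ⟨by linear_combination -hq, by ring, by ring, by ring⟩⟩

lemma primitiveHnfEntries_mid_zero : primitiveHnfEntries p a 0 (c + 1) =
    insert (0, 0, 1) ((congruenceRoots p a (c + 1) (c + 1)).image fun y => (0, y, 0)) := by
  ext ⟨x, y, z⟩
  rw [mem_primitiveHnfEntries, Finset.mem_insert, Finset.mem_image]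
  constructor
  · rintro ⟨⟨hx, hy, hz⟩, _, q, r, s, u, h⟩
    obtain rfl := eq_zero_of_mem_Ico_pow_zero hx
    rcases eq_zero_or_one_of_dvd hz ⟨r, by linear_combination -h.r_mul⟩ with rfl | rfl
    · exact .inr ⟨y, mem_congruenceRoots.2 ⟨hy, u, by linear_combination -h.u_mul⟩, rfl⟩
    · have hy0 : y = 0 := Int.eq_zero_of_dvd_of_nonneg_of_lt hy.1 hy.2
        ⟨s, by linear_combination -h.s_mul⟩
      exact .inl (by rw [hy0])
  · rintro (⟨⟨⟩⟩ | ⟨y, hy, ⟨⟩⟩)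
    · exact ⟨⟨zero_mem_Ico_pow 0, zero_mem_Ico_pow _, one_mem_Ico_pow c⟩, by simp,
        0, 0, 0, 0, ⟨by ring, by ring, by ring, by ring⟩⟩
    · obtain ⟨hy, u, hu⟩ := mem_congruenceRoots.1 hy
      exact ⟨⟨zero_mem_Ico_pow 0, hy, zero_mem_Ico_pow _⟩, by simp,
        0, 0, 0, u, ⟨by ring, by ring, by ring, by linear_combination -hu⟩⟩

lemma mem_primitiveHnfEntries_of_mem_congruenceRoots (hx : x = 0 ∨ x = 1)
    (hz : z ∈ congruenceRoots p (b + 1) (c + 1) (c + 1)) :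
    (x, x, z) ∈ primitiveHnfEntries p 0 (b + 1) (c + 1) := by
  obtain ⟨hz, r, hr⟩ := mem_congruenceRoots.1 hz
  rw [mem_primitiveHnfEntries]
  rcases hx with rfl | rfl
  · exact ⟨⟨zero_mem_Ico_pow _, zero_mem_Ico_pow _, hz⟩, by simp,
      0, r, 0, 0, ⟨by ring, by linear_combination -hr, by ring, by ring⟩⟩
  · exact ⟨⟨one_mem_Ico_pow b, one_mem_Ico_pow c, hz⟩, by simp,
      0, r, 0, 0, ⟨by ring, by linear_combination -hr, by ring, by ring⟩⟩

lemma primitiveHnfEntries_left_zero : primitiveHnfEntries p 0 (b + 1) (c + 1) =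
    {(0, 1, 0), (1, 0, 0)} ∪
      ((congruenceRoots p (b + 1) (c + 1) (c + 1)).image (fun z => (0, 0, z)) ∪
        (congruenceRoots p (b + 1) (c + 1) (c + 1)).image fun z => (1, 1, z)) := by
  ext ⟨x, y, z⟩
  rw [mem_primitiveHnfEntries, Finset.mem_union, Finset.mem_union, Finset.mem_insert,
    Finset.mem_singleton, Finset.mem_image, Finset.mem_image]
  constructor
  · rintro ⟨⟨hx, hy, hz⟩, _, q, r, s, u, h⟩
    have hx01 : x = 0 ∨ x = 1 := eq_zero_or_one_of_dvd hx ⟨q, by linear_combination -h.q_mul⟩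
    have hq : q = 0 := by
      have hq0 : q * (p : ℤ) ^ (b + 1) = 0 := by
        rw [h.q_mul]; rcases hx01 with rfl | rfl <;> ring
      exact (mul_eq_zero.1 hq0).resolve_right (pow_intCast_ne_zero _)
    have hy01 : y = 0 ∨ y = 1 :=
      eq_zero_or_one_of_dvd hy ⟨u, by linear_combination z * hq - h.u_mul⟩
    have hroot : z ∈ congruenceRoots p (b + 1) (c + 1) (c + 1) :=
      mem_congruenceRoots.2 ⟨hz, r, by linear_combination -h.r_mul⟩
    have hz0 (hdvd : (p : ℤ) ^ (c + 1) ∣ z) : z = 0 :=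
      Int.eq_zero_of_dvd_of_nonneg_of_lt hz.1 hz.2 hdvd
    rcases hx01 with rfl | rfl <;> rcases hy01 with rfl | rfl
    · exact .inr (.inl ⟨z, hroot, rfl⟩)
    · exact .inl (.inl (by rw [hz0 ⟨s, by linear_combination -h.s_mul⟩]))
    · exact .inl (.inr (by rw [hz0 ⟨-s, by linear_combination h.s_mul⟩]))
    · exact .inr (.inr ⟨z, hroot, rfl⟩)
  · rintro ((⟨⟨⟩⟩ | ⟨⟨⟩⟩) | ⟨z, hz, ⟨⟩⟩ | ⟨z, hz, ⟨⟩⟩)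
    · exact ⟨⟨zero_mem_Ico_pow _, one_mem_Ico_pow c, zero_mem_Ico_pow _⟩, by simp,
        0, 0, 0, 0, ⟨by ring, by ring, by ring, by ring⟩⟩
    · exact ⟨⟨one_mem_Ico_pow b, zero_mem_Ico_pow _, zero_mem_Ico_pow _⟩, by simp,
        0, 0, 0, 0, ⟨by ring, by ring, by ring, by ring⟩⟩
    · exact mem_primitiveHnfEntries.1 (mem_primitiveHnfEntries_of_mem_congruenceRoots (.inl rfl) hz)
    · exact mem_primitiveHnfEntries.1 (mem_primitiveHnfEntries_of_mem_congruenceRoots (.inr rfl) hz)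

end PrimitiveHnfEntries

section TypeWeight

variable {p a b c i j : ℕ} {w : Submodule ℤ (Fin 3 → ℤ) → ℚ} {e₃ e₂ n d₀ d₁ : ℚ}

/-- The total weight of the roots counted by `rootCount p (i + 1) (j + 1)` when those that remain
roots modulo `p ^ (j + 2)`, of which there are `rootCount p i j`, weigh `d₀` and the others `d₁`. -/
noncomputable def rootWeight (p : ℕ) (d₀ d₁ : ℚ) (i j : ℕ) : ℚ :=
  d₀ * rootCount p i j + d₁ * (rootCount p (i + 1) (j + 1) - rootCount p i j)

lemma filter_dvd_congruenceRoots
    [DecidablePred fun t : ℤ => (p : ℤ) ^ (j + 1) ∣ t ^ 2 - p ^ i * t] :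
    {t ∈ congruenceRoots p i j j | (p : ℤ) ^ (j + 1) ∣ t ^ 2 - p ^ i * t} =
      congruenceRoots p i (j + 1) j := by
  ext t
  rw [Finset.mem_filter, mem_congruenceRoots, mem_congruenceRoots]
  exact ⟨fun h => ⟨h.1.1, h.2⟩, fun h => ⟨⟨h.1, (pow_dvd_pow _ j.le_succ).trans h.2⟩, h.2⟩⟩

/-- The weight `w` of a subring lattice of `ℤ³` depends only on the type of its reduction modulo
`p`: it is `e₃`, `e₂`, `n`, `d₀` when the reduced product is `normalMul k a r b` with
`(k, a, r, b) = (0, 1, 0, 1)`, `(0, 1, 0, 0)`, `(1, 0, 0, 0)`, `(0, 0, 0, 0)` respectively, and `d₁`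
when it is `normalMul 0 0 r 0` with `r ≠ 0`. -/
structure IsTypeWeight (p : ℕ) [Fact p.Prime] (w : Submodule ℤ (Fin 3 → ℤ) → ℚ)
    (e₃ e₂ n d₀ d₁ : ℚ) : Prop where
  eq_0101 {S : Submodule ℤ (Fin 3 → ℤ)} : HasReducedMul p S (normalMul 0 1 0 1) → w S = e₃
  eq_0100 {S : Submodule ℤ (Fin 3 → ℤ)} : HasReducedMul p S (normalMul 0 1 0 0) → w S = e₂
  eq_1000 {S : Submodule ℤ (Fin 3 → ℤ)} : HasReducedMul p S (normalMul 1 0 0 0) → w S = n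
  eq_0000 {S : Submodule ℤ (Fin 3 → ℤ)} : HasReducedMul p S (normalMul 0 0 0 0) → w S = d₀
  eq_00r0 {S : Submodule ℤ (Fin 3 → ℤ)} {r : ZMod p} :
    r ≠ 0 → HasReducedMul p S (normalMul 0 0 r 0) → w S = d₁

variable [Fact p.Prime]

lemma intCast_pow_succ_zmod (m : ℕ) : (((p : ℤ) ^ (m + 1) : ℤ) : ZMod p) = 0 := by
  simp

lemma IsTypeWeight.sum_congruenceRoots (hw : IsTypeWeight p w e₃ e₂ n d₀ d₁)
    {S : ℤ → Submodule ℤ (Fin 3 → ℤ)}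
    (hS : ∀ {t r : ℤ}, (t : ZMod p) = 0 → r * (p : ℤ) ^ (j + 1) = t ^ 2 - p ^ (i + 1) * t →
      HasReducedMul p (S t) (normalMul 0 0 (r : ZMod p) 0)) :
    ∑ t ∈ congruenceRoots p (i + 1) (j + 1) (j + 1), w (S t) = rootWeight p d₀ d₁ i j := by
  classical
  have hweight : ∀ t ∈ congruenceRoots p (i + 1) (j + 1) (j + 1),
      w (S t) = if (p : ℤ) ^ (j + 2) ∣ t ^ 2 - p ^ (i + 1) * t then d₀ else d₁ := by
    intro t ht
    obtain ⟨_, hdvd⟩ := mem_congruenceRoots.1 ht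
    have ht0 : (t : ZMod p) = 0 :=
      (ZMod.intCast_zmod_eq_zero_iff_dvd t p).2 (dvd_of_dvd_sq_sub hdvd)
    obtain ⟨r, hr⟩ := hdvd
    have hred := hS ht0 (r := r) (by rw [hr, mul_comm])
    have hiff : (p : ℤ) ^ (j + 2) ∣ t ^ 2 - p ^ (i + 1) * t ↔ (r : ZMod p) = 0 := by
      rw [hr, pow_succ _ (j + 1), mul_dvd_mul_iff_left (pow_intCast_ne_zero _),
        ZMod.intCast_zmod_eq_zero_iff_dvd]
    split_ifs with h
    · exact hw.eq_0000 ((hiff.1 h) ▸ hred)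
    · exact hw.eq_00r0 (mt hiff.2 h) hred
  have hcard : ((congruenceRoots p (i + 1) (j + 2) (j + 1)).card : ℚ) = rootCount p i j := by
    rw [card_congruenceRoots_succ, rootCount]
  have hsplit := Finset.card_filter_add_card_filter_not
    (s := congruenceRoots p (i + 1) (j + 1) (j + 1))
    (fun t => (p : ℤ) ^ (j + 2) ∣ t ^ 2 - p ^ (i + 1) * t)
  rw [Finset.sum_congr rfl hweight, Finset.sum_ite, Finset.sum_const, Finset.sum_const,
    nsmul_eq_mul, nsmul_eq_mul, rootWeight, rootCount.eq_def p (i + 1), ← hsplit, Nat.cast_add,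
    filter_dvd_congruenceRoots, hcard]
  ring

lemma IsTypeWeight.diagonalSum_zero_zero_zero (hw : IsTypeWeight p w e₃ e₂ n d₀ d₁) :
    diagonalSum p w 0 0 0 = e₃ := by
  rw [diagonalSum, primitiveHnfEntries_zero_zero, Finset.sum_singleton, pow_zero]
  exact hw.eq_0101 hasReducedMul_hnf_one_one_one

lemma IsTypeWeight.diagonalSum_succ_zero_zero (hw : IsTypeWeight p w e₃ e₂ n d₀ d₁) :
    diagonalSum p w (a + 1) 0 0 = e₂ := by
  rw [diagonalSum, primitiveHnfEntries_zero_zero, Finset.sum_singleton, pow_zero]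
  exact hw.eq_0100 (hasReducedMul_hnf_A_one_one (pow_intCast_ne_zero (a + 1))
    (intCast_pow_succ_zmod a))

lemma IsTypeWeight.diagonalSum_zero_succ_zero (hw : IsTypeWeight p w e₃ e₂ n d₀ d₁) :
    diagonalSum p w 0 (b + 1) 0 = 2 * e₂ := by
  have hB := pow_intCast_ne_zero (p := p) (b + 1)
  have hB' := intCast_pow_succ_zmod (p := p) b
  rw [diagonalSum, primitiveHnfEntries_right_zero, congruenceRoots_zero_left,
    Finset.sum_image fun _ _ _ _ h => (Prod.ext_iff.1 h).1, Finset.sum_pair zero_ne_one, pow_zero,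
    hw.eq_0100 (hasReducedMul_hnf_one_B_one hB hB'),
    hw.eq_0100 (hasReducedMul_hnf_one_B_one_x hB hB'), two_mul]

lemma IsTypeWeight.diagonalSum_zero_zero_succ (hw : IsTypeWeight p w e₃ e₂ n d₀ d₁) :
    diagonalSum p w 0 0 (c + 1) = 3 * e₂ := by
  have hC := pow_intCast_ne_zero (p := p) (c + 1)
  have hC' := intCast_pow_succ_zmod (p := p) c
  rw [diagonalSum, primitiveHnfEntries_mid_zero, congruenceRoots_zero_left,
    Finset.sum_insert (by simp),
    Finset.sum_image fun _ _ _ _ h => (Prod.ext_iff.1 (Prod.ext_iff.1 h).2).1,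
    Finset.sum_pair zero_ne_one, pow_zero, hw.eq_0100 (hasReducedMul_hnf_one_one_C hC hC'),
    hw.eq_0100 (hasReducedMul_hnf_one_one_C_y hC hC'),
    hw.eq_0100 (hasReducedMul_hnf_one_one_C_z hC hC')]
  ring

lemma IsTypeWeight.diagonalSum_succ_succ_zero (hw : IsTypeWeight p w e₃ e₂ n d₀ d₁) :
    diagonalSum p w (a + 1) (b + 1) 0 = rootWeight p d₀ d₁ a b := by
  rw [diagonalSum, primitiveHnfEntries_right_zero,
    Finset.sum_image fun _ _ _ _ h => (Prod.ext_iff.1 h).1, pow_zero]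
  exact hw.sum_congruenceRoots fun hx hq =>
    hasReducedMul_hnf_A_B_one (pow_intCast_ne_zero (a + 1)) (pow_intCast_ne_zero (b + 1))
      (intCast_pow_succ_zmod a) (intCast_pow_succ_zmod b) hx hq

lemma IsTypeWeight.diagonalSum_succ_zero_succ (hw : IsTypeWeight p w e₃ e₂ n d₀ d₁) :
    diagonalSum p w (a + 1) 0 (c + 1) = n + rootWeight p d₀ d₁ a c := by
  have hA := pow_intCast_ne_zero (p := p) (a + 1)
  have hA' := intCast_pow_succ_zmod (p := p) a
  have hC := pow_intCast_ne_zero (p := p) (c + 1)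
  have hC' := intCast_pow_succ_zmod (p := p) c
  rw [diagonalSum, primitiveHnfEntries_mid_zero, Finset.sum_insert (by simp),
    Finset.sum_image fun _ _ _ _ h => (Prod.ext_iff.1 (Prod.ext_iff.1 h).2).1, pow_zero,
    hw.eq_1000 (hasReducedMul_hnf_A_one_C_z hA hC hA' hC'),
    hw.sum_congruenceRoots fun hy hu => hasReducedMul_hnf_A_one_C_y hA hC hA' hC' hy hu]

lemma IsTypeWeight.diagonalSum_zero_succ_succ (hw : IsTypeWeight p w e₃ e₂ n d₀ d₁) :
    diagonalSum p w 0 (b + 1) (c + 1) = 2 * n + 2 * rootWeight p d₀ d₁ b c := by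
  have hB := pow_intCast_ne_zero (p := p) (b + 1)
  have hB' := intCast_pow_succ_zmod (p := p) b
  have hC := pow_intCast_ne_zero (p := p) (c + 1)
  have hC' := intCast_pow_succ_zmod (p := p) c
  rw [diagonalSum, primitiveHnfEntries_left_zero,
    Finset.sum_union (by simp [Finset.disjoint_left]),
    Finset.sum_union (by simp [Finset.disjoint_left]), Finset.sum_pair (by simp),
    Finset.sum_image fun _ _ _ _ h => (Prod.ext_iff.1 (Prod.ext_iff.1 h).2).2,
    Finset.sum_image fun _ _ _ _ h => (Prod.ext_iff.1 (Prod.ext_iff.1 h).2).2, pow_zero,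
    hw.eq_1000 (hasReducedMul_hnf_one_B_C_y hB hC hB' hC'),
    hw.eq_1000 (hasReducedMul_hnf_one_B_C_x hB hC hB' hC'),
    hw.sum_congruenceRoots fun hz hr => hasReducedMul_hnf_one_B_C_z hB hC hB' hC' hz hr,
    hw.sum_congruenceRoots fun hz hr => hasReducedMul_hnf_one_B_C_xyz hB hC hB' hC' hz hr]
  ring

lemma diagonalSum_succ_succ_succ : diagonalSum p w (a + 1) (b + 1) (c + 1) = 0 := by
  have hempty : primitiveHnfEntries p (a + 1) (b + 1) (c + 1) = ∅ :=
    Finset.eq_empty_of_forall_notMem fun _ ht => by simpa using (mem_primitiveHnfEntries.1 ht).2.1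
  rw [diagonalSum, hempty, Finset.sum_empty]

end TypeWeight

end SubringZeta

namespace SubringZeta

open PowerSeries

section PrimitiveSeries

variable {p : ℕ} {e₃ e₂ n d₀ d₁ : ℚ}

lemma antidiagonalSeries_rootWeight :
    antidiagonalSeries (rootWeight p d₀ d₁) =
      C d₀ * rootSeries p + C d₁ * (innerRootSeries p - rootSeries p) := by
  ext m
  simp only [rootWeight, rootSeries, innerRootSeries, antidiagonalSeries, coeff_mk, map_add,
    map_sub, coeff_C_mul, Finset.sum_add_distrib, Finset.sum_sub_distrib, Finset.mul_sum, mul_sub]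

variable [Fact p.Prime] {w : Submodule ℤ (Fin 3 → ℤ) → ℚ}

lemma IsTypeWeight.antidiagonalSeries_diagonalSum_zero (hw : IsTypeWeight p w e₃ e₂ n d₀ d₁) :
    antidiagonalSeries (diagonalSum p w 0) =
      C e₃ + 5 * C e₂ * X * PowerSeries.mk (fun _ => 1) +
        2 * X ^ 2 *
          (C n * PowerSeries.mk (fun _ => 1) ^ 2 + antidiagonalSeries (rootWeight p d₀ d₁)) := by
  rw [antidiagonalSeries_eq_corner]
  simp only [hw.diagonalSum_zero_zero_zero, hw.diagonalSum_zero_succ_zero,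
    hw.diagonalSum_zero_zero_succ, hw.diagonalSum_zero_succ_succ, antidiagonalSeries_add,
    antidiagonalSeries_const_mul, antidiagonalSeries_const, mk_const (_ * _ : ℚ), map_mul,
    map_ofNat]
  ring

lemma IsTypeWeight.antidiagonalSeries_diagonalSum_succ_zero
    (hw : IsTypeWeight p w e₃ e₂ n d₀ d₁) :
    antidiagonalSeries (fun a c => diagonalSum p w (a + 1) 0 c) =
      C e₂ * PowerSeries.mk (fun _ => 1) +
        X * (C n * PowerSeries.mk (fun _ => 1) ^ 2 + antidiagonalSeries (rootWeight p d₀ d₁)) := by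
  rw [antidiagonalSeries_eq_right]
  simp only [hw.diagonalSum_succ_zero_zero, hw.diagonalSum_succ_zero_succ, antidiagonalSeries_add,
    antidiagonalSeries_const, mk_const e₂]

lemma IsTypeWeight.latticeSeries_primitiveSubringLattices (hw : IsTypeWeight p w e₃ e₂ n d₀ d₁) :
    latticeSeries p (primitiveSubringLattices (Fin 3 → ℤ) p) w =
      C e₃ + 6 * C e₂ * X * PowerSeries.mk (fun _ => 1) +
        3 * C n * X ^ 2 * PowerSeries.mk (fun _ => 1) ^ 2 +
        4 * X ^ 2 * (C d₀ * rootSeries p + C d₁ * (innerRootSeries p - rootSeries p)) := by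
  rw [latticeSeries_primitiveSubringLattices_eq, tripleAntidiagonalSeries_eq_left,
    tripleAntidiagonalSeries_eq_mid, tripleAntidiagonalSeries_eq_right,
    hw.antidiagonalSeries_diagonalSum_zero, hw.antidiagonalSeries_diagonalSum_succ_zero]
  simp only [hw.diagonalSum_succ_succ_zero, diagonalSum_succ_succ_succ,
    tripleAntidiagonalSeries_zero]
  rw [← antidiagonalSeries_rootWeight]
  ring

lemma IsTypeWeight.latticeSeries_primitiveSubringLattices_mul
    (hw : IsTypeWeight p w e₃ e₂ n d₀ d₁) :
    latticeSeries p (primitiveSubringLattices (Fin 3 → ℤ) p) w *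
        ((1 - X) ^ 2 * (1 - (p : ℚ⟦X⟧) * X ^ 3)) =
      C e₃ * ((1 - X) ^ 2 * (1 - (p : ℚ⟦X⟧) * X ^ 3)) +
      6 * C e₂ * X * (1 - X) * (1 - (p : ℚ⟦X⟧) * X ^ 3) +
      3 * C n * X ^ 2 * (1 - (p : ℚ⟦X⟧) * X ^ 3) +
      4 * C d₀ * X ^ 2 * (1 - X) * (1 + X) ^ 2 +
      4 * C d₁ * X ^ 2 * ((1 - X) * (1 - (p : ℚ⟦X⟧) * X ^ 3) +
        ((p : ℚ⟦X⟧) * X - 1) * (1 - X) * (1 + X) ^ 2) := by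
  rw [hw.latticeSeries_primitiveSubringLattices, innerRootSeries_eq_rootSeries]
  linear_combination
    (6 * C e₂ * X * (1 - X) * (1 - (p : ℚ⟦X⟧) * X ^ 3) +
      3 * C n * X ^ 2 * (1 - (p : ℚ⟦X⟧) * X ^ 3) * (PowerSeries.mk (fun _ => 1) * (1 - X) + 1) +
      4 * C d₁ * X ^ 2 * ((1 - X) * (1 - (p : ℚ⟦X⟧) * X ^ 3))) * mk_one_mul_one_sub_eq_one ℚ +
    4 * X ^ 2 * (C d₀ + C d₁ * (p * X - 1)) * (1 - X) * rootSeries_mul (p := p)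

end PrimitiveSeries

section Assembly

variable {R : Type*} [CommRing R] {p : ℕ}

lemma one_sub_mul_X_pow_ne_zero {K : Type*} [CommRing K] [Nontrivial K] (f : K⟦X⟧) (k : ℕ) :
    1 - f * X ^ (k + 1) ≠ 0 := by
  intro h
  simpa using congrArg constantCoeff h

lemma subringCount_pow (i : ℕ) : subringCount R (p ^ i) =
    (subringLattices R p ∩ {M | addIndex M = p ^ i}).ncard := by
  rw [subringCount, ← Nat.card_coe_set_eq]
  exact Nat.card_congr
    { toFun S := ⟨S.1.toAddSubgroup.toIntSubmodule,
        ⟨.of_addIndex S.2, Submodule.mul_le.2 fun _ hx _ hy => S.1.mul_mem hx hy⟩, S.2⟩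
      invFun M := ⟨{ M.1.toAddSubgroup with
        mul_mem' := fun hx hy => M.2.1.2 (Submodule.mul_mem_mul hx hy) }, M.2.2⟩
      left_inv _ := rfl
      right_inv _ := rfl }

variable [Fact p.Prime]

lemma mk_subringCount [Module.Free ℤ R] [Module.Finite ℤ R] :
    (PowerSeries.mk fun i => (subringCount R (p ^ i) : ℚ)) =
      latticeSeries p (subringLattices R p) fun _ => 1 := by
  ext i
  rw [coeff_mk, coeff_latticeSeries, subringCount_pow,
    finsum_mem_eq_ncard_mul (finite_inter_setOf_addIndex_eq _ i) fun _ _ => rfl, one_mul]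

lemma isTypeWeight_one : IsTypeWeight p (fun _ => 1) 1 1 1 1 1 :=
  ⟨fun _ => rfl, fun _ => rfl, fun _ => rfl, fun _ => rfl, fun _ _ => rfl⟩

lemma isTypeWeight_nonclosedCount : IsTypeWeight p (fun S => (nonclosedCount p S : ℚ))
    (p ^ 2 + p - 5) (p ^ 2 + p - 3) (p ^ 2 + p - 2) (p ^ 2 - 1) (p ^ 2 + p - 1) :=
  ⟨nonclosedCount_0101, nonclosedCount_0100, nonclosedCount_1000, nonclosedCount_0000,
    nonclosedCount_00r0⟩

lemma isTypeWeight_generatingLineCount : IsTypeWeight p (fun S => (generatingLineCount p S : ℚ))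
    ((p - 2) * (p - 3)) ((p - 2) * (p - 1)) ((p - 1) ^ 2) 0 (p * (p - 1)) :=
  ⟨generatingLineCount_0101, generatingLineCount_0100, generatingLineCount_1000,
    generatingLineCount_0000, generatingLineCount_00r0⟩

lemma latticeSeries_primitive_one_mul :
    latticeSeries p (primitiveSubringLattices (Fin 3 → ℤ) p) (fun _ => 1) *
        ((1 - X) ^ 2 * (1 - (p : ℚ⟦X⟧) * X ^ 3)) =
      1 + 4 * X + 2 * X ^ 2 + (3 * (p : ℚ⟦X⟧) - 4) * X ^ 3 - 6 * (p : ℚ⟦X⟧) * X ^ 5 := by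
  rw [isTypeWeight_one.latticeSeries_primitiveSubringLattices_mul, map_one]
  ring

lemma latticeSeries_primitive_nonclosedCount_mul :
    latticeSeries p (primitiveSubringLattices (Fin 3 → ℤ) p) (fun S => (nonclosedCount p S : ℚ)) *
        ((1 - X) ^ 2 * (1 - (p : ℚ⟦X⟧) * X ^ 3)) =
      ((p : ℚ⟦X⟧) ^ 2 + (p : ℚ⟦X⟧) - 5) + (4 * (p : ℚ⟦X⟧) ^ 2 + 4 * (p : ℚ⟦X⟧) - 8) * X +
        (2 * (p : ℚ⟦X⟧) ^ 2 - 2 * (p : ℚ⟦X⟧) + 3) * X ^ 2 +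
        (3 * (p : ℚ⟦X⟧) ^ 3 - (p : ℚ⟦X⟧) ^ 2 - 7 * (p : ℚ⟦X⟧) + 4) * X ^ 3 +
        8 * (p : ℚ⟦X⟧) * X ^ 4 -
        (6 * (p : ℚ⟦X⟧) ^ 3 + 6 * (p : ℚ⟦X⟧) ^ 2 - 5 * (p : ℚ⟦X⟧)) * X ^ 5 := by
  rw [isTypeWeight_nonclosedCount.latticeSeries_primitiveSubringLattices_mul]
  simp only [map_one, map_add, map_sub, map_pow, map_natCast, map_ofNat]
  ring

lemma latticeSeries_primitive_generatingLineCount_mul :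
    latticeSeries p (primitiveSubringLattices (Fin 3 → ℤ) p)
          (fun S => (generatingLineCount p S : ℚ)) *
        ((1 - X) ^ 2 * (1 - (p : ℚ⟦X⟧) * X ^ 3)) =
      ((p : ℚ⟦X⟧) - 2) * ((p : ℚ⟦X⟧) - 3) + (4 * (p : ℚ⟦X⟧) ^ 2 - 8 * (p : ℚ⟦X⟧)) * X -
        (2 * (p : ℚ⟦X⟧) ^ 2 - 7 * (p : ℚ⟦X⟧) + 3) * X ^ 2 +
        (3 * (p : ℚ⟦X⟧) ^ 3 - 7 * (p : ℚ⟦X⟧) ^ 2 + 2 * (p : ℚ⟦X⟧)) * X ^ 3 +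
        (8 * (p : ℚ⟦X⟧) ^ 2 - 4 * (p : ℚ⟦X⟧)) * X ^ 4 -
        (6 * (p : ℚ⟦X⟧) ^ 3 - 5 * (p : ℚ⟦X⟧) ^ 2 + (p : ℚ⟦X⟧)) * X ^ 5 := by
  rw [isTypeWeight_generatingLineCount.latticeSeries_primitiveSubringLattices_mul]
  simp only [map_zero, map_one, map_sub, map_mul, map_pow, map_natCast, map_ofNat]
  ring

end Assembly

end SubringZeta

open PowerSeries in
/-- **The local subring zeta function of `ℤ³` with componentwise multiplication**
(Nakagawa; Liu): for every prime `p`, with `t = p^{-s}`,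
`ζ_{ℤ³,p}(s) · (1-t)²(1-p²t⁴)(1-p³t⁶) = 1 + 4t + 2t² + (4p-3)t³ + (5p-1)t⁴ + (p²-5p)t⁵ +
(3p²-4p)t⁶ - 2p²t⁷ - 4p²t⁸ - p²t⁹`. -/
theorem local_subring_zeta_Z3 (p : ℕ) (hp : p.Prime) :
    (PowerSeries.mk fun i => (subringCount (Fin 3 → ℤ) (p ^ i) : ℚ)) *
        ((1 - X) ^ 2 * (1 - (p : PowerSeries ℚ) ^ 2 * X ^ 4) *
          (1 - (p : PowerSeries ℚ) ^ 3 * X ^ 6))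
      = 1 + 4 * X + 2 * X ^ 2 + (4 * (p : PowerSeries ℚ) - 3) * X ^ 3 +
          (5 * (p : PowerSeries ℚ) - 1) * X ^ 4 +
          ((p : PowerSeries ℚ) ^ 2 - 5 * (p : PowerSeries ℚ)) * X ^ 5 +
          (3 * (p : PowerSeries ℚ) ^ 2 - 4 * (p : PowerSeries ℚ)) * X ^ 6 -
          2 * (p : PowerSeries ℚ) ^ 2 * X ^ 7 - 4 * (p : PowerSeries ℚ) ^ 2 * X ^ 8 -
          (p : PowerSeries ℚ) ^ 2 * X ^ 9 := by
  have : Fact p.Prime := ⟨hp⟩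
  have hcancel : (1 - 1 * X ^ 3 : ℚ⟦X⟧) * (1 - (p : ℚ⟦X⟧) * X ^ 3) ≠ 0 :=
    mul_ne_zero (SubringZeta.one_sub_mul_X_pow_ne_zero 1 2)
      (SubringZeta.one_sub_mul_X_pow_ne_zero (p : ℚ⟦X⟧) 2)
  refine mul_right_cancel₀ hcancel ?_
  rw [SubringZeta.mk_subringCount]
  linear_combination
    (1 - X) ^ 2 * (1 - (p : ℚ⟦X⟧) * X ^ 3) *
        SubringZeta.latticeSeries_subringLattices_one_mul (R := Fin 3 → ℤ) (p := p) +
      (1 - (p : ℚ⟦X⟧) ^ 2 * X ^ 4) * (1 - (p : ℚ⟦X⟧) ^ 3 * X ^ 6) *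
        SubringZeta.latticeSeries_primitive_one_mul (p := p) +
      X ^ 4 * (1 - (p : ℚ⟦X⟧) ^ 3 * X ^ 6) *
        SubringZeta.latticeSeries_primitive_nonclosedCount_mul (p := p) +
      (X ^ 5 + (p : ℚ⟦X⟧) * X ^ 6 + (p : ℚ⟦X⟧) ^ 2 * X ^ 10) *
        SubringZeta.latticeSeries_primitive_generatingLineCount_mul (p := p)
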